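/- arXiv:1706.00392 — 2 statements merged into one kernel-verified Lean document; each statement's English description precedes it below -/
import Mathlib

section
/- For each positive integer ℓ, the number of primes p ≤ x with p > ℓ and φ(p−ℓ) < φ(p+ℓ) is asymptotic to (1/2)π(x) as x → ∞; that is, #{p ≤ x : p prime, p > ℓ, φ(p−ℓ) < φ(p+ℓ)} / π(x) tends to 1/2 as x tends to infinity. -/
/-!
Write `log φ(p + ℓ) - log φ(p - ℓ)` as `o(1)` plus a sum over primes `q` of local terms, where the
term at `q` depends only on `p` modulo `q`, vanishes unless `p ≡ ±ℓ`, and is odd in `p`. By the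
prime number theorem in arithmetic progressions, obtained from the Wiener-Ikehara theorem and the
behaviour of Dirichlet `L`-functions on `Re s = 1`, the residues of a random prime modulo the
primes `q ≤ y` are asymptotically independent and uniform. The partial sum over `q ≤ y` is thus
asymptotically a symmetric random variable. It is not concentrated near `0`, by the
Littlewood-Offord inequality: since `∑ 1 / q` diverges, many of its terms are non-zero for a
typical prime. The terms with `q > y` are negligible on average, by a weak Brun-Titchmarsh
inequality. Hence the sign of the whole sum is asymptotically equidistributed.
-/

open Filter Topology

section BandLimitedKernels

open MeasureTheory Real FourierTransform Convolution

/-- A probability density on the line whose Fourier transform has compact support; the last field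
says this through a continuous `ψ` with `𝓕 ψ = κ`. Such kernels serve as test functions in the
Wiener-Ikehara theorem, because they see a Laplace transform only on a compact part of the
imaginary axis. -/
structure IsBandLimitedKernel (κ : ℝ → ℝ) : Prop where
  nonneg : ∀ x, 0 ≤ κ x
  integrable : Integrable κ
  integral_eq_one : ∫ x, κ x = 1
  exists_fourier_eq : ∃ ψ : ℝ → ℂ, Continuous ψ ∧ HasCompactSupport ψ ∧ ∀ x, 𝓕 ψ x = κ x

lemma conj_fourier_ofReal_of_even {f : ℝ → ℝ} (hf : ∀ x, f (-x) = f x) (w : ℝ) :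
    (starRingEnd ℂ) (𝓕 (fun x ↦ (f x : ℂ)) w) = 𝓕 (fun x ↦ (f x : ℂ)) w := by
  rw [fourier_real_eq_integral_exp_smul, ← integral_conj, ← integral_neg_eq_self]
  refine integral_congr_ae (ae_of_all _ fun x ↦ ?_)
  simp only [smul_eq_mul, map_mul, Complex.conj_ofReal, hf, ← Complex.exp_conj, Complex.conj_I]
  push_cast
  ring_nf

lemma exists_schwartzMap_fourier_real :
    ∃ f : SchwartzMap ℝ ℂ, HasCompactSupport f ∧
      (∀ w, (starRingEnd ℂ) (𝓕 (f : ℝ → ℂ) w) = 𝓕 (f : ℝ → ℂ) w) ∧ 𝓕 (f : ℝ → ℂ) 0 ≠ 0 := by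
  let b : ContDiffBump (0 : ℝ) := ⟨1, 2, one_pos, one_lt_two⟩
  have hsupp : HasCompactSupport fun x ↦ (b x : ℂ) :=
    b.hasCompactSupport.comp_left Complex.ofReal_zero
  let f : SchwartzMap ℝ ℂ := hsupp.toSchwartzMap (Complex.ofRealCLM.contDiff.comp b.contDiff)
  have hf : (f : ℝ → ℂ) = fun x ↦ (b x : ℂ) := rfl
  refine ⟨f, hsupp, fun w ↦ ?_, ?_⟩
  · rw [hf, conj_fourier_ofReal_of_even b.neg]
  · have hint : 𝓕 (fun x ↦ (b x : ℂ)) 0 = ((∫ x, b x : ℝ) : ℂ) := by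
      rw [fourier_real_eq, ← integral_complex_ofReal]
      simp
    rw [hf, hint, Complex.ofReal_ne_zero]
    exact b.integral_pos.ne'

lemma isBandLimitedKernel_normalize {K : ℝ → ℝ} {ψ : ℝ → ℂ} (hK : ∀ x, 0 ≤ K x)
    (hKint : Integrable K) (hKpos : 0 < ∫ x, K x) (hψ : Continuous ψ) (hψs : HasCompactSupport ψ)
    (hψK : ∀ x, 𝓕 ψ x = K x) : IsBandLimitedKernel fun x ↦ (∫ y, K y)⁻¹ * K x := by
  refine ⟨fun x ↦ mul_nonneg (inv_nonneg.2 hKpos.le) (hK x), hKint.const_mul _, ?_,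
    fun x ↦ ((∫ y, K y)⁻¹ : ℝ) • ψ x, by fun_prop, hψs.comp_left (smul_zero _), fun x ↦ ?_⟩
  · rw [integral_const_mul, inv_mul_cancel₀ hKpos.ne']
  · have h := hψK x
    simp only [fourier_real_eq, smul_comm (𝐞 _) ((∫ y, K y)⁻¹ : ℝ)] at h ⊢
    rw [integral_smul, h, Complex.real_smul, ← Complex.ofReal_mul]

-- The square `(𝓕 f)²` is nonnegative because `𝓕 f` is real, and it is the transform of `f ⋆ f`.
lemma exists_isBandLimitedKernel : ∃ κ : ℝ → ℝ, IsBandLimitedKernel κ := by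
  obtain ⟨f, hfsupp, hfreal, hf0⟩ := exists_schwartzMap_fourier_real
  let ψ : SchwartzMap ℝ ℂ := SchwartzMap.convolution (ContinuousLinearMap.mul ℂ ℂ) f f
  have hψ : (ψ : ℝ → ℂ) = (f : ℝ → ℂ) ⋆[ContinuousLinearMap.mul ℂ ℂ] f :=
    funext fun x ↦ SchwartzMap.convolution_apply _ f f x
  have hψsupp : HasCompactSupport ψ := by
    rw [hψ]
    exact hfsupp.convolution _ hfsupp
  let K : ℝ → ℝ := fun x ↦ (𝓕 (f : ℝ → ℂ) x).re ^ 2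
  have hK (x : ℝ) : 𝓕 (ψ : ℝ → ℂ) x = K x := by
    rw [hψ, Real.fourier_mul_convolution_eq f.integrable f.integrable, Complex.ofReal_pow,
      Complex.conj_eq_iff_re.1 (hfreal x), sq]
  have hKint : Integrable K := by
    have h : Integrable (𝓕 (ψ : ℝ → ℂ)) := SchwartzMap.fourier_coe ψ ▸ (𝓕 ψ).integrable
    exact (h.congr (ae_of_all _ hK)).re
  have hKcont : Continuous K := by
    have h : Continuous (𝓕 (f : ℝ → ℂ)) := SchwartzMap.fourier_coe f ▸ (𝓕 f).continuous
    fun_prop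
  have hKpos : 0 < ∫ x, K x := by
    rw [integral_pos_iff_support_of_nonneg (fun x ↦ sq_nonneg _) hKint]
    refine hKcont.isOpen_support.measure_pos volume ⟨0, pow_ne_zero 2 fun h ↦ hf0 ?_⟩
    rw [← Complex.conj_eq_iff_re.1 (hfreal 0), h, Complex.ofReal_zero]
  exact ⟨_, isBandLimitedKernel_normalize (fun x ↦ sq_nonneg _) hKint hKpos ψ.continuous hψsupp hK⟩

lemma fourier_comp_inv_mul {a : ℝ} (ha : 0 < a) (ψ : ℝ → ℂ) (x : ℝ) :
    𝓕 (fun t ↦ ψ (a⁻¹ * t)) x = a * 𝓕 ψ (a * x) := by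
  have h := Measure.integral_comp_inv_mul_left (fun t ↦ 𝐞 (-(t * (a * x))) • ψ t) a
  rw [abs_of_pos ha, Complex.real_smul] at h
  rw [fourier_real_eq, fourier_real_eq, ← h]
  refine integral_congr_ae (ae_of_all _ fun t ↦ ?_)
  simp only
  congr 3
  field_simp

namespace IsBandLimitedKernel

variable {κ : ℝ → ℝ}

lemma dilate (hκ : IsBandLimitedKernel κ) {a : ℝ} (ha : 0 < a) :
    IsBandLimitedKernel fun x ↦ a * κ (a * x) := by
  obtain ⟨ψ, hψ, hψs, hκψ⟩ := hκ.exists_fourier_eq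
  refine ⟨fun x ↦ mul_nonneg ha.le (hκ.nonneg _),
    (hκ.integrable.comp_mul_left' ha.ne').const_mul a, ?_,
    fun t ↦ ψ (a⁻¹ * t), by fun_prop, ?_, fun x ↦ ?_⟩
  · rw [integral_const_mul, Measure.integral_comp_mul_left, hκ.integral_eq_one,
      abs_of_pos (by positivity), smul_eq_mul, mul_one, mul_inv_cancel₀ ha.ne']
  · exact hψs.comp_homeomorph (Homeomorph.mulLeft₀ a⁻¹ (inv_ne_zero ha.ne'))
  · rw [fourier_comp_inv_mul ha, hκψ]
    push_cast
    rfl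

end IsBandLimitedKernel

lemma exists_isBandLimitedKernel_concentrated {δ : ℝ} (hδ : 0 < δ) :
    ∃ κ : ℝ → ℝ, IsBandLimitedKernel κ ∧ 1 - δ ≤ ∫ x in Set.Icc (-δ) δ, κ x := by
  obtain ⟨κ, hκ⟩ := exists_isBandLimitedKernel
  have hlim : Tendsto (fun R : ℝ ↦ ∫ x in (-R)..R, κ x) atTop (𝓝 1) := by
    rw [← hκ.integral_eq_one]
    exact intervalIntegral_tendsto_integral hκ.integrable tendsto_neg_atTop_atBot tendsto_id
  obtain ⟨R, hR, hR0⟩ := ((hlim.eventually (lt_mem_nhds (sub_lt_self 1 hδ))).and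
    (eventually_gt_atTop 0)).exists
  have hscale : R / δ * δ = R := div_mul_cancel₀ R hδ.ne'
  refine ⟨_, hκ.dilate (div_pos hR0 hδ), ?_⟩
  rw [integral_Icc_eq_integral_Ioc, ← intervalIntegral.integral_of_le (by linarith),
    intervalIntegral.integral_const_mul, intervalIntegral.mul_integral_comp_mul_left,
    mul_neg, hscale]
  exact hR.le

end BandLimitedKernels

section LaplaceBoundary

open MeasureTheory Real FourierTransform

lemma integral_fourier_mul_eq {f g : ℝ → ℂ} (hf : Integrable f) (hg : Integrable g) :
    ∫ x, 𝓕 f x * g x = ∫ x, f x * 𝓕 g x := by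
  simpa using! (VectorFourier.integral_fourierIntegral_smul_eq_flip (L := innerₗ ℝ)
    continuous_fourierChar (by fun_prop) hf hg)

lemma fourier_fourierChar_mul (ψ : ℝ → ℂ) (v x : ℝ) :
    𝓕 (fun t ↦ (𝐞 (t * v) : ℂ) * ψ t) x = 𝓕 ψ (x - v) := by
  rw [fourier_real_eq, fourier_real_eq]
  refine integral_congr_ae (ae_of_all _ fun t ↦ ?_)
  have hphase : -(t * x) + t * v = -(t * (x - v)) := by ring
  simp only [Circle.smul_def, smul_eq_mul, ← mul_assoc, ← Circle.coe_mul,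
    ← AddChar.map_add_eq_mul, hphase]

variable {D ψ : ℝ → ℂ} {M : ℝ} {G : ℂ → ℂ}

lemma integral_exp_mul_fourier_eq (hD : Measurable D) (hM : ∀ u, ‖D u‖ ≤ M)
    (hG : ∀ s : ℂ, 0 < s.re → G s = ∫ u in Set.Ioi (0 : ℝ), D u * Complex.exp (-s * u))
    (hψ : Integrable ψ) {ε : ℝ} (hε : 0 < ε) :
    ∫ u in Set.Ioi (0 : ℝ), D u * Complex.exp (-ε * u) * 𝓕 ψ u =
      ∫ t : ℝ, G (ε + 2 * π * t * Complex.I) * ψ t := by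
  let f : ℝ → ℂ := (Set.Ioi 0).indicator fun u ↦ D u * Complex.exp (-ε * u)
  have hf : Integrable f := by
    have hexp : IntegrableOn (fun u : ℝ ↦ Complex.exp (-ε * u)) (Set.Ioi 0) :=
      integrableOn_exp_mul_complex_Ioi (by simpa using hε) 0
    exact (integrable_indicator_iff measurableSet_Ioi).2
      (hexp.bdd_mul hD.aestronglyMeasurable (ae_of_all _ hM))
  have hfG (t : ℝ) : 𝓕 f t = G (ε + 2 * π * t * Complex.I) := by
    rw [hG _ (by simpa using hε), ← integral_indicator measurableSet_Ioi,
      fourier_real_eq_integral_exp_smul]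
    refine integral_congr_ae (ae_of_all _ fun u ↦ ?_)
    simp only [f, Set.indicator_apply, smul_eq_mul]
    split_ifs
    · rw [mul_left_comm, ← Complex.exp_add]
      push_cast
      ring_nf
    · rw [mul_zero]
  calc ∫ u in Set.Ioi (0 : ℝ), D u * Complex.exp (-ε * u) * 𝓕 ψ u
      = ∫ u, f u * 𝓕 ψ u := by
        rw [← integral_indicator measurableSet_Ioi]
        simp only [f, Set.indicator_mul_left]
    _ = ∫ t, 𝓕 f t * ψ t := (integral_fourier_mul_eq hf hψ).symm
    _ = _ := by simp only [hfG]

lemma tendsto_integral_exp_mul (hD : Measurable D) (hM : ∀ u, ‖D u‖ ≤ M) (hψ : Integrable ψ) :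
    Tendsto (fun ε : ℝ ↦ ∫ u in Set.Ioi (0 : ℝ), D u * Complex.exp (-ε * u) * ψ u)
      (𝓝[>] 0) (𝓝 (∫ u in Set.Ioi (0 : ℝ), D u * ψ u)) := by
  refine tendsto_integral_filter_of_dominated_convergence (fun u ↦ M * ‖ψ u‖) ?_ ?_
    (hψ.norm.const_mul M).integrableOn (ae_of_all _ fun u ↦ ?_)
  · exact Eventually.of_forall fun ε ↦ ((hD.mul (by fun_prop)).aestronglyMeasurable).mul
      hψ.aestronglyMeasurable.restrict
  · filter_upwards [self_mem_nhdsWithin] with ε hε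
    refine (ae_restrict_iff' measurableSet_Ioi).2 (ae_of_all _ fun u hu ↦ ?_)
    have hexp : ‖Complex.exp (-ε * u)‖ ≤ 1 := by
      rw [Complex.norm_exp]
      simpa using mul_nonneg (Set.mem_Ioi.1 hε).le (Set.mem_Ioi.1 hu).le
    rw [norm_mul, norm_mul]
    gcongr
    exact (mul_le_of_le_one_right (norm_nonneg _) hexp).trans (hM u)
  · have hcont : Continuous fun ε : ℝ ↦ D u * Complex.exp (-ε * u) * ψ u := by fun_prop
    simpa using (hcont.tendsto 0).mono_left nhdsWithin_le_nhds

lemma tendsto_integral_vertical_line_mul (hGc : ContinuousOn G {s | 0 ≤ s.re})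
    (hψ : Continuous ψ) (hψs : HasCompactSupport ψ) :
    Tendsto (fun ε : ℝ ↦ ∫ t : ℝ, G (ε + 2 * π * t * Complex.I) * ψ t)
      (𝓝[>] 0) (𝓝 (∫ t : ℝ, G (2 * π * t * Complex.I) * ψ t)) := by
  have hsmall : ∀ᶠ ε : ℝ in 𝓝[>] 0, ε ∈ Set.Icc 0 1 :=
    mem_of_superset (Ioc_mem_nhdsGT zero_lt_one) Set.Ioc_subset_Icc_self
  have hGstrip : ContinuousOn (fun z : ℝ × ℝ ↦ G (z.1 + 2 * π * z.2 * Complex.I))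
      (Set.Icc 0 1 ×ˢ Set.univ) :=
    hGc.comp (by fun_prop) fun z hz ↦ by simpa using hz.1.1
  obtain ⟨C, hC⟩ := (isCompact_Icc.prod hψs.isCompact).exists_bound_of_continuousOn
    (hGstrip.mono (Set.prod_mono_right (Set.subset_univ (tsupport ψ))))
  refine tendsto_integral_filter_of_dominated_convergence (fun t ↦ C * ‖ψ t‖) ?_ ?_
    ((hψ.integrable_of_hasCompactSupport hψs).norm.const_mul C) (ae_of_all _ fun t ↦ ?_)
  · filter_upwards [hsmall] with ε hε
    have hcont : Continuous fun t : ℝ ↦ G (ε + 2 * π * t * Complex.I) :=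
      hGstrip.comp_continuous (f := fun t : ℝ ↦ (ε, t)) (by fun_prop) fun t ↦ ⟨hε, trivial⟩
    exact (hcont.mul hψ).aestronglyMeasurable
  · filter_upwards [hsmall] with ε hε
    refine ae_of_all _ fun t ↦ ?_
    by_cases ht : t ∈ tsupport ψ
    · rw [norm_mul]
      exact mul_le_mul_of_nonneg_right (hC (ε, t) ⟨hε, ht⟩) (norm_nonneg _)
    · simp [image_eq_zero_of_notMem_tsupport ht]
  · have hlim : Tendsto (fun ε : ℝ ↦ (ε + 2 * π * t * Complex.I : ℂ)) (𝓝[>] 0)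
        (𝓝 (2 * π * t * Complex.I)) := by
      have hcont : Continuous fun ε : ℝ ↦ (ε + 2 * π * t * Complex.I : ℂ) := by fun_prop
      simpa using (hcont.tendsto 0).mono_left nhdsWithin_le_nhds
    refine Tendsto.mul_const _ ((hGc (2 * π * t * Complex.I) (by simp)).tendsto.comp
      (tendsto_nhdsWithin_iff.2 ⟨hlim, ?_⟩))
    filter_upwards [hsmall] with ε hε
    simpa using hε.1

lemma integral_mul_fourier_eq (hD : Measurable D) (hM : ∀ u, ‖D u‖ ≤ M)
    (hG : ∀ s : ℂ, 0 < s.re → G s = ∫ u in Set.Ioi (0 : ℝ), D u * Complex.exp (-s * u))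
    (hGc : ContinuousOn G {s | 0 ≤ s.re}) (hψ : Continuous ψ) (hψs : HasCompactSupport ψ)
    (hψint : Integrable (𝓕 ψ)) :
    ∫ u in Set.Ioi (0 : ℝ), D u * 𝓕 ψ u = ∫ t : ℝ, G (2 * π * t * Complex.I) * ψ t := by
  refine tendsto_nhds_unique ((tendsto_integral_exp_mul hD hM hψint).congr' ?_)
    (tendsto_integral_vertical_line_mul hGc hψ hψs)
  filter_upwards [self_mem_nhdsWithin] with ε hε
  exact integral_exp_mul_fourier_eq hD hM hG (hψ.integrable_of_hasCompactSupport hψs) hε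

lemma tendsto_integral_mul_fourier_sub (hD : Measurable D) (hM : ∀ u, ‖D u‖ ≤ M)
    (hG : ∀ s : ℂ, 0 < s.re → G s = ∫ u in Set.Ioi (0 : ℝ), D u * Complex.exp (-s * u))
    (hGc : ContinuousOn G {s | 0 ≤ s.re}) (hψ : Continuous ψ) (hψs : HasCompactSupport ψ)
    (hψint : Integrable (𝓕 ψ)) :
    Tendsto (fun v ↦ ∫ u in Set.Ioi (0 : ℝ), D u * 𝓕 ψ (u - v)) atTop (𝓝 0) := by
  have hRL := (Real.zero_at_infty_fourier fun t : ℝ ↦ G (2 * π * t * Complex.I) * ψ t).comp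
    (tendsto_neg_atTop_atBot.mono_right atBot_le_cocompact)
  refine hRL.congr fun v ↦ ?_
  have hshift := integral_mul_fourier_eq (ψ := fun t ↦ (𝐞 (t * v) : ℂ) * ψ t) hD hM hG hGc
    (by fun_prop) hψs.mul_left
    (by simpa only [funext (fourier_fourierChar_mul ψ v)] using hψint.comp_sub_right v)
  simp only [fourier_fourierChar_mul] at hshift
  rw [hshift, Function.comp_apply, fourier_real_eq]
  refine integral_congr_ae (ae_of_all _ fun t ↦ ?_)
  simp only [mul_neg, neg_neg, Circle.smul_def, smul_eq_mul]
  ring_nf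

end LaplaceBoundary

section Tauberian

open MeasureTheory Real FourierTransform

variable {B κ : ℝ → ℝ} {M A δ : ℝ} {G : ℂ → ℂ}

lemma IsBandLimitedKernel.tendsto_integral_mul_sub (hκ : IsBandLimitedKernel κ)
    (hB : Measurable B) (hBM : ∀ u, ‖B u‖ ≤ M)
    (hG : ∀ s : ℂ, 0 < s.re →
      G s = ∫ u in Set.Ioi (0 : ℝ), ((B u - A : ℝ) : ℂ) * Complex.exp (-s * u))
    (hGc : ContinuousOn G {s | 0 ≤ s.re}) :
    Tendsto (fun v ↦ ∫ u in Set.Ioi (0 : ℝ), B u * κ (u - v)) atTop (𝓝 A) := by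
  obtain ⟨ψ, hψ, hψs, hψκ⟩ := hκ.exists_fourier_eq
  have hBA (u : ℝ) : ‖((B u - A : ℝ) : ℂ)‖ ≤ M + ‖A‖ := by
    rw [Complex.norm_real]
    exact (norm_sub_le _ _).trans (add_le_add_left (hBM u) _)
  have hψint : Integrable (𝓕 ψ) := (funext hψκ : 𝓕 ψ = _) ▸ hκ.integrable.ofReal
  have hosc := tendsto_integral_mul_fourier_sub (by fun_prop) hBA hG hGc hψ hψs hψint
  have hmass : Tendsto (fun v ↦ ∫ u in Set.Ioi (0 : ℝ), κ (u - v)) atTop (𝓝 1) := by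
    rw [← hκ.integral_eq_one]
    refine ((aecover_Ioi tendsto_neg_atTop_atBot).integral_tendsto_of_countably_generated
      hκ.integrable).congr fun v ↦ ?_
    rw [← integral_indicator measurableSet_Ioi, ← integral_indicator measurableSet_Ioi,
      ← integral_sub_right_eq_self _ v]
    simp only [Set.indicator_apply, Set.mem_Ioi, neg_lt_sub_iff_lt_add, lt_add_iff_pos_right]
  have hsum := ((Complex.continuous_re.tendsto 0).comp hosc).add (hmass.mul_const A)
  simp only [Complex.zero_re, zero_add, one_mul] at hsum
  refine hsum.congr fun v ↦ ?_
  have hκv : Integrable fun u ↦ κ (u - v) := hκ.integrable.comp_sub_right v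
  have hBκ : Integrable fun u ↦ B u * κ (u - v) :=
    hκv.bdd_mul hB.aestronglyMeasurable (ae_of_all _ hBM)
  simp only [Function.comp_apply, hψκ, ← Complex.ofReal_mul]
  rw [integral_complex_ofReal, Complex.ofReal_re, ← integral_mul_const,
    ← integral_add _ (hκv.mul_const A).integrableOn]
  · simp only [sub_mul, mul_comm A, sub_add_cancel]
  · simp only [sub_mul]
    exact (hBκ.sub (hκv.const_mul A)).integrableOn

variable (hB : Measurable B) (hB0 : ∀ u, 0 ≤ B u) (hBM : ∀ u, B u ≤ M)
  (hBexp : ∀ u v, u ≤ v → B u ≤ B v * exp (v - u))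

include hB hB0 hBM hBexp

lemma mul_le_integral_mul_kernel (hκ : IsBandLimitedKernel κ)
    (hδ : 1 - δ ≤ ∫ x in Set.Icc (-δ) δ, κ x) {v : ℝ} (hv : 0 < v) :
    B v * exp (-2 * δ) * (1 - δ) ≤ ∫ u in Set.Ioi (0 : ℝ), B u * κ (u - (v + δ)) := by
  have hκv : Integrable fun u ↦ κ (u - (v + δ)) := hκ.integrable.comp_sub_right _
  have hBκ : Integrable fun u ↦ B u * κ (u - (v + δ)) :=
    hκv.bdd_mul hB.aestronglyMeasurable
      (ae_of_all _ fun u ↦ (norm_of_nonneg (hB0 u)).trans_le (hBM u))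
  have hwindow : Integrable fun u ↦ (Set.Icc (-δ) δ).indicator κ (u - (v + δ)) :=
    (hκ.integrable.indicator measurableSet_Icc).comp_sub_right _
  calc B v * exp (-2 * δ) * (1 - δ)
      ≤ B v * exp (-2 * δ) * ∫ x in Set.Icc (-δ) δ, κ x :=
        mul_le_mul_of_nonneg_left hδ (mul_nonneg (hB0 v) (exp_pos _).le)
    _ = ∫ u, B v * exp (-2 * δ) * (Set.Icc (-δ) δ).indicator κ (u - (v + δ)) := by
        rw [integral_const_mul, integral_sub_right_eq_self ((Set.Icc (-δ) δ).indicator κ),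
          integral_indicator measurableSet_Icc]
    _ ≤ ∫ u, (Set.Ioi (0 : ℝ)).indicator (fun u ↦ B u * κ (u - (v + δ))) u := by
        refine integral_mono (hwindow.const_mul _) (hBκ.indicator measurableSet_Ioi) fun u ↦ ?_
        by_cases hu : u - (v + δ) ∈ Set.Icc (-δ) δ
        · have hvu : v ≤ u := by linarith [hu.1]
          have hslow : B v ≤ B u * exp (2 * δ) := (hBexp v u hvu).trans
            (mul_le_mul_of_nonneg_left (exp_le_exp.2 (by linarith [hu.2])) (hB0 u))
          simp only [Set.indicator_of_mem hu,
            Set.indicator_of_mem (Set.mem_Ioi.2 (hv.trans_le hvu))]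
          refine mul_le_mul_of_nonneg_right ?_ (hκ.nonneg _)
          rwa [neg_mul, exp_neg, ← div_eq_mul_inv, div_le_iff₀ (exp_pos _)]
        · simp only [Set.indicator_of_notMem hu, mul_zero]
          exact Set.indicator_nonneg (fun u _ ↦ mul_nonneg (hB0 u) (hκ.nonneg _)) u
    _ = _ := integral_indicator measurableSet_Ioi

lemma integral_mul_kernel_le (hκ : IsBandLimitedKernel κ)
    (hδ : 1 - δ ≤ ∫ x in Set.Icc (-δ) δ, κ x) (v : ℝ) :
    ∫ u in Set.Ioi (0 : ℝ), B u * κ (u - (v - δ)) ≤ B v * exp (2 * δ) + M * δ := by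
  have hκv : Integrable fun u ↦ κ (u - (v - δ)) := hκ.integrable.comp_sub_right _
  have hBκ : Integrable fun u ↦ B u * κ (u - (v - δ)) :=
    hκv.bdd_mul hB.aestronglyMeasurable
      (ae_of_all _ fun u ↦ (norm_of_nonneg (hB0 u)).trans_le (hBM u))
  have houter : Integrable fun u ↦ (Set.Icc (-δ) δ)ᶜ.indicator κ (u - (v - δ)) :=
    (hκ.integrable.indicator measurableSet_Icc.compl).comp_sub_right _
  have htail : ∫ x in (Set.Icc (-δ) δ)ᶜ, κ x ≤ δ := by
    have := integral_add_compl (measurableSet_Icc (a := -δ) (b := δ)) hκ.integrable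
    linarith [hκ.integral_eq_one]
  calc ∫ u in Set.Ioi (0 : ℝ), B u * κ (u - (v - δ))
      ≤ ∫ u, B u * κ (u - (v - δ)) :=
        setIntegral_le_integral hBκ (ae_of_all _ fun u ↦ mul_nonneg (hB0 u) (hκ.nonneg _))
    _ ≤ ∫ u, (B v * exp (2 * δ) * κ (u - (v - δ)) +
          M * (Set.Icc (-δ) δ)ᶜ.indicator κ (u - (v - δ))) := by
        refine integral_mono hBκ ((hκv.const_mul _).add (houter.const_mul _)) fun u ↦ ?_
        by_cases hu : u - (v - δ) ∈ Set.Icc (-δ) δ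
        · simp only [Set.indicator_of_notMem (Set.notMem_compl_iff.2 hu), mul_zero, add_zero]
          refine mul_le_mul_of_nonneg_right ?_ (hκ.nonneg _)
          exact (hBexp u v (by linarith [hu.2])).trans
            (mul_le_mul_of_nonneg_left (exp_le_exp.2 (by linarith [hu.1])) (hB0 v))
        · simp only [Set.indicator_of_mem (Set.mem_compl hu)]
          exact (mul_le_mul_of_nonneg_right (hBM u) (hκ.nonneg _)).trans (le_add_of_nonneg_left
            (mul_nonneg (mul_nonneg (hB0 v) (exp_pos _).le) (hκ.nonneg _)))
    _ = B v * exp (2 * δ) + M * ∫ x in (Set.Icc (-δ) δ)ᶜ, κ x := by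
        rw [integral_add (hκv.const_mul _) (houter.const_mul _), integral_const_mul,
          integral_const_mul, integral_sub_right_eq_self κ,
          integral_sub_right_eq_self ((Set.Icc (-δ) δ)ᶜ.indicator κ), hκ.integral_eq_one,
          integral_indicator measurableSet_Icc.compl, mul_one]
    _ ≤ _ := by gcongr; exact (hB0 0).trans (hBM 0)

theorem tendsto_of_laplace_continuousOn
    (hG : ∀ s : ℂ, 0 < s.re →
      G s = ∫ u in Set.Ioi (0 : ℝ), ((B u - A : ℝ) : ℂ) * Complex.exp (-s * u))
    (hGc : ContinuousOn G {s | 0 ≤ s.re}) : Tendsto B atTop (𝓝 A) := by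
  have hBnorm (u : ℝ) : ‖B u‖ ≤ M := (norm_of_nonneg (hB0 u)).trans_le (hBM u)
  have hsmall : ∀ᶠ δ : ℝ in 𝓝[>] 0, δ ∈ Set.Ioo 0 1 := Ioo_mem_nhdsGT zero_lt_one
  rw [tendsto_order]
  constructor
  · intro a ha
    have hlower : ∀ᶠ δ in 𝓝[>] 0, a * exp (2 * δ) + M * δ < A := by
      have hcont : Continuous fun δ ↦ a * exp (2 * δ) + M * δ := by fun_prop
      exact ((hcont.tendsto' 0 a (by simp)).mono_left nhdsWithin_le_nhds).eventually
        (gt_mem_nhds ha)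
    obtain ⟨δ, hδA, hδ⟩ := (hlower.and hsmall).exists
    obtain ⟨κ, hκ, hκδ⟩ := exists_isBandLimitedKernel_concentrated hδ.1
    have hlim := (hκ.tendsto_integral_mul_sub hB hBnorm hG hGc).comp
      (tendsto_atTop_add_const_right atTop (-δ) tendsto_id)
    filter_upwards [hlim.eventually (lt_mem_nhds hδA)] with v hv
    have := hv.trans_le (integral_mul_kernel_le hB hB0 hBM hBexp hκ hκδ v)
    exact lt_of_mul_lt_mul_right (lt_of_add_lt_add_right this) (exp_pos _).le
  · intro a ha
    have hupper : ∀ᶠ δ in 𝓝[>] 0, A < a * exp (-2 * δ) * (1 - δ) := by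
      have hcont : Continuous fun δ ↦ a * exp (-2 * δ) * (1 - δ) := by fun_prop
      exact ((hcont.tendsto' 0 a (by simp)).mono_left nhdsWithin_le_nhds).eventually
        (lt_mem_nhds ha)
    obtain ⟨δ, hδA, hδ⟩ := (hupper.and hsmall).exists
    obtain ⟨κ, hκ, hκδ⟩ := exists_isBandLimitedKernel_concentrated hδ.1
    have hlim := (hκ.tendsto_integral_mul_sub hB hBnorm hG hGc).comp
      (tendsto_atTop_add_const_right atTop δ tendsto_id)
    filter_upwards [hlim.eventually (gt_mem_nhds hδA), eventually_gt_atTop 0] with v hv hv0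
    have := (mul_le_integral_mul_kernel hB hB0 hBM hBexp hκ hκδ hv0).trans_lt hv
    rw [mul_assoc, mul_assoc] at this
    exact lt_of_mul_lt_mul_right this (mul_pos (exp_pos _) (sub_pos.2 hδ.2)).le

end Tauberian

section WienerIkehara

open MeasureTheory Real

/-- The summatory function `x ↦ ∑_{1 ≤ k ≤ x} f k` of an arithmetic function. -/
noncomputable def summatory (f : ℕ → ℝ) (x : ℝ) : ℝ := ∑ k ∈ Finset.Icc 1 ⌊x⌋₊, f k

lemma integral_Ioi_one_eq_integral_exp (f : ℝ → ℂ) :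
    ∫ t in Set.Ioi (1 : ℝ), f t = ∫ u in Set.Ioi (0 : ℝ), (exp u : ℂ) * f (exp u) := by
  have himage : Real.exp '' Set.Ioi 0 = Set.Ioi 1 :=
    Set.ext fun y ↦ ⟨fun ⟨_, hu, hy⟩ ↦ hy ▸ one_lt_exp_iff.2 hu,
      fun hy ↦ ⟨log y, log_pos hy, exp_log (one_pos.trans hy)⟩⟩
  rw [← himage, integral_image_eq_integral_abs_deriv_smul measurableSet_Ioi
    (fun x _ ↦ (Real.hasDerivAt_exp x).hasDerivWithinAt) Real.exp_injective.injOn]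
  simp only [abs_exp, Complex.real_smul]

lemma add_one_ne_zero_of_re_nonneg {s : ℂ} (hs : 0 ≤ s.re) : s + 1 ≠ 0 := fun h ↦ by
  have hre : s.re + 1 = 0 := congrArg Complex.re h
  linarith

variable {f : ℕ → ℝ} {A C : ℝ} {F : ℂ → ℂ}

section Nonneg

variable (hf : ∀ n, 0 ≤ f n)
include hf

lemma summatory_nonneg (x : ℝ) : 0 ≤ summatory f x := Finset.sum_nonneg fun _ _ ↦ hf _

lemma summatory_mono : Monotone (summatory f) := fun _ _ hxy ↦
  Finset.sum_le_sum_of_subset_of_nonneg (Finset.Icc_subset_Icc le_rfl (Nat.floor_mono hxy))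
    fun _ _ _ ↦ hf _

lemma measurable_summatory_exp_mul : Measurable fun u : ℝ ↦ summatory f (exp u) * exp (-u) :=
  ((summatory_mono hf).measurable.comp measurable_exp).mul (by fun_prop)

end Nonneg

lemma summatory_exp_mul_le (hfC : ∀ x, 0 ≤ x → summatory f x ≤ C * x) (u : ℝ) :
    summatory f (exp u) * exp (-u) ≤ C := by
  rw [exp_neg, ← div_eq_mul_inv, div_le_iff₀ (exp_pos u)]
  exact hfC _ (exp_pos u).le

section

variable (hf : ∀ n, 0 ≤ f n) (hfC : ∀ x, 0 ≤ x → summatory f x ≤ C * x)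
include hf hfC

lemma LSeries_div_eq_integral_summatory {s : ℂ} (hs : 0 < s.re) :
    LSeries (fun n ↦ (f n : ℂ)) (s + 1) / (s + 1) =
      ∫ u in Set.Ioi (0 : ℝ),
        ((summatory f (exp u) * exp (-u) : ℝ) : ℂ) * Complex.exp (-s * u) := by
  have hs1 : s + 1 ≠ 0 := add_one_ne_zero_of_re_nonneg hs.le
  have hbigO : (fun n : ℕ ↦ ∑ k ∈ Finset.Icc 1 n, f k) =O[atTop] fun n ↦ (n : ℝ) ^ (1 : ℝ) := by
    refine Asymptotics.IsBigO.of_bound C (Eventually.of_forall fun n ↦ ?_)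
    have hnonneg := summatory_nonneg hf n
    have hle := hfC n n.cast_nonneg
    simp only [summatory, Nat.floor_natCast] at hnonneg hle
    rwa [norm_of_nonneg hnonneg, rpow_one, norm_natCast]
  rw [LSeries_eq_mul_integral_of_nonneg f zero_le_one (by simpa using hs) hbigO hf,
    integral_Ioi_one_eq_integral_exp, mul_div_cancel_left₀ _ hs1]
  refine integral_congr_ae (ae_of_all _ fun u ↦ ?_)
  have hcpow : ((exp u : ℝ) : ℂ) ^ (-(s + 1 + 1)) = Complex.exp (-(s + 1 + 1) * u) := by
    rw [Complex.cpow_def_of_ne_zero (by simp), ← Complex.ofReal_log (exp_pos u).le, log_exp,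
      mul_comm]
  have hexp : Complex.exp u * Complex.exp (-(s + 1 + 1) * u) =
      Complex.exp (-u) * Complex.exp (-s * u) := by
    rw [← Complex.exp_add, ← Complex.exp_add]
    ring_nf
  simp only [summatory, hcpow]
  push_cast
  linear_combination (∑ k ∈ Finset.Icc 1 ⌊exp u⌋₊, (f k : ℂ)) * hexp

lemma laplace_summatory_sub_const {s : ℂ} (hs : 0 < s.re) :
    ∫ u in Set.Ioi (0 : ℝ),
        ((summatory f (exp u) * exp (-u) - A : ℝ) : ℂ) * Complex.exp (-s * u) =
      LSeries (fun n ↦ (f n : ℂ)) (s + 1) / (s + 1) - A / s := by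
  have hs' : (-s).re < 0 := by simpa using hs
  have hexp : IntegrableOn (fun u : ℝ ↦ Complex.exp (-s * u)) (Set.Ioi 0) :=
    integrableOn_exp_mul_complex_Ioi hs' 0
  have hsum : IntegrableOn (fun u : ℝ ↦
      ((summatory f (exp u) * exp (-u) : ℝ) : ℂ) * Complex.exp (-s * u)) (Set.Ioi 0) := by
    refine hexp.bdd_mul (c := C) (Complex.measurable_ofReal.comp
      (measurable_summatory_exp_mul hf)).aestronglyMeasurable (ae_of_all _ fun u ↦ ?_)
    rw [Complex.norm_real, norm_of_nonneg (mul_nonneg (summatory_nonneg hf _) (exp_pos _).le)]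
    exact summatory_exp_mul_le hfC u
  have hconst : ∫ u in Set.Ioi (0 : ℝ), A * Complex.exp (-s * u) = A / s := by
    rw [integral_const_mul, integral_exp_mul_complex_Ioi hs']
    simp [div_eq_mul_inv]
  rw [LSeries_div_eq_integral_summatory hf hfC hs, ← hconst,
    ← integral_sub hsum (hexp.const_mul _)]
  simp only [Complex.ofReal_sub, sub_mul]

/-- The **Wiener-Ikehara theorem**. -/
theorem tendsto_summatory_div_of_LSeries_sub_continuousOn
    (hFc : ContinuousOn F {s | 1 ≤ s.re})
    (hF : Set.EqOn F (fun s ↦ LSeries (fun n ↦ (f n : ℂ)) s - A / (s - 1)) {s | 1 < s.re}) :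
    Tendsto (fun x ↦ summatory f x / x) atTop (𝓝 A) := by
  have hlim : Tendsto (fun u : ℝ ↦ summatory f (exp u) * exp (-u)) atTop (𝓝 A) := by
    refine tendsto_of_laplace_continuousOn (G := fun s ↦ (F (s + 1) - A) / (s + 1))
      (measurable_summatory_exp_mul hf)
      (fun u ↦ mul_nonneg (summatory_nonneg hf _) (exp_pos _).le)
      (summatory_exp_mul_le hfC) (fun u v huv ↦ ?_) (fun s hs ↦ ?_) ?_
    · rw [mul_assoc, ← exp_add, neg_add_eq_sub, sub_sub_cancel_left]
      exact mul_le_mul_of_nonneg_right (summatory_mono hf (exp_le_exp.2 huv)) (exp_pos _).le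
    · have hs0 : s ≠ 0 := fun h ↦ hs.ne' (h ▸ Complex.zero_re)
      have hs1 : s + 1 ≠ 0 := add_one_ne_zero_of_re_nonneg hs.le
      simp only [laplace_summatory_sub_const hf hfC hs, hF (show 1 < (s + 1).re by simpa using hs),
        add_sub_cancel_right]
      field_simp
      ring
    · refine ((hFc.comp (by fun_prop) fun s hs ↦ ?_).sub continuousOn_const).div (by fun_prop)
        fun s hs ↦ add_one_ne_zero_of_re_nonneg hs
      simpa using hs
  refine (hlim.comp tendsto_log_atTop).congr' ?_
  filter_upwards [eventually_gt_atTop 0] with x hx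
  rw [Function.comp_apply, exp_neg, exp_log hx, div_eq_mul_inv]

end

open ArithmeticFunction.vonMangoldt in
theorem tendsto_summatory_residueClass_div {q : ℕ} [NeZero q] {a : ZMod q} (ha : IsUnit a) :
    Tendsto (fun x ↦ summatory (residueClass a) x / x) atTop (𝓝 (q.totient : ℝ)⁻¹) := by
  refine tendsto_summatory_div_of_LSeries_sub_continuousOn (C := log 4 + 4)
    (residueClass_nonneg a) (fun x hx ↦ ?_) (continuousOn_LFunctionResidueClassAux a) ?_
  · exact (Finset.sum_le_sum fun _ _ ↦ residueClass_le a _).trans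
      (Chebyshev.psi_le_const_mul_self hx)
  · simpa using! eqOn_LFunctionResidueClassAux ha

end WienerIkehara

section PrimesInProgressions

open Real Asymptotics

open Classical in
/-- The proportion of the primes up to `x` that satisfy `Q`; densities of sets of primes are limits
of this quantity. It is `0` for `x < 2`. -/
noncomputable def primeFraction (Q : ℕ → Prop) (x : ℕ) : ℝ :=
  ((Nat.primesLE x).filter Q).card / Nat.primeCounting x

lemma primeFraction_eq (Q : ℕ → Prop) [DecidablePred Q] (x : ℕ) :
    primeFraction Q x = ((Nat.primesLE x).filter Q).card / Nat.primeCounting x := by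
  unfold primeFraction
  congr!

lemma primeFraction_nonneg (Q : ℕ → Prop) (x : ℕ) : 0 ≤ primeFraction Q x := by
  unfold primeFraction
  positivity

lemma primeFraction_le_of_imp {Q Q' : ℕ → Prop} {x : ℕ}
    (h : ∀ p ∈ Nat.primesLE x, Q p → Q' p) : primeFraction Q x ≤ primeFraction Q' x := by
  classical
  rw [primeFraction_eq, primeFraction_eq Q']
  gcongr ?_ / _
  refine Nat.cast_le.2 (Finset.card_le_card fun p hp ↦ ?_)
  rw [Finset.mem_filter] at hp ⊢
  exact ⟨hp.1, h p hp.1 hp.2⟩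

lemma primeFraction_or_le (Q Q' : ℕ → Prop) (x : ℕ) :
    primeFraction (fun p ↦ Q p ∨ Q' p) x ≤ primeFraction Q x + primeFraction Q' x := by
  classical
  rw [primeFraction_eq, primeFraction_eq Q, primeFraction_eq Q', ← add_div, Finset.filter_or]
  gcongr
  exact_mod_cast Finset.card_union_le _ _

lemma primeFraction_add_not (Q : ℕ → Prop) {x : ℕ} (hx : 2 ≤ x) :
    primeFraction Q x + primeFraction (fun p ↦ ¬ Q p) x = 1 := by
  classical
  have hπ : (Nat.primeCounting x : ℝ) ≠ 0 :=
    Nat.cast_ne_zero.2 fun h ↦ by have := Nat.primeCounting_eq_zero_iff.1 h; lia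
  rw [primeFraction_eq, primeFraction_eq, ← add_div, ← Nat.cast_add,
    Finset.card_filter_add_card_filter_not, Nat.primesLE_card_eq_primeCounting, div_self hπ]

lemma tendsto_primeFraction_le_const (N : ℕ) :
    Tendsto (primeFraction (· ≤ N)) atTop (𝓝 0) := by
  refine squeeze_zero (primeFraction_nonneg _) (fun x ↦ ?_)
    (tendsto_const_nhds.div_atTop (a := (N + 1 : ℝ))
      (tendsto_natCast_atTop_atTop.comp Nat.tendsto_primeCounting))
  rw [primeFraction_eq, Function.comp_apply]
  gcongr
  have hsub : (Nat.primesLE x).filter (· ≤ N) ⊆ Finset.range (N + 1) := fun p hp ↦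
    Finset.mem_range_succ_iff.2 (Finset.mem_filter.1 hp).2
  exact_mod_cast (Finset.card_le_card hsub).trans_eq (Finset.card_range _)

lemma tendsto_psi_sub_theta_div :
    Tendsto (fun x : ℕ ↦ (Chebyshev.psi x - Chebyshev.theta x) / x) atTop (𝓝 0) := by
  have hbound := (Chebyshev.isBigO_psi_sub_theta_sqrt.comp_tendsto
    tendsto_natCast_atTop_atTop).mul (isBigO_refl (fun x : ℕ ↦ (x : ℝ)⁻¹) atTop)
  refine hbound.trans_tendsto ((tendsto_inv_atTop_zero.comp
    (tendsto_sqrt_atTop.comp tendsto_natCast_atTop_atTop)).congr fun x ↦ ?_)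
  simp only [Function.comp_apply]
  rw [← div_eq_mul_inv, sqrt_div_self', one_div]

lemma tendsto_primeCounting_mul_log_sub_theta_div :
    Tendsto (fun x : ℕ ↦ (Nat.primeCounting x * log x - Chebyshev.theta x) / x) atTop (𝓝 0) := by
  have hbound := (Chebyshev.primeCounting_sub_theta_div_log_isBigO.comp_tendsto
    tendsto_natCast_atTop_atTop).mul (isBigO_refl (fun x : ℕ ↦ log x / x) atTop)
  refine ((hbound.congr' ?_ ?_).trans_tendsto
    (tendsto_inv_atTop_zero.comp (tendsto_log_atTop.comp tendsto_natCast_atTop_atTop)))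
  all_goals
    filter_upwards [eventually_gt_atTop 1] with x hx
    have hlog : log (x : ℝ) ≠ 0 := (log_pos (by exact_mod_cast hx)).ne'
    simp only [Function.comp_apply, Nat.floor_natCast]
    field_simp

open ArithmeticFunction.vonMangoldt in
lemma abs_summatory_residueClass_sub_le {q : ℕ} (a : ZMod q) (x : ℕ) :
    |summatory (residueClass a) x - ∑ p ∈ (Nat.primesLE x).filter (fun p : ℕ ↦ (p : ZMod q) = a),
      log p| ≤ Chebyshev.psi x - Chebyshev.theta x := by
  have hsum : summatory (residueClass a) x - ∑ p ∈ (Nat.primesLE x).filter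
      (fun p : ℕ ↦ (p : ZMod q) = a), log p =
        ∑ n ∈ (Finset.Ioc 0 x).filter (fun n ↦ ¬ n.Prime), residueClass a n := by
    rw [sub_eq_iff_eq_add', Finset.sum_filter, Nat.primesLE_eq_filter_Ioc_zero, summatory,
      Nat.floor_natCast, ← Finset.sum_filter_add_sum_filter_not (Finset.Icc 1 x) Nat.Prime]
    congr 1
    refine Finset.sum_congr rfl fun p hp ↦ ?_
    simp only [residueClass, Set.indicator_apply, Set.mem_ofPred_eq,
      ArithmeticFunction.vonMangoldt_apply_prime (Finset.mem_filter.1 hp).2]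
  rw [hsum, abs_of_nonneg (Finset.sum_nonneg fun _ _ ↦ residueClass_nonneg a _),
    Chebyshev.psi_sub_theta_eq_sum_not_prime, Nat.floor_natCast]
  exact Finset.sum_le_sum fun _ _ ↦ residueClass_le a _

lemma abs_card_mul_log_sub_le (Q : ℕ → Prop) [DecidablePred Q] (x : ℕ) :
    |((Nat.primesLE x).filter Q).card * log x - ∑ p ∈ (Nat.primesLE x).filter Q, log p| ≤
      Nat.primeCounting x * log x - Chebyshev.theta x := by
  have hlog : ∀ p ∈ Nat.primesLE x, 0 ≤ log x - log p := fun p hp ↦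
    sub_nonneg.2 (log_le_log (by exact_mod_cast (Nat.prime_of_mem_primesLE hp).pos)
      (by exact_mod_cast Nat.le_of_mem_primesLE hp))
  have hsum (s : Finset ℕ) : s.card * log x - ∑ p ∈ s, log p = ∑ p ∈ s, (log x - log p) := by
    rw [Finset.sum_sub_distrib, Finset.sum_const, nsmul_eq_mul]
  rw [hsum, Chebyshev.theta_eq_sum_primesLE_log, ← Nat.primesLE_card_eq_primeCounting, hsum,
    abs_of_nonneg (Finset.sum_nonneg fun p hp ↦ hlog p (Finset.mem_filter.1 hp).1)]
  exact Finset.sum_le_sum_of_subset_of_nonneg (Finset.filter_subset _ _) fun p hp _ ↦ hlog p hp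

theorem tendsto_card_residueClass_mul_log_div {q : ℕ} [NeZero q] {a : ZMod q} (ha : IsUnit a) :
    Tendsto (fun x : ℕ ↦ ((Nat.primesLE x).filter (fun p : ℕ ↦ (p : ZMod q) = a)).card *
      log x / x) atTop (𝓝 (q.totient : ℝ)⁻¹) := by
  have hψ := (tendsto_summatory_residueClass_div ha).comp tendsto_natCast_atTop_atTop
  have herr := tendsto_psi_sub_theta_div.add tendsto_primeCounting_mul_log_sub_theta_div
  rw [add_zero] at herr
  refine tendsto_of_tendsto_of_dist hψ (squeeze_zero (fun _ ↦ dist_nonneg) (fun x ↦ ?_) herr)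
  rw [Function.comp_apply, dist_eq, ← sub_div, abs_div, Nat.abs_cast, ← add_div]
  gcongr
  refine (abs_sub_le _ (∑ p ∈ (Nat.primesLE x).filter (fun p : ℕ ↦ (p : ZMod q) = a), log p)
    _).trans (add_le_add (abs_summatory_residueClass_sub_le a x) ?_)
  rw [abs_sub_comm]
  exact abs_card_mul_log_sub_le _ x

theorem tendsto_primeCounting_mul_log_div :
    Tendsto (fun x : ℕ ↦ Nat.primeCounting x * log x / x) atTop (𝓝 1) := by
  simpa [Subsingleton.elim _ (0 : ZMod 1), Nat.primesLE_card_eq_primeCounting] using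
    tendsto_card_residueClass_mul_log_div (q := 1) (a := 0) (isUnit_of_subsingleton _)

theorem tendsto_primeFraction_residueClass {q : ℕ} [NeZero q] {a : ZMod q} (ha : IsUnit a) :
    Tendsto (primeFraction fun p ↦ (p : ZMod q) = a) atTop (𝓝 (q.totient : ℝ)⁻¹) := by
  have hlim := (tendsto_card_residueClass_mul_log_div ha).div tendsto_primeCounting_mul_log_div
    one_ne_zero
  rw [div_one] at hlim
  refine hlim.congr' ?_
  filter_upwards [eventually_gt_atTop 1] with x hx
  have hx0 : (x : ℝ) ≠ 0 := by positivity
  have hlog : log (x : ℝ) ≠ 0 := (log_pos (by exact_mod_cast hx)).ne'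
  rw [Pi.div_apply, div_div_div_cancel_right₀ hx0, mul_div_mul_right _ _ hlog, primeFraction]
  congr!

end PrimesInProgressions

section Equidistribution

lemma primeFraction_mem_finset {α : Type*} (f : ℕ → α) (s : Finset α) (x : ℕ) :
    primeFraction (fun p ↦ f p ∈ s) x = ∑ a ∈ s, primeFraction (fun p ↦ f p = a) x := by
  classical
  simp only [primeFraction_eq, ← Finset.sum_div, ← Nat.cast_sum]
  rw [← Finset.sum_card_fiberwise_eq_card_filter]

lemma isUnit_natCast_of_ringEquiv_zmod {R : Type*} [CommRing R] {N p : ℕ} (e : R ≃+* ZMod N)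
    (hN : N ≠ 0) (hp : p.Prime) (hNp : N < p) : IsUnit (p : R) := by
  rw [← MulEquiv.isUnit_map e, map_natCast, ZMod.isUnit_iff_coprime]
  exact (Nat.coprime_of_lt_prime hN hNp hp)

theorem tendsto_primeFraction_of_ringEquiv_zmod {R : Type*} [CommRing R] [Fintype Rˣ] {N : ℕ}
    [NeZero N] (e : R ≃+* ZMod N) (Q : R → Prop) [DecidablePred Q] :
    Tendsto (primeFraction fun p ↦ Q p) atTop
      (𝓝 ((Finset.univ.filter fun u : Rˣ ↦ Q u).card / Fintype.card Rˣ)) := by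
  have hcard : Fintype.card Rˣ = N.totient := by
    rw [← ZMod.card_units_eq_totient, Fintype.card_congr (Units.mapEquiv e.toMulEquiv).toEquiv]
  have hclass (u : Rˣ) :
      Tendsto (primeFraction fun p ↦ (p : R) = u) atTop (𝓝 (Fintype.card Rˣ : ℝ)⁻¹) := by
    simpa only [hcard, ← map_natCast e, e.injective.eq_iff] using
      tendsto_primeFraction_residueClass (u.isUnit.map e)
  set s := (Finset.univ.filter fun u : Rˣ ↦ Q u).map ⟨Units.val, Units.val_injective⟩ with hs
  have hmem : Tendsto (primeFraction fun p ↦ (p : R) ∈ s) atTop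
      (𝓝 ((Finset.univ.filter fun u : Rˣ ↦ Q u).card / Fintype.card Rˣ)) := by
    rw [div_eq_mul_inv, ← nsmul_eq_mul, ← Finset.sum_const]
    refine (tendsto_finsetSum _ fun u _ ↦ hclass u).congr fun x ↦ ?_
    rw [primeFraction_mem_finset, hs, Finset.sum_map]
    rfl
  have hupper := hmem.add (tendsto_primeFraction_le_const N)
  rw [add_zero] at hupper
  refine tendsto_of_tendsto_of_tendsto_of_le_of_le hmem hupper (fun x ↦ ?_) (fun x ↦ ?_)
  · refine primeFraction_le_of_imp fun p _ hp ↦ ?_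
    obtain ⟨u, hu, hup⟩ := Finset.mem_map.1 hp
    exact hup ▸ (Finset.mem_filter.1 hu).2
  · refine (primeFraction_le_of_imp fun p hp hQ ↦ ?_).trans (primeFraction_or_le _ _ x)
    refine or_iff_not_imp_right.2 fun hNp ↦ ?_
    obtain ⟨u, hu⟩ := isUnit_natCast_of_ringEquiv_zmod e (NeZero.ne N)
      (Nat.prime_of_mem_primesLE hp) (not_le.1 hNp)
    exact Finset.mem_map.2 ⟨u, by simpa [hu] using hQ, hu⟩

theorem tendsto_primeFraction_pi_zmod (s : Finset ℕ) (hs : ∀ q ∈ s, q.Prime)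
    (Q : (∀ q : s, ZMod q) → Prop) [DecidablePred Q] [∀ q : s, NeZero (q : ℕ)] :
    Tendsto (primeFraction fun p ↦ Q fun _ ↦ p) atTop
      (𝓝 ((Finset.univ.filter fun u : ∀ q : s, (ZMod q)ˣ ↦ Q fun q ↦ u q).card /
        Fintype.card (∀ q : s, (ZMod q)ˣ))) := by
  have hcop : Pairwise (Function.onFun Nat.Coprime fun q : s ↦ (q : ℕ)) := fun q r hqr ↦
    (Nat.coprime_primes (hs q q.2) (hs r r.2)).2 (Subtype.coe_injective.ne hqr)
  have : NeZero (∏ q : s, (q : ℕ)) := ⟨Finset.prod_ne_zero_iff.2 fun q _ ↦ NeZero.ne _⟩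
  have h := tendsto_primeFraction_of_ringEquiv_zmod (ZMod.prodEquivPi _ hcop).symm Q
  rw [Fintype.card_congr (MulEquiv.piUnits (M := fun q : s ↦ ZMod q)).toEquiv] at h
  convert! h using 4
  exact Finset.card_equiv (MulEquiv.piUnits (M := fun q : s ↦ ZMod q)).symm.toEquiv fun u ↦ by
    simp only [Finset.mem_filter_univ]
    rfl

end Equidistribution

section BrunTitchmarsh

open Real

-- Away from `q` the product is a unit times `M` consecutive integers, which `M !` divides.
lemma factorial_dvd_pow_mul_prod_arith_progression {q : ℕ} (hq : q.Prime) (c M : ℕ) :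
    M.factorial ∣ q ^ M * ∏ m ∈ Finset.range M, (q * m + c) := by
  have hM := M.factorial_ne_zero
  rw [← Nat.ordProj_mul_ordCompl_eq_self M.factorial q]
  refine mul_dvd_mul (pow_dvd_pow _ ?_) ?_
  · have := Fact.mk hq
    rw [Nat.factorization_def _ hq]
    calc padicValNat q M.factorial
        ≤ (q - 1) * padicValNat q M.factorial :=
          Nat.le_mul_of_pos_left _ (Nat.sub_pos_of_lt hq.one_lt)
      _ = M - (q.digits M).sum := sub_one_mul_padicValNat_factorial M
      _ ≤ M := Nat.sub_le _ _
  · set N := M.factorial / q ^ M.factorial.factorization q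
    have hNM : N ∣ M.factorial := Nat.ordCompl_dvd _ _
    have : NeZero N := ⟨ne_zero_of_dvd_ne_zero hM hNM⟩
    obtain ⟨u, hu⟩ := (ZMod.isUnit_iff_coprime q N).2 (Nat.coprime_ordCompl hq hM)
    set b := ((u⁻¹ : (ZMod N)ˣ) * c : ZMod N).val
    have hterm (m : ℕ) : ((q * m + c : ℕ) : ZMod N) = q * (b + m : ℕ) := by
      simp only [b, Nat.cast_add, Nat.cast_mul, ZMod.natCast_zmod_val, mul_add, ← hu,
        Units.mul_inv_cancel_left, add_comm]
    have hconsec : ∏ m ∈ Finset.range M, ((b + m : ℕ) : ZMod N) = 0 := by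
      rw [← Nat.cast_prod, ZMod.natCast_eq_zero_iff, ← Nat.ascFactorial_eq_prod_range]
      exact hNM.trans (Nat.factorial_dvd_ascFactorial b M)
    rw [← ZMod.natCast_eq_zero_iff, Nat.cast_prod, Finset.prod_congr rfl fun m _ ↦ hterm m,
      Finset.prod_mul_distrib, hconsec, mul_zero]

lemma pow_card_le_of_primes_arith_progression {q c M : ℕ} (hq : q.Prime) (hc : 0 < c)
    (hcq : c < q) {s : Finset ℕ}
    (hs : ∀ p ∈ s, p.Prime ∧ M < p ∧ ∃ m < M, p = q * m + c) : M ^ s.card ≤ q ^ (2 * M) := by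
  obtain ⟨R, hR⟩ := factorial_dvd_pow_mul_prod_arith_progression hq c M
  have hRpos : 0 < R := Nat.pos_of_mul_pos_left <| hR ▸
    Nat.mul_pos (pow_pos hq.pos M) (Finset.prod_pos fun m _ ↦ Nat.add_pos_right _ hc)
  have hdvd : ∏ p ∈ s, p ∣ R := by
    refine Finset.prod_primes_dvd _ (fun p hp ↦ (hs p hp).1.prime) fun p hp ↦ ?_
    obtain ⟨hprime, hMp, m, hm, rfl⟩ := hs p hp
    have hmem : q * m + c ∣ ∏ m ∈ Finset.range M, (q * m + c) :=
      Finset.dvd_prod_of_mem _ (Finset.mem_range.2 hm)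
    exact (hprime.dvd_mul.1 (hR ▸ hmem.mul_left _)).resolve_left fun h ↦
      hMp.not_ge (hprime.dvd_factorial.1 h)
  have hRle : R ≤ q ^ (2 * M) := by
    refine Nat.le_of_mul_le_mul_left ?_ M.factorial_pos
    calc M.factorial * R
        = q ^ M * ∏ m ∈ Finset.range M, (q * m + c) := hR.symm
      _ ≤ q ^ M * ∏ m ∈ Finset.range M, (q * (m + 1)) := by
          gcongr with m
          rw [mul_add, mul_one]
          gcongr
      _ = M.factorial * q ^ (2 * M) := by
          rw [Finset.prod_mul_distrib, Finset.prod_const, Finset.card_range,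
            Finset.prod_range_add_one_eq_factorial]
          ring
  calc M ^ s.card ≤ ∏ p ∈ s, p := Finset.pow_card_le_prod _ _ _ fun p hp ↦ (hs p hp).2.1.le
    _ ≤ R := Nat.le_of_dvd hRpos hdvd
    _ ≤ q ^ (2 * M) := hRle

lemma card_residueClass_le {q : ℕ} (hq : q.Prime) {a : ZMod q} (ha : a ≠ 0) (x : ℕ) :
    ((Nat.primesLE x).filter (fun p : ℕ ↦ (p : ZMod q) = a)).card * log (x / q + 1 : ℕ) ≤
      2 * (x / q + 1 : ℕ) * log q +
        Nat.primeCounting (x / q + 1) * log (x / q + 1 : ℕ) := by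
  set M := x / q + 1
  have := Fact.mk hq
  set s := (Nat.primesLE x).filter fun p : ℕ ↦ (p : ZMod q) = a with hs
  have hsmall : (s.filter (¬ M < ·)).card ≤ Nat.primeCounting M := by
    rw [← Nat.primesLE_card_eq_primeCounting]
    refine Finset.card_le_card fun p hp ↦ ?_
    simp only [hs, Finset.mem_filter] at hp
    exact Nat.mem_primesLE.2 ⟨not_lt.1 hp.2, Nat.prime_of_mem_primesLE hp.1.1⟩
  have hlarge : M ^ (s.filter (M < ·)).card ≤ q ^ (2 * M) := by
    refine pow_card_le_of_primes_arith_progression hq (ZMod.val_pos.2 ha) a.val_lt fun p hp ↦ ?_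
    simp only [hs, Finset.mem_filter] at hp
    obtain ⟨⟨hp, rfl⟩, hMp⟩ := hp
    refine ⟨Nat.prime_of_mem_primesLE hp, hMp, p / q,
      Nat.lt_succ_of_le (Nat.div_le_div_right (Nat.le_of_mem_primesLE hp)), ?_⟩
    rw [ZMod.val_natCast, Nat.div_add_mod]
  have hlog := log_le_log (by positivity) (Nat.cast_le (α := ℝ).2 hlarge)
  push_cast [log_pow] at hlog
  rw [← Finset.card_filter_add_card_filter_not (M < ·), Nat.cast_add, add_mul]
  gcongr

lemma eventually_primeCounting_le_of_sqrt_le :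
    ∀ᶠ x : ℕ in atTop, ∀ M : ℕ, x ≤ M * M →
      Nat.primeCounting M * log M ≤ (log 4 + 1) * M := by
  obtain ⟨Y, hY⟩ := eventually_atTop.1
    (tendsto_natCast_atTop_atTop.eventually (Chebyshev.eventually_primeCounting_le one_pos))
  filter_upwards [eventually_ge_atTop (max 4 (Y * Y))] with x hx M hxM
  have hM : 1 < M := by nlinarith [le_of_max_le_left hx]
  have hYM : Y ≤ M := Nat.mul_self_le_mul_self_iff.1 ((le_of_max_le_right hx).trans hxM)
  simpa only [Nat.floor_natCast, le_div_iff₀ (log_pos (Nat.one_lt_cast.2 hM))] using hY M hYM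

theorem eventually_card_residueClass_le : ∀ᶠ x : ℕ in atTop, ∀ q : ℕ, q.Prime → q * q ≤ x →
    ∀ a : ZMod q, a ≠ 0 →
      (((Nat.primesLE x).filter fun p : ℕ ↦ (p : ZMod q) = a).card : ℝ) ≤
        24 * (x / log x) * (log q / q) := by
  filter_upwards [eventually_primeCounting_le_of_sqrt_le, eventually_gt_atTop 1]
    with x hπ hx q hq hqx a ha
  set M := x / q + 1 with hM
  have hq0 : (0 : ℝ) < q := by exact_mod_cast hq.pos
  have hxM : x ≤ M * M := by
    have hlt : x < q * M := Nat.lt_mul_div_succ x hq.pos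
    have hqM : q ≤ M := ((Nat.le_div_iff_mul_le hq.pos).2 hqx).trans (Nat.le_succ _)
    nlinarith
  have hMx : M ≤ 2 * x / (q : ℝ) := by
    have hle : (M * q : ℕ) ≤ 2 * x := by
      rw [hM, add_mul, one_mul, two_mul]
      exact add_le_add (Nat.div_mul_le_self x q) ((Nat.le_mul_self q).trans hqx)
    rw [le_div_iff₀ hq0]
    exact_mod_cast hle
  have hlogx : 0 < log (x : ℝ) := log_pos (by exact_mod_cast hx)
  have hlogM : log x / 2 ≤ log M := by
    have h : log (x : ℝ) ≤ log ((M : ℝ) * M) := log_le_log (by positivity) (by exact_mod_cast hxM)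
    rw [log_mul (by positivity) (by positivity)] at h
    linarith
  have hlogq : log 4 + 1 ≤ 4 * log q := by
    have h2 : log 2 ≤ log (q : ℝ) := log_le_log two_pos (by exact_mod_cast hq.two_le)
    rw [show (4 : ℝ) = 2 ^ 2 by norm_num, log_pow]
    push_cast
    linarith [log_two_gt_d9]
  have hcard := (card_residueClass_le hq ha x).trans (add_le_add_right (hπ M hxM) _)
  set n := (((Nat.primesLE x).filter fun p : ℕ ↦ (p : ZMod q) = a).card : ℝ)
  have hmain : n * (log x / 2) ≤ 6 * log q * (2 * x / q) := calc
    n * (log x / 2) ≤ n * log M := by gcongr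
    _ ≤ 2 * M * log q + (log 4 + 1) * M := hcard
    _ ≤ 2 * M * log q + 4 * log q * M := by gcongr
    _ = 6 * log q * M := by ring
    _ ≤ 6 * log q * (2 * x / q) := by gcongr
  calc n ≤ 6 * log q * (2 * x / q) / (log x / 2) := (le_div_iff₀ (by positivity)).2 hmain
    _ = 24 * (x / log x) * (log q / q) := by field_simp; ring

end BrunTitchmarsh

section LocalBias

open Real

/-- The contribution `-log (1 - 1 / q)` of a prime factor `q` of `n` to `log (n / φ n)`. -/
noncomputable def logEulerFactor (q : ℕ) : ℝ := -log (1 - (q : ℝ)⁻¹)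

lemma one_sub_inv_pos {q : ℕ} (hq : 2 ≤ q) : 0 < 1 - (q : ℝ)⁻¹ :=
  sub_pos.2 (inv_lt_one_of_one_lt₀ (by exact_mod_cast hq))

lemma inv_le_logEulerFactor {q : ℕ} (hq : 2 ≤ q) : (q : ℝ)⁻¹ ≤ logEulerFactor q := by
  have := log_le_sub_one_of_pos (one_sub_inv_pos hq)
  unfold logEulerFactor
  linarith

lemma logEulerFactor_nonneg {q : ℕ} (hq : 2 ≤ q) : 0 ≤ logEulerFactor q :=
  (by positivity : (0 : ℝ) ≤ (q : ℝ)⁻¹).trans (inv_le_logEulerFactor hq)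

lemma logEulerFactor_le {q : ℕ} (hq : 2 ≤ q) : logEulerFactor q ≤ 2 / q := by
  have hq' : (2 : ℝ) ≤ q := by exact_mod_cast hq
  have hlog := one_sub_inv_le_log_of_pos (one_sub_inv_pos hq)
  have hinv : (1 - (q : ℝ)⁻¹)⁻¹ ≤ 1 + 2 / q := by
    rw [inv_le_iff_one_le_mul₀ (one_sub_inv_pos hq)]
    field_simp
    nlinarith
  unfold logEulerFactor
  linarith

lemma log_totient {n z : ℕ} (hn : n ≠ 0) (hz : n ≤ z) :
    log n.totient = log n - ∑ q ∈ Nat.primesLE z, if q ∣ n then logEulerFactor q else 0 := by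
  have hfactors : (Nat.primesLE z).filter (· ∣ n) = n.primeFactors := by
    ext q
    simp only [Finset.mem_filter, Nat.mem_primesLE, Nat.mem_primeFactors]
    exact ⟨fun h ↦ ⟨h.1.2, h.2, hn⟩,
      fun h ↦ ⟨⟨(Nat.le_of_dvd (Nat.pos_of_ne_zero hn) h.2.1).trans hz, h.1⟩, h.2.1⟩⟩
  have htotient : (n.totient : ℝ) = n * ∏ q ∈ n.primeFactors, (1 - (q : ℝ)⁻¹) := by
    simpa using congrArg (Rat.cast : ℚ → ℝ) (Nat.totient_eq_mul_prod_factors n)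
  have hpos : ∀ q ∈ n.primeFactors, 1 - (q : ℝ)⁻¹ ≠ 0 := fun q hq ↦
    (one_sub_inv_pos (Nat.prime_of_mem_primeFactors hq).two_le).ne'
  rw [← Finset.sum_filter, hfactors, htotient,
    log_mul (Nat.cast_ne_zero.2 hn) (Finset.prod_ne_zero_iff.2 hpos), log_prod hpos]
  simp only [logEulerFactor, Finset.sum_neg_distrib, sub_neg_eq_add]

/-- The contribution of the prime `q` to `log (φ (p + ℓ) / φ (p - ℓ))` when `p ≡ a` modulo `q`. -/
noncomputable def localBias (ℓ q : ℕ) (a : ZMod q) : ℝ :=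
  (if a = ℓ then logEulerFactor q else 0) - if a = -ℓ then logEulerFactor q else 0

lemma localBias_neg (ℓ q : ℕ) (a : ZMod q) : localBias ℓ q (-a) = -localBias ℓ q a := by
  simp only [localBias, neg_eq_iff_eq_neg, neg_neg, neg_sub]

lemma abs_localBias_le_add {ℓ q : ℕ} (hq : 2 ≤ q) (a : ZMod q) :
    |localBias ℓ q a| ≤
      (if a = ℓ then logEulerFactor q else 0) + if a = -ℓ then logEulerFactor q else 0 := by
  have := logEulerFactor_nonneg hq
  refine (abs_sub _ _).trans_eq ?_
  rw [abs_of_nonneg (by positivity), abs_of_nonneg (by positivity)]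

lemma abs_localBias_le {ℓ q : ℕ} (hq : 2 ≤ q) (a : ZMod q) :
    |localBias ℓ q a| ≤ logEulerFactor q := by
  have := logEulerFactor_nonneg hq
  unfold localBias
  split_ifs <;> simp [abs_of_nonneg this, this]

lemma natCast_eq_natCast_iff_dvd_sub {ℓ p : ℕ} (h : ℓ ≤ p) (q : ℕ) :
    (p : ZMod q) = ℓ ↔ q ∣ p - ℓ := by
  rw [← ZMod.natCast_eq_zero_iff, Nat.cast_sub h, sub_eq_zero]

lemma natCast_eq_neg_natCast_iff_dvd_add (ℓ p q : ℕ) : (p : ZMod q) = -ℓ ↔ q ∣ p + ℓ := by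
  rw [← ZMod.natCast_eq_zero_iff, Nat.cast_add, eq_neg_iff_add_eq_zero]

lemma dvd_mul_of_localBias_ne_zero {ℓ p q : ℕ} (hp : ℓ ≤ p) (h : localBias ℓ q p ≠ 0) :
    q ∣ (p - ℓ) * (p + ℓ) := by
  contrapose! h
  rw [localBias, if_neg, if_neg, sub_zero]
  · exact fun ha ↦ h (Dvd.dvd.mul_left ((natCast_eq_neg_natCast_iff_dvd_add ℓ p q).1 ha) _)
  · exact fun ha ↦ h (Dvd.dvd.mul_right ((natCast_eq_natCast_iff_dvd_sub hp q).1 ha) _)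

lemma log_totient_add_sub_log_totient_sub {ℓ p z : ℕ} (hp : ℓ < p) (hz : p + ℓ ≤ z) :
    log (p + ℓ).totient - log (p - ℓ).totient =
      log (p + ℓ : ℕ) - log (p - ℓ : ℕ) + ∑ q ∈ Nat.primesLE z, localBias ℓ q p := by
  rw [log_totient (by lia) hz, log_totient (by lia) (by lia : p - ℓ ≤ z)]
  simp only [localBias, Finset.sum_sub_distrib, natCast_eq_natCast_iff_dvd_sub hp.le,
    natCast_eq_neg_natCast_iff_dvd_add]
  ring

lemma tendsto_log_add_sub_log_sub (ℓ : ℕ) :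
    Tendsto (fun p : ℕ ↦ log (p + ℓ : ℕ) - log (p - ℓ : ℕ)) atTop (𝓝 0) := by
  have hlim := (((tendsto_log_comp_add_sub_log ℓ).sub (tendsto_log_comp_add_sub_log (-ℓ))).comp
    tendsto_natCast_atTop_atTop)
  rw [sub_zero] at hlim
  refine hlim.congr' ?_
  filter_upwards [eventually_ge_atTop ℓ] with p hp
  rw [Function.comp_apply, sub_sub_sub_cancel_right, ← sub_eq_add_neg, Nat.cast_add,
    Nat.cast_sub hp]

end LocalBias

section Tail

open Real

lemma primeFraction_lt_le_sum_div {f : ℕ → ℝ} {ε : ℝ} {x : ℕ}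
    (hf : ∀ p ∈ Nat.primesLE x, 0 ≤ f p) (hε : 0 < ε) :
    primeFraction (fun p ↦ ε < f p) x ≤
      (∑ p ∈ Nat.primesLE x, f p) / (ε * Nat.primeCounting x) := by
  classical
  rw [primeFraction_eq, div_mul_eq_div_div]
  gcongr
  rw [le_div_iff₀ hε, ← nsmul_eq_mul]
  exact (Finset.card_nsmul_le_sum _ _ _ fun p hp ↦ (Finset.mem_filter.1 hp).2.le).trans
    (Finset.sum_le_sum_of_subset_of_nonneg (Finset.filter_subset _ _) fun p hp _ ↦ hf p hp)

lemma summable_log_div_sq : Summable fun n : ℕ ↦ log n / (n : ℝ) ^ 2 := by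
  refine Summable.of_nonneg_of_le (fun n ↦ div_nonneg (log_natCast_nonneg n) (by positivity))
    (fun n ↦ ?_) ((summable_one_div_nat_rpow (p := 3 / 2)).2 (by norm_num) |>.mul_left 2)
  obtain rfl | hn := Nat.eq_zero_or_pos n
  · simp
  have hn0 : (0 : ℝ) < n := by exact_mod_cast hn
  have hsplit : (n : ℝ) ^ 2 = (n : ℝ) ^ (3 / 2 : ℝ) * (n : ℝ) ^ (1 / 2 : ℝ) := by
    rw [← rpow_add hn0]
    norm_num
  rw [hsplit, div_le_iff₀ (by positivity)]
  calc log n ≤ (n : ℝ) ^ (1 / 2 : ℝ) / (1 / 2) := log_le_rpow_div hn0.le (by norm_num)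
    _ = 2 * (1 / (n : ℝ) ^ (3 / 2 : ℝ)) * ((n : ℝ) ^ (3 / 2 : ℝ) * (n : ℝ) ^ (1 / 2 : ℝ)) := by
      field_simp

lemma card_primeFactors_mul_log_two_le {n : ℕ} (hn : n ≠ 0) :
    n.primeFactors.card * log 2 ≤ log n := by
  have hle : 2 ^ n.primeFactors.card ≤ n := calc
    2 ^ n.primeFactors.card ≤ ∏ q ∈ n.primeFactors, q :=
      Finset.pow_card_le_prod _ _ _ fun q hq ↦ (Nat.prime_of_mem_primeFactors hq).two_le
    _ ≤ n := Nat.le_of_dvd (Nat.pos_of_ne_zero hn) (Nat.prod_primeFactors_dvd n)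
  rw [← log_pow]
  exact log_le_log (by positivity) (by exact_mod_cast hle)

lemma sum_abs_localBias_le_of_sq_gt {ℓ p x : ℕ} (hp : ℓ < p) (hx : p ≤ x) {s : Finset ℕ}
    (hs : ∀ q ∈ s, q.Prime ∧ x < q * q) :
    ∑ q ∈ s, |localBias ℓ q p| ≤ 4 / log 2 * (log x / √x) := by
  have hx0 : (0 : ℝ) < x := by exact_mod_cast (Nat.zero_le ℓ).trans_lt (hp.trans_le hx)
  have hlog2 : 0 < log 2 := log_pos one_lt_two
  set n := (p - ℓ) * (p + ℓ)
  have hn : n ≠ 0 := (Nat.mul_pos (by lia) (by lia)).ne'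
  have hnx : n ≤ x ^ 2 := by
    calc n = p ^ 2 - ℓ ^ 2 := by rw [Nat.sq_sub_sq, mul_comm]
      _ ≤ x ^ 2 := (Nat.sub_le _ _).trans (Nat.pow_le_pow_left hx 2)
  have hcard : (s.filter fun q ↦ localBias ℓ q p ≠ 0).card ≤ 2 * log x / log 2 := by
    have hsub : (s.filter fun q ↦ localBias ℓ q p ≠ 0) ⊆ n.primeFactors := fun q hq ↦ by
      obtain ⟨hqs, hbias⟩ := Finset.mem_filter.1 hq
      exact Nat.mem_primeFactors.2 ⟨(hs q hqs).1, dvd_mul_of_localBias_ne_zero hp.le hbias, hn⟩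
    rw [le_div_iff₀ hlog2]
    calc (s.filter fun q ↦ localBias ℓ q p ≠ 0).card * log 2
        ≤ n.primeFactors.card * log 2 := by gcongr
      _ ≤ log n := card_primeFactors_mul_log_two_le hn
      _ ≤ log ((x : ℝ) ^ 2) := log_le_log (by positivity) (by exact_mod_cast hnx)
      _ = 2 * log x := by rw [log_pow, Nat.cast_ofNat]
  have hterm : ∀ q ∈ s.filter (fun q ↦ localBias ℓ q p ≠ 0), |localBias ℓ q p| ≤ 2 / √x := by
    intro q hq
    obtain ⟨hprime, hxq⟩ := hs q (Finset.mem_filter.1 hq).1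
    have hsqrt : √(x : ℝ) ≤ q := by
      rw [sqrt_le_left (by positivity), sq]
      exact_mod_cast hxq.le
    exact (abs_localBias_le hprime.two_le _).trans
      ((logEulerFactor_le hprime.two_le).trans (by gcongr))
  calc ∑ q ∈ s, |localBias ℓ q p|
      = ∑ q ∈ s.filter (fun q ↦ localBias ℓ q p ≠ 0), |localBias ℓ q p| := by
        refine (Finset.sum_filter_of_ne fun q _ hq ↦ ?_).symm
        exact abs_ne_zero.1 hq
    _ ≤ (s.filter fun q ↦ localBias ℓ q p ≠ 0).card * (2 / √x) := by
        simpa only [nsmul_eq_mul] using Finset.sum_le_card_nsmul _ _ _ hterm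
    _ ≤ 2 * log x / log 2 * (2 / √x) := by gcongr
    _ = 4 / log 2 * (log x / √x) := by ring

lemma tendsto_log_div_sqrt : Tendsto (fun x : ℕ ↦ log x / √x) atTop (𝓝 0) := by
  simpa only [sqrt_eq_rpow] using!
    (isLittleO_log_rpow_atTop one_half_pos).tendsto_div_nhds_zero.comp
      tendsto_natCast_atTop_atTop

lemma eventually_sum_abs_localBias_le {ℓ : ℕ} (hℓ : 0 < ℓ) :
    ∀ᶠ x : ℕ in atTop, ∀ q : ℕ, q.Prime → ℓ < q → q * q ≤ x →
      ∑ p ∈ Nat.primesLE x, |localBias ℓ q p| ≤ 96 * (x / log x) * (log q / q ^ 2) := by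
  filter_upwards [eventually_card_residueClass_le] with x hcount q hq hℓq hqx
  have hℓ0 : (ℓ : ZMod q) ≠ 0 := fun h ↦
    (Nat.le_of_dvd hℓ ((ZMod.natCast_eq_zero_iff ℓ q).1 h)).not_gt hℓq
  have hclass (a : ZMod q) (ha : a ≠ 0) :
      ∑ p ∈ Nat.primesLE x, (if (p : ZMod q) = a then logEulerFactor q else 0) ≤
        24 * (x / log x) * (log q / q) * (2 / q) := by
    have := logEulerFactor_nonneg hq.two_le
    rw [← Finset.sum_filter, Finset.sum_const, nsmul_eq_mul]
    gcongr
    · exact hcount q hq hqx a ha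
    · exact logEulerFactor_le hq.two_le
  calc ∑ p ∈ Nat.primesLE x, |localBias ℓ q p|
      ≤ ∑ p ∈ Nat.primesLE x, ((if (p : ZMod q) = ℓ then logEulerFactor q else 0) +
          if (p : ZMod q) = -ℓ then logEulerFactor q else 0) :=
        Finset.sum_le_sum fun p _ ↦ abs_localBias_le_add hq.two_le _
    _ ≤ 24 * (x / log x) * (log q / q) * (2 / q) +
          24 * (x / log x) * (log q / q) * (2 / q) := by
        rw [Finset.sum_add_distrib]
        exact add_le_add (hclass _ hℓ0) (hclass _ (neg_ne_zero.2 hℓ0))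
    _ = 96 * (x / log x) * (log q / q ^ 2) := by ring

/-- The total absolute contribution to `log (φ (p + ℓ) / φ (p - ℓ))` of the primes exceeding `y`;
the range stops at `2 * p` because no larger prime divides `p - ℓ` or `p + ℓ` when `ℓ < p`. -/
noncomputable def biasTail (ℓ y p : ℕ) : ℝ :=
  ∑ q ∈ (Nat.primesLE (2 * p)).filter (y < ·), |localBias ℓ q p|

lemma eventually_biasTail_le (ℓ : ℕ) {ε : ℝ} (hε : 0 < ε) :
    ∀ᶠ x : ℕ in atTop, ∀ y p, ℓ < p → p ≤ x → biasTail ℓ y p ≤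
      ε + ∑ q ∈ (Nat.primesLE x).filter (fun q ↦ y < q ∧ q * q ≤ x), |localBias ℓ q p| := by
  have hlim := tendsto_log_div_sqrt.const_mul (4 / log 2)
  rw [mul_zero] at hlim
  filter_upwards [hlim.eventually_le_const hε] with x hx y p hp hpx
  rw [biasTail, ← Finset.sum_filter_add_sum_filter_not _ (fun q ↦ x < q * q)]
  refine add_le_add ((sum_abs_localBias_le_of_sq_gt hp hpx fun q hq ↦ ?_).trans hx)
    (Finset.sum_le_sum_of_subset_of_nonneg (fun q hq ↦ ?_) fun _ _ _ ↦ abs_nonneg _)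
  · simp only [Finset.mem_filter] at hq
    exact ⟨Nat.prime_of_mem_primesLE hq.1.1, hq.2⟩
  · simp only [Finset.mem_filter, Nat.mem_primesLE, not_lt] at hq ⊢
    exact ⟨⟨(Nat.le_mul_self q).trans hq.2, hq.1.1.2⟩, hq.1.2, hq.2⟩

lemma eventually_sum_log_div_sq_le {η : ℝ} (hη : 0 < η) :
    ∀ᶠ y : ℕ in atTop, ∀ s : Finset ℕ, (∀ q ∈ s, y < q) →
      ∑ q ∈ s, log q / (q : ℝ) ^ 2 ≤ η := by
  obtain ⟨t, ht⟩ := summable_iff_vanishing_norm.1 summable_log_div_sq η hη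
  filter_upwards [eventually_ge_atTop (t.sup id)] with y hy s hs
  refine (le_abs_self _).trans (ht s (Finset.disjoint_left.2 fun q hqs hqt ↦ ?_)).le
  exact (hs q hqs).not_ge ((Finset.le_sup (f := id) hqt).trans hy)

lemma eventually_div_log_le_primeCounting :
    ∀ᶠ x : ℕ in atTop, x / log x ≤ 2 * Nat.primeCounting x := by
  filter_upwards [tendsto_primeCounting_mul_log_div.eventually_const_le one_half_lt_one,
    eventually_gt_atTop 1] with x hπ hx
  have hx0 : (0 : ℝ) < x := by positivity
  rw [le_div_iff₀ hx0] at hπ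
  rw [div_le_iff₀ (log_pos (by exact_mod_cast hx))]
  linarith

theorem eventually_primeFraction_biasTail_le {ℓ : ℕ} (hℓ : 0 < ℓ) {ε δ : ℝ} (hε : 0 < ε)
    (hδ : 0 < δ) : ∀ᶠ y in atTop, ∀ᶠ x in atTop,
      primeFraction (fun p ↦ ℓ < p ∧ ε < biasTail ℓ y p) x ≤ δ := by
  have hη : 0 < ε * δ / 384 := by positivity
  filter_upwards [eventually_sum_log_div_sq_le hη, eventually_ge_atTop ℓ] with y hsum hℓy
  filter_upwards [eventually_biasTail_le ℓ (half_pos hε), eventually_sum_abs_localBias_le hℓ,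
    eventually_div_log_le_primeCounting, eventually_gt_atTop 1] with x htail hq hπ hx
  have hlog : 0 < log (x : ℝ) := log_pos (by exact_mod_cast hx)
  set R := (Nat.primesLE x).filter fun q ↦ y < q ∧ q * q ≤ x
  have hR : ∀ q ∈ R, q.Prime ∧ y < q ∧ q * q ≤ x := fun q hqR ↦
    ⟨Nat.prime_of_mem_primesLE (Finset.mem_filter.1 hqR).1, (Finset.mem_filter.1 hqR).2⟩
  have hπ0 : (0 : ℝ) < Nat.primeCounting x := by
    have : (0 : ℝ) < x / log x := by positivity
    linarith
  have hdouble : ∑ p ∈ Nat.primesLE x, ∑ q ∈ R, |localBias ℓ q p| ≤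
      δ * (ε / 2 * Nat.primeCounting x) := calc
    _ = ∑ q ∈ R, ∑ p ∈ Nat.primesLE x, |localBias ℓ q p| := Finset.sum_comm
    _ ≤ ∑ q ∈ R, 96 * (x / log x) * (log q / q ^ 2) := Finset.sum_le_sum fun q hqR ↦
        hq q (hR q hqR).1 (hℓy.trans_lt (hR q hqR).2.1) (hR q hqR).2.2
    _ = 96 * (x / log x) * ∑ q ∈ R, log q / (q : ℝ) ^ 2 := (Finset.mul_sum _ _ _).symm
    _ ≤ 96 * (2 * Nat.primeCounting x) * (ε * δ / 384) := by
        gcongr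
        exact hsum R fun q hqR ↦ (hR q hqR).2.1
    _ = δ * (ε / 2 * Nat.primeCounting x) := by ring
  calc primeFraction (fun p ↦ ℓ < p ∧ ε < biasTail ℓ y p) x
      ≤ primeFraction (fun p ↦ ε / 2 < ∑ q ∈ R, |localBias ℓ q p|) x :=
        primeFraction_le_of_imp fun p hp ⟨hℓp, hεp⟩ ↦ by
          linarith [htail y p hℓp (Nat.le_of_mem_primesLE hp)]
    _ ≤ (∑ p ∈ Nat.primesLE x, ∑ q ∈ R, |localBias ℓ q p|) / (ε / 2 * Nat.primeCounting x) :=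
        primeFraction_lt_le_sum_div
          (fun _ _ ↦ Finset.sum_nonneg fun _ _ ↦ abs_nonneg _) (half_pos hε)
    _ ≤ δ := (div_le_iff₀ (by positivity)).2 hdouble

end Tail

section LittlewoodOfford

lemma succ_mul_sq_centralBinom_le (n : ℕ) : (2 * n + 1) * n.centralBinom ^ 2 ≤ 16 ^ n := by
  induction n with
  | zero => simp
  | succ n ih =>
    refine Nat.le_of_mul_le_mul_left ?_ (show 0 < (n + 1) ^ 2 by positivity)
    calc (n + 1) ^ 2 * ((2 * (n + 1) + 1) * (n + 1).centralBinom ^ 2)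
        = (2 * n + 3) * ((n + 1) * (n + 1).centralBinom) ^ 2 := by ring
      _ = 4 * ((2 * n + 3) * (2 * n + 1)) * ((2 * n + 1) * n.centralBinom ^ 2) := by
        rw [Nat.succ_mul_centralBinom_succ]
        ring
      _ ≤ 4 * (4 * (n + 1) ^ 2) * 16 ^ n := Nat.mul_le_mul (by nlinarith) ih
      _ = (n + 1) ^ 2 * 16 ^ (n + 1) := by ring

lemma mul_sq_choose_half_le (k : ℕ) : k * k.choose (k / 2) ^ 2 ≤ 4 ^ k := by
  obtain ⟨n, rfl | rfl⟩ := k.even_or_odd'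
  · rw [Nat.mul_div_cancel_left n two_pos, ← Nat.centralBinom_eq_two_mul_choose, pow_mul]
    exact (Nat.mul_le_mul_right _ (Nat.le_succ _)).trans (succ_mul_sq_centralBinom_le n)
  · have hhalf : (2 * n + 1) / 2 = n := by lia
    have hchoose : 2 * (2 * n + 1).choose n = (n + 1).centralBinom := by
      rw [Nat.centralBinom_eq_two_mul_choose, show 2 * (n + 1) = 2 * n + 1 + 1 by ring,
        Nat.choose_succ_succ, two_mul, Nat.choose_symm_half]
    rw [hhalf]
    refine Nat.le_of_mul_le_mul_left ?_ four_pos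
    calc 4 * ((2 * n + 1) * (2 * n + 1).choose n ^ 2)
        = (2 * n + 1) * (n + 1).centralBinom ^ 2 := by rw [← hchoose]; ring
      _ ≤ (2 * (n + 1) + 1) * (n + 1).centralBinom ^ 2 := by gcongr; lia
      _ ≤ 16 ^ (n + 1) := succ_mul_sq_centralBinom_le (n + 1)
      _ = 4 * 4 ^ (2 * n + 1) := by rw [show (16 : ℕ) = 4 ^ 2 by rfl, ← pow_mul]; ring

lemma choose_half_le_two_pow_div_sqrt {K k : ℕ} (hK : 0 < K) (hk : K ≤ k) :
    (k.choose (k / 2) : ℝ) ≤ 2 ^ k / √K := by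
  have hsq : (K : ℝ) * k.choose (k / 2) ^ 2 ≤ (2 ^ k) ^ 2 := calc
    (K : ℝ) * k.choose (k / 2) ^ 2 ≤ k * k.choose (k / 2) ^ 2 := by gcongr
    _ ≤ 4 ^ k := by exact_mod_cast mul_sq_choose_half_le k
    _ = (2 ^ k) ^ 2 := by rw [← pow_mul, mul_comm, pow_mul]; norm_num
  rw [le_div_iff₀ (by positivity), ← Real.sqrt_sq (by positivity : (0 : ℝ) ≤ 2 ^ k)]
  refine Real.le_sqrt_of_sq_le ?_
  rwa [mul_pow, Real.sq_sqrt (by positivity), mul_comm]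

variable {ι : Type*} [Fintype ι]

-- These `J` form an antichain in `s`: enlarging `J` within `s` raises its sum by more than `d`.
lemma card_fiber_subset_sum_Icc_le [DecidableEq ι] {v : ι → ℝ} (hv : ∀ i, 0 ≤ v i) {d : ℝ}
    {s : Finset ι} (hs : ∀ i ∈ s, d < v i) (c : ℝ) (B : Finset ι) :
    (Finset.univ.filter fun J : Finset ι ↦
      ∑ i ∈ J, v i ∈ Set.Icc c (c + d) ∧ J \ s = B).card ≤ s.card.choose (s.card / 2) := by
  set F := Finset.univ.filter fun J : Finset ι ↦ ∑ i ∈ J, v i ∈ Set.Icc c (c + d) ∧ J \ s = B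
  have hsub : ∀ J₁ ∈ F, ∀ J₂ ∈ F, J₁.subtype (· ∈ s) ⊆ J₂.subtype (· ∈ s) → J₁ = J₂ := by
    intro J₁ h₁ J₂ h₂ h
    simp only [F, Finset.mem_filter_univ] at h₁ h₂
    have hJ : J₁ ⊆ J₂ := fun i hi ↦ by
      by_cases his : i ∈ s
      · exact Finset.mem_subtype.1 (h (Finset.mem_subtype (a := ⟨i, his⟩).2 hi))
      · exact (Finset.mem_sdiff.1 (h₂.2 ▸ h₁.2 ▸ Finset.mem_sdiff.2 ⟨hi, his⟩)).1
    refine hJ.antisymm fun i hi ↦ by_contra fun hi₁ ↦ ?_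
    have his : i ∈ s := by_contra fun his ↦
      hi₁ (Finset.mem_sdiff.1 (h₁.2 ▸ h₂.2 ▸ Finset.mem_sdiff.2 ⟨hi, his⟩)).1
    have hsum : v i + ∑ j ∈ J₁, v j ≤ ∑ j ∈ J₂, v j := by
      rw [← Finset.sum_insert hi₁]
      exact Finset.sum_le_sum_of_subset_of_nonneg (Finset.insert_subset hi hJ) fun j _ _ ↦ hv j
    linarith [hs i his, h₁.1.1, h₂.1.2]
  have hinj : Set.InjOn (Finset.subtype (· ∈ s)) (F : Set (Finset ι)) :=
    fun J₁ h₁ J₂ h₂ h ↦ hsub J₁ h₁ J₂ h₂ h.subset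
  have hanti : IsAntichain (· ⊆ ·) ((F.image (Finset.subtype (· ∈ s)) :) : Set (Finset s)) := by
    rw [Finset.coe_image]
    rintro _ ⟨J₁, h₁, rfl⟩ _ ⟨J₂, h₂, rfl⟩ hne hle
    exact hne (congrArg _ (hsub J₁ h₁ J₂ h₂ hle))
  simpa only [Finset.card_image_of_injOn hinj, Fintype.card_coe] using hanti.sperner

theorem card_subset_sum_Icc_le {v : ι → ℝ} (hv : ∀ i, 0 ≤ v i) {d : ℝ} {s : Finset ι}
    (hs : ∀ i ∈ s, d < v i) (c : ℝ) :
    (Finset.univ.filter fun J : Finset ι ↦ ∑ i ∈ J, v i ∈ Set.Icc c (c + d)).card ≤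
      s.card.choose (s.card / 2) * 2 ^ (Fintype.card ι - s.card) := by
  classical
  rw [← Finset.card_compl, ← Finset.card_powerset]
  refine Finset.card_le_mul_card_image_of_maps_to (f := (· \ s)) (fun J _ ↦ ?_) _ fun B _ ↦ ?_
  · exact Finset.mem_powerset.2 fun i hi ↦ Finset.mem_compl.2 (Finset.mem_sdiff.1 hi).2
  · simpa only [Finset.filter_filter] using card_fiber_subset_sum_Icc_le hv hs c B

-- Flipping the signs at the negative `v i` reduces to subset sums of the `2 * |v i|`.
theorem card_abs_signed_sum_le [DecidableEq ι] (v : ι → ℝ) {ε : ℝ} {s : Finset ι}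
    (hs : ∀ i ∈ s, ε < |v i|) :
    (Finset.univ.filter fun J : Finset ι ↦
      |∑ i, if i ∈ J then -v i else v i| ≤ ε).card ≤
        s.card.choose (s.card / 2) * 2 ^ (Fintype.card ι - s.card) := by
  refine le_of_eq_of_le ?_ (card_subset_sum_Icc_le (v := fun i ↦ 2 * |v i|)
    (fun i ↦ by positivity) (d := 2 * ε) (fun i hi ↦ by linarith [hs i hi]) (∑ i, |v i| - ε))
  set N := Finset.univ.filter fun i ↦ v i < 0
  refine Finset.card_equiv (symmDiff_right_involutive N).toPerm fun J ↦ ?_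
  have hsum : ∑ i, (if i ∈ J then -v i else v i) =
      ∑ i, |v i| - ∑ i ∈ symmDiff N J, 2 * |v i| := by
    rw [← Finset.univ_inter (symmDiff N J), ← Finset.sum_ite_mem, ← Finset.sum_sub_distrib]
    refine Finset.sum_congr rfl fun i _ ↦ ?_
    obtain hi | hi := lt_or_ge (v i) 0 <;> by_cases hJ : i ∈ J <;>
      simp [N, Finset.mem_symmDiff, hi, hJ, hi.not_gt, abs_of_neg, abs_of_nonneg, two_mul]
  simp only [Finset.mem_filter_univ, hsum, abs_le, Set.mem_Icc, Function.Involutive.coe_toPerm]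
  constructor <;> rintro ⟨h₁, h₂⟩ <;> constructor <;> linarith

end LittlewoodOfford

section AntiConcentration

variable {ι : Type*} [Fintype ι] [DecidableEq ι]

lemma card_abs_signed_sum_le_two_pow_mul (v : ι → ℝ) (ε : ℝ) {K : ℕ} (hK : 0 < K) :
    ((Finset.univ.filter fun J : Finset ι ↦ |∑ i, if i ∈ J then -v i else v i| ≤ ε).card : ℝ) ≤
      2 ^ Fintype.card ι *
        ((√K)⁻¹ + if (Finset.univ.filter fun i ↦ ε < |v i|).card < K then 1 else 0) := by
  set s := Finset.univ.filter fun i ↦ ε < |v i|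
  split_ifs with hs
  · refine le_trans ?_ (le_mul_of_one_le_right (by positivity) (le_add_of_nonneg_left ?_))
    · exact_mod_cast (Finset.card_le_univ _).trans_eq Fintype.card_finset
    · positivity
  · have hbound : ((s.card.choose (s.card / 2) * 2 ^ (Fintype.card ι - s.card) : ℕ) : ℝ) ≤
        2 ^ Fintype.card ι * (√K)⁻¹ := by
      push_cast
      grw [choose_half_le_two_pow_div_sqrt hK (not_lt.1 hs)]
      rw [div_mul_eq_mul_div, ← pow_add, Nat.add_sub_cancel' (Finset.card_le_univ s),
        div_eq_mul_inv]
    rw [add_zero]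
    exact (Nat.cast_le.2 (card_abs_signed_sum_le v fun i ↦ (Finset.mem_filter_univ i).1)).trans
      hbound

variable {α : ι → Type*} [∀ i, Fintype (α i)]

-- Negating the coordinates in `J` permutes the product, so one may average over all `J`.
theorem card_abs_sum_le [∀ i, InvolutiveNeg (α i)] (V : ∀ i, α i → ℝ)
    (hV : ∀ i a, V i (-a) = -V i a) (ε : ℝ) {K : ℕ} (hK : 0 < K) :
    ((Finset.univ.filter fun a : ∀ i, α i ↦ |∑ i, V i (a i)| ≤ ε).card : ℝ) ≤
      (√K)⁻¹ * Fintype.card (∀ i, α i) + (Finset.univ.filter fun a : ∀ i, α i ↦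
        (Finset.univ.filter fun i ↦ ε < |V i (a i)|).card < K).card := by
  have hflip (J : Finset ι) :
      (Finset.univ.filter fun a : ∀ i, α i ↦ |∑ i, V i (a i)| ≤ ε).card =
        (Finset.univ.filter fun a : ∀ i, α i ↦
          |∑ i, if i ∈ J then -V i (a i) else V i (a i)| ≤ ε).card := by
    have hinv : Function.Involutive fun a : ∀ i, α i ↦ J.piecewise (-a) a := fun a ↦ by
      ext i
      by_cases hi : i ∈ J <;> simp [hi]
    refine Finset.card_equiv hinv.toPerm fun a ↦ ?_
    simp only [Finset.mem_filter_univ, Function.Involutive.coe_toPerm]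
    congr! 3 with i
    by_cases hi : i ∈ J <;> simp [hi, hV]
  have hswap : 2 ^ Fintype.card ι *
        (Finset.univ.filter fun a : ∀ i, α i ↦ |∑ i, V i (a i)| ≤ ε).card =
      ∑ a : ∀ i, α i, (Finset.univ.filter fun J : Finset ι ↦
        |∑ i, if i ∈ J then -V i (a i) else V i (a i)| ≤ ε).card := by
    rw [← Fintype.card_finset, ← Finset.card_univ, ← smul_eq_mul, ← Finset.sum_const,
      Finset.sum_congr rfl fun J _ ↦ hflip J]
    simp only [Finset.card_filter]
    exact Finset.sum_comm
  refine le_of_mul_le_mul_left ?_ (by positivity : (0 : ℝ) < 2 ^ Fintype.card ι)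
  calc _ ≤ ∑ a : ∀ i, α i, 2 ^ Fintype.card ι *
        ((√K)⁻¹ + if (Finset.univ.filter fun i ↦ ε < |V i (a i)|).card < K then 1 else 0) := by
        rw [← Nat.cast_ofNat (R := ℝ), ← Nat.cast_pow, ← Nat.cast_mul, hswap, Nat.cast_sum]
        exact Finset.sum_le_sum fun a _ ↦ by
          simpa using card_abs_signed_sum_le_two_pow_mul (fun i ↦ V i (a i)) ε hK
    _ = _ := by
      rw [← Finset.mul_sum, Finset.sum_add_distrib, Finset.sum_const, Finset.card_univ,
        Finset.sum_boole, nsmul_eq_mul, mul_comm (Fintype.card _ : ℝ)]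

lemma card_sub_half_card_le_mul_exp {β : Type*} [Fintype β] (s : Finset β) :
    (Fintype.card β - s.card / 2 : ℝ) ≤
      Fintype.card β * Real.exp (-(s.card / Fintype.card β) / 2) := by
  obtain h | h := isEmpty_or_nonempty β
  · simp [s.eq_empty_of_isEmpty]
  · calc (Fintype.card β - s.card / 2 : ℝ)
        = Fintype.card β * (-(s.card / Fintype.card β) / 2 + 1) := by
          field_simp
          ring
      _ ≤ _ := by
          gcongr
          exact Real.add_one_le_exp _

-- Markov's inequality for the random variable `2 ^ (-#hits)`.
theorem card_few_hits_le [∀ i, DecidableEq (α i)] (E : ∀ i, Finset (α i)) (K : ℕ) :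
    ((Finset.univ.filter fun a : ∀ i, α i ↦
        (Finset.univ.filter fun i ↦ a i ∈ E i).card < K).card : ℝ) ≤
      2 ^ K * Real.exp (-(∑ i, ((E i).card : ℝ) / Fintype.card (α i)) / 2) *
        Fintype.card (∀ i, α i) := by
  set w : ∀ i, α i → ℝ := fun i a ↦ if a ∈ E i then 1 / 2 else 1 with hw
  have hprod (a : ∀ i, α i) :
      ∏ i, w i (a i) = (1 / 2) ^ (Finset.univ.filter fun i ↦ a i ∈ E i).card := by
    rw [hw, ← Finset.prod_filter, Finset.prod_const]
  have hfactor (i : ι) : ∑ a, w i a ≤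
      Fintype.card (α i) * Real.exp (-(((E i).card : ℝ) / Fintype.card (α i)) / 2) := by
    refine le_of_eq_of_le ?_ (card_sub_half_card_le_mul_exp (E i))
    have hsub (a : α i) : w i a = 1 - if a ∈ E i then 1 / 2 else 0 := by
      simp only [hw]
      split_ifs <;> norm_num
    simp only [hsub, Finset.sum_sub_distrib, Finset.sum_ite_mem, Finset.univ_inter,
      Finset.sum_const, Finset.card_univ, nsmul_eq_mul]
    ring
  calc ((Finset.univ.filter fun a : ∀ i, α i ↦
        (Finset.univ.filter fun i ↦ a i ∈ E i).card < K).card : ℝ)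
      ≤ ∑ a : ∀ i, α i, 2 ^ K * ∏ i, w i (a i) := by
        rw [Finset.natCast_card_filter]
        refine Finset.sum_le_sum fun a _ ↦ ?_
        rw [hprod]
        split_ifs with h
        · rw [one_div, inv_pow, ← div_eq_mul_inv, one_le_div (by positivity)]
          exact pow_le_pow_right₀ one_le_two h.le
        · positivity
    _ = 2 ^ K * ∏ i, ∑ a, w i a := by
        rw [← Finset.mul_sum, Finset.prod_univ_sum, Fintype.piFinset_univ]
    _ ≤ 2 ^ K * ∏ i, Fintype.card (α i) *
          Real.exp (-(((E i).card : ℝ) / Fintype.card (α i)) / 2) := by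
        gcongr with i
        exact hfactor i
    _ = _ := by
        rw [Finset.prod_mul_distrib, ← Real.exp_sum, Fintype.card_pi, ← Finset.sum_div,
          Finset.sum_neg_distrib, Nat.cast_prod]
        ring

end AntiConcentration

section BiasAntiConcentration

instance fact_prime_coe_primesLE (y : ℕ) (q : Nat.primesLE y) : Fact (q : ℕ).Prime :=
  ⟨Nat.prime_of_mem_primesLE q.2⟩

lemma tendsto_sum_inv_primesLE (m : ℕ) :
    Tendsto (fun z ↦ ∑ q ∈ (Nat.primesLE z).filter (m < ·), (q : ℝ)⁻¹) atTop atTop := by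
  have hindicator (z : ℕ) : ∑ q ∈ Nat.primesLE z, (q : ℝ)⁻¹ =
      ∑ q ∈ Finset.range (z + 1), {p : ℕ | p.Prime}.indicator (fun n ↦ 1 / (n : ℝ)) q := by
    simp only [Set.indicator_apply, Set.mem_ofPred_eq, one_div, ← Finset.sum_filter,
      Nat.primesLE, Nat.primesBelow]
  have hall : Tendsto (fun z ↦ ∑ q ∈ Nat.primesLE z, (q : ℝ)⁻¹) atTop atTop := by
    simp only [hindicator]
    exact (tendsto_add_atTop_iff_nat 1).2 ((not_summable_iff_tendsto_nat_atTop_of_nonneg fun n ↦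
      Set.indicator_nonneg (fun _ _ ↦ by positivity) n).1 not_summable_one_div_on_primes)
  refine tendsto_atTop_mono (fun z ↦ ?_)
    (tendsto_atTop_add_const_right _ (-∑ q ∈ Nat.primesLE m, (q : ℝ)⁻¹) hall)
  rw [← sub_eq_add_neg, sub_le_iff_le_add,
    ← Finset.sum_filter_add_sum_filter_not (Nat.primesLE z) (m < ·)]
  gcongr
  intro q hq
  simp only [Finset.mem_filter, Nat.mem_primesLE, not_lt] at hq ⊢
  exact ⟨hq.2, hq.1.2⟩

lemma inv_le_card_lt_abs_localBias_div {ℓ q : ℕ} [Fact q.Prime] (hℓ : 0 < ℓ) (hq : 2 * ℓ < q)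
    {ε : ℝ} (hε : ε < (q : ℝ)⁻¹) :
    (q : ℝ)⁻¹ ≤ (Finset.univ.filter fun u : (ZMod q)ˣ ↦ ε < |localBias ℓ q u|).card /
      Fintype.card (ZMod q)ˣ := by
  have hprime : q.Prime := Fact.out
  have hcop : ℓ.Coprime q := (Nat.coprime_of_lt_prime hℓ.ne' (by lia) hprime).symm
  have hne : (ℓ : ZMod q) ≠ -ℓ := by
    rw [Ne, natCast_eq_neg_natCast_iff_dvd_add]
    exact Nat.not_dvd_of_pos_of_lt (by lia) (by lia)
  have hmem : ε < |localBias ℓ q (ZMod.unitOfCoprime ℓ hcop)| := by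
    rw [ZMod.coe_unitOfCoprime, localBias, if_pos rfl, if_neg hne, sub_zero]
    exact hε.trans_le ((inv_le_logEulerFactor hprime.two_le).trans (le_abs_self _))
  have hcard : (1 : ℝ) ≤ (Finset.univ.filter fun u : (ZMod q)ˣ ↦ ε < |localBias ℓ q u|).card :=
    Nat.one_le_cast.2 (Finset.card_pos.2 ⟨_, (Finset.mem_filter_univ _).2 hmem⟩)
  rw [inv_eq_one_div]
  refine div_le_div₀ (Nat.cast_nonneg _) hcard (Nat.cast_pos.2 Fintype.card_pos) ?_
  rw [ZMod.card_units_eq_totient]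
  exact_mod_cast q.totient_le

lemma card_few_large_localBias_le {ℓ y z K : ℕ} (hℓ : 0 < ℓ) (hzy : z ≤ y) {ε : ℝ}
    (hε : ε < (z : ℝ)⁻¹) :
    ((Finset.univ.filter fun u : ∀ q : Nat.primesLE y, (ZMod q)ˣ ↦
        (Finset.univ.filter fun q : Nat.primesLE y ↦ ε < |localBias ℓ q (u q)|).card < K).card :
          ℝ) ≤
      2 ^ K * Real.exp (-(∑ q ∈ (Nat.primesLE z).filter (2 * ℓ < ·), (q : ℝ)⁻¹) / 2) *
        Fintype.card (∀ q : Nat.primesLE y, (ZMod q)ˣ) := by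
  set E : ∀ q : Nat.primesLE y, Finset (ZMod q)ˣ := fun q ↦
    Finset.univ.filter fun u ↦ ε < |localBias ℓ q u|
  have hE := card_few_hits_le E K
  simp only [E, Finset.mem_filter_univ] at hE
  refine hE.trans ?_
  gcongr
  have hsub : (Nat.primesLE z).filter (2 * ℓ < ·) ⊆ Nat.primesLE y := fun q hq ↦
    Nat.mem_primesLE.2 ⟨(Nat.le_of_mem_primesLE (Finset.mem_filter.1 hq).1).trans hzy,
      Nat.prime_of_mem_primesLE (Finset.mem_filter.1 hq).1⟩
  rw [← Finset.filter_true_of_mem hsub, ← Finset.sum_subtype_eq_sum_filter]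
  refine (Finset.sum_le_sum fun q hq ↦ ?_).trans
    (Finset.sum_le_univ_sum_of_nonneg fun q ↦ by positivity)
  obtain ⟨hqz, hq⟩ := Finset.mem_filter.1 (Finset.mem_subtype.1 hq)
  refine inv_le_card_lt_abs_localBias_div hℓ hq (hε.trans_le (inv_anti₀ ?_ ?_))
  · exact Nat.cast_pos.2 (Nat.prime_of_mem_primesLE hqz).pos
  · exact Nat.cast_le.2 (Nat.le_of_mem_primesLE hqz)

theorem exists_eventually_card_abs_sum_localBias_le {ℓ : ℕ} (hℓ : 0 < ℓ) {δ : ℝ} (hδ : 0 < δ) :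
    ∃ ε > 0, ∀ᶠ y in atTop,
      ((Finset.univ.filter fun u : ∀ q : Nat.primesLE y, (ZMod q)ˣ ↦
        |∑ q : Nat.primesLE y, localBias ℓ q (u q)| ≤ ε).card : ℝ) ≤
        δ * Fintype.card (∀ q : Nat.primesLE y, (ZMod q)ˣ) := by
  obtain ⟨K, hK, hKδ⟩ : ∃ K : ℕ, 0 < K ∧ (√K)⁻¹ ≤ δ / 2 := by
    have hlim : Tendsto (fun K : ℕ ↦ (√(K : ℝ))⁻¹) atTop (𝓝 0) :=
      (Real.tendsto_sqrt_atTop.comp tendsto_natCast_atTop_atTop).inv_tendsto_atTop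
    exact ((eventually_gt_atTop 0).and (hlim.eventually_le_const (half_pos hδ))).exists
  obtain ⟨z, hz₀, hz⟩ : ∃ z : ℕ, 0 < z ∧
      2 ^ K * Real.exp (-(∑ q ∈ (Nat.primesLE z).filter (2 * ℓ < ·), (q : ℝ)⁻¹) / 2) ≤ δ / 2 := by
    have hlim := (Real.tendsto_exp_neg_atTop_nhds_zero.comp
      ((tendsto_sum_inv_primesLE (2 * ℓ)).atTop_div_const two_pos)).const_mul ((2 : ℝ) ^ K)
    rw [mul_zero] at hlim
    simpa only [neg_div, Function.comp_apply] using
      ((eventually_gt_atTop 0).and (hlim.eventually_le_const (half_pos hδ))).exists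
  have hε : (z + 1 : ℝ)⁻¹ < (z : ℝ)⁻¹ := inv_strictAnti₀ (Nat.cast_pos.2 hz₀) (lt_add_one _)
  refine ⟨(z + 1 : ℝ)⁻¹, by positivity, ?_⟩
  filter_upwards [eventually_ge_atTop z] with y hzy
  have hflip := card_abs_sum_le (fun (q : Nat.primesLE y) (u : (ZMod q)ˣ) ↦ localBias ℓ q u)
    (fun q u ↦ localBias_neg ℓ q u) (z + 1 : ℝ)⁻¹ hK
  have hfew := card_few_large_localBias_le (K := K) hℓ hzy hε
  refine (hflip.trans (add_le_add_right hfew _)).trans ?_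
  rw [← add_mul]
  gcongr
  linarith

end BiasAntiConcentration

section TotientComparison

open Real

lemma eventually_primeFraction_le_add {A Q T : ℕ → Prop} (h : ∀ᶠ p in atTop, A p → Q p ∨ T p)
    {δ : ℝ} (hδ : 0 < δ) :
    ∀ᶠ x in atTop, primeFraction A x ≤ primeFraction Q x + primeFraction T x + δ := by
  obtain ⟨N, hN⟩ := eventually_atTop.1 h
  filter_upwards [(tendsto_primeFraction_le_const N).eventually_le_const hδ] with x hx
  calc primeFraction A x ≤ primeFraction (fun p ↦ (Q p ∨ T p) ∨ p ≤ N) x :=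
        primeFraction_le_of_imp fun p _ hA ↦
          or_iff_not_imp_right.2 fun hp ↦ hN p (not_le.1 hp).le hA
    _ ≤ primeFraction (fun p ↦ Q p ∨ T p) x + primeFraction (· ≤ N) x :=
        primeFraction_or_le _ _ x
    _ ≤ primeFraction Q x + primeFraction T x + δ :=
        add_le_add (primeFraction_or_le _ _ x) hx

lemma tendsto_primeFraction_one_half {Q : ℕ → Prop}
    (hQ : ∀ δ > 0, ∀ᶠ x in atTop, 1 / 2 - δ ≤ primeFraction Q x)
    (hQnot : ∀ δ > 0, ∀ᶠ x in atTop, 1 / 2 - δ ≤ primeFraction (fun p ↦ ¬Q p) x) :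
    Tendsto (primeFraction Q) atTop (𝓝 (1 / 2)) := by
  refine tendsto_order.2 ⟨fun a ha ↦ ?_, fun b hb ↦ ?_⟩
  · filter_upwards [hQ ((1 / 2 - a) / 2) (by linarith)] with x hx
    linarith
  · filter_upwards [hQnot ((b - 1 / 2) / 2) (by linarith), eventually_ge_atTop 2] with x hx hx₂
    linarith [primeFraction_add_not Q hx₂]

/-- The contribution of the primes `q ≤ y` to `log (φ (p + ℓ) / φ (p - ℓ))`. -/
noncomputable def truncatedBias (ℓ y p : ℕ) : ℝ := ∑ q ∈ Nat.primesLE y, localBias ℓ q p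

lemma abs_sum_localBias_sub_truncatedBias_le {ℓ y p : ℕ} (hy : y ≤ 2 * p) :
    |∑ q ∈ Nat.primesLE (2 * p), localBias ℓ q p - truncatedBias ℓ y p| ≤ biasTail ℓ y p := by
  have hle : (Nat.primesLE (2 * p)).filter (¬y < ·) = Nat.primesLE y := by
    ext q
    simp only [Finset.mem_filter, Nat.mem_primesLE, not_lt]
    exact ⟨fun h ↦ ⟨h.2, h.1.2⟩, fun h ↦ ⟨⟨h.1.trans hy, h.2⟩, h.1⟩⟩
  rw [truncatedBias, ← Finset.sum_filter_add_sum_filter_not (Nat.primesLE (2 * p)) (y < ·), hle,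
    add_sub_cancel_right]
  exact Finset.abs_sum_le_sum_abs _ _

lemma eventually_abs_log_totient_sub_truncatedBias_le (ℓ y : ℕ) {ε : ℝ} (hε : 0 < ε) :
    ∀ᶠ p : ℕ in atTop, |log (p + ℓ).totient - log (p - ℓ).totient - truncatedBias ℓ y p| ≤
      ε + biasTail ℓ y p := by
  have hlog := (tendsto_log_add_sub_log_sub ℓ).abs
  rw [abs_zero] at hlog
  filter_upwards [hlog.eventually_le_const hε, eventually_gt_atTop ℓ, eventually_ge_atTop y]
    with p hp hℓ hy
  rw [log_totient_add_sub_log_totient_sub hℓ (by lia : p + ℓ ≤ 2 * p), add_sub_assoc]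
  exact (abs_add_le _ _).trans
    (add_le_add hp (abs_sum_localBias_sub_truncatedBias_le (by lia)))

lemma totient_sub_lt_totient_add_iff {ℓ p : ℕ} (hp : ℓ < p) :
    (p - ℓ).totient < (p + ℓ).totient ↔ 0 < log (p + ℓ).totient - log (p - ℓ).totient := by
  rw [sub_pos, log_lt_log_iff, Nat.cast_lt] <;>
    exact Nat.cast_pos.2 (Nat.totient_pos.2 (by lia))

lemma eventually_totient_lt_of_lt_truncatedBias (ℓ y : ℕ) {ε : ℝ} (hε : 0 < ε) :
    ∀ᶠ p : ℕ in atTop, 2 * ε < truncatedBias ℓ y p →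
      (ℓ < p ∧ (p - ℓ).totient < (p + ℓ).totient) ∨ (ℓ < p ∧ ε < biasTail ℓ y p) := by
  filter_upwards [eventually_abs_log_totient_sub_truncatedBias_le ℓ y hε, eventually_gt_atTop ℓ]
    with p hp hℓ hS
  refine or_iff_not_imp_right.2 fun htail ↦ ⟨hℓ, (totient_sub_lt_totient_add_iff hℓ).2 ?_⟩
  have htail : biasTail ℓ y p ≤ ε := not_lt.1 fun h ↦ htail ⟨hℓ, h⟩
  linarith [(abs_le.1 hp).1]

lemma eventually_not_totient_lt_of_truncatedBias_lt (ℓ y : ℕ) {ε : ℝ} (hε : 0 < ε) :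
    ∀ᶠ p : ℕ in atTop, truncatedBias ℓ y p < -(2 * ε) →
      (¬(ℓ < p ∧ (p - ℓ).totient < (p + ℓ).totient)) ∨ (ℓ < p ∧ ε < biasTail ℓ y p) := by
  filter_upwards [eventually_abs_log_totient_sub_truncatedBias_le ℓ y hε, eventually_gt_atTop ℓ]
    with p hp hℓ hS
  refine or_iff_not_imp_right.2 fun htail hlt ↦ ?_
  have hpos := (totient_sub_lt_totient_add_iff hℓ).1 hlt.2
  have htail : biasTail ℓ y p ≤ ε := not_lt.1 fun h ↦ htail ⟨hℓ, h⟩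
  linarith [(abs_le.1 hp).2]

theorem tendsto_primeFraction_truncatedBias (ℓ y : ℕ) (P : ℝ → Prop) [DecidablePred P] :
    Tendsto (primeFraction fun p ↦ P (truncatedBias ℓ y p)) atTop
      (𝓝 ((Finset.univ.filter fun u : ∀ q : Nat.primesLE y, (ZMod q)ˣ ↦
        P (∑ q : Nat.primesLE y, localBias ℓ q (u q))).card /
          Fintype.card (∀ q : Nat.primesLE y, (ZMod q)ˣ))) := by
  have hS (p : ℕ) : truncatedBias ℓ y p = ∑ q : Nat.primesLE y, localBias ℓ q p :=
    (Finset.sum_coe_sort (Nat.primesLE y) fun q ↦ localBias ℓ q p).symm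
  simp only [hS]
  exact tendsto_primeFraction_pi_zmod (Nat.primesLE y) (fun q ↦ Nat.prime_of_mem_primesLE)
    fun a ↦ P (∑ q : Nat.primesLE y, localBias ℓ q (a q))

lemma card_sum_localBias_lt_neg (ℓ y : ℕ) (ε : ℝ) :
    (Finset.univ.filter fun u : ∀ q : Nat.primesLE y, (ZMod q)ˣ ↦
        ∑ q : Nat.primesLE y, localBias ℓ q (u q) < -ε).card =
      (Finset.univ.filter fun u : ∀ q : Nat.primesLE y, (ZMod q)ˣ ↦
        ε < ∑ q : Nat.primesLE y, localBias ℓ q (u q)).card :=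
  Finset.card_equiv (Equiv.neg _) fun u ↦ by
    simp only [Finset.mem_filter_univ, Equiv.neg_apply, Pi.neg_apply, Units.val_neg,
      localBias_neg, Finset.sum_neg_distrib, lt_neg]

lemma half_sub_le_card_lt_div_card {Ω : Type*} [Fintype Ω] [Nonempty Ω] {f : Ω → ℝ} {ε δ : ℝ}
    (hsymm : (Finset.univ.filter (f · < -ε)).card = (Finset.univ.filter (ε < f ·)).card)
    (hsmall : ((Finset.univ.filter (|f ·| ≤ ε)).card : ℝ) ≤ 2 * δ * Fintype.card Ω) :
    1 / 2 - δ ≤ ((Finset.univ.filter (ε < f ·)).card : ℝ) / Fintype.card Ω := by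
  classical
  have hlarge : (Finset.univ.filter (¬|f ·| ≤ ε)).card ≤
      (Finset.univ.filter (ε < f ·)).card + (Finset.univ.filter (f · < -ε)).card := by
    simp only [not_le, lt_abs, lt_neg, Finset.filter_or]
    exact Finset.card_union_le _ _
  have hcard := Finset.card_filter_add_card_filter_not (s := Finset.univ) (|f ·| ≤ ε)
  rw [Finset.card_univ] at hcard
  rw [hsymm] at hlarge
  have hcover : (Fintype.card Ω : ℝ) ≤ (Finset.univ.filter (|f ·| ≤ ε)).card +
      2 * (Finset.univ.filter (ε < f ·)).card := by
    exact_mod_cast (by lia)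
  rw [le_div_iff₀ (Nat.cast_pos.2 Fintype.card_pos)]
  linarith

theorem exists_eventually_primeFraction_truncatedBias_ge {ℓ : ℕ} (hℓ : 0 < ℓ) {δ : ℝ}
    (hδ : 0 < δ) :
    ∃ ε > 0, ∀ᶠ y in atTop, ∀ᶠ x in atTop,
      1 / 2 - δ ≤ primeFraction (fun p ↦ ε < truncatedBias ℓ y p) x ∧
        1 / 2 - δ ≤ primeFraction (fun p ↦ truncatedBias ℓ y p < -ε) x := by
  obtain ⟨ε, hε, hsmall⟩ := exists_eventually_card_abs_sum_localBias_le hℓ hδ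
  refine ⟨ε, hε, ?_⟩
  filter_upwards [hsmall] with y hy
  have hpos := tendsto_primeFraction_truncatedBias ℓ y (ε < ·)
  have hneg := tendsto_primeFraction_truncatedBias ℓ y (· < -ε)
  rw [card_sum_localBias_lt_neg] at hneg
  have hhalf : 1 / 2 - δ < _ := (sub_lt_sub_left (half_lt_self hδ) _).trans_le
    (half_sub_le_card_lt_div_card (card_sum_localBias_lt_neg ℓ y ε)
      (by rwa [mul_div_cancel₀ _ two_ne_zero]))
  exact (hpos.eventually_const_le hhalf).and (hneg.eventually_const_le hhalf)

theorem eventually_half_sub_le_primeFraction_totient_lt {ℓ : ℕ} (hℓ : 0 < ℓ) {δ : ℝ}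
    (hδ : 0 < δ) :
    ∀ᶠ x in atTop,
      1 / 2 - δ ≤ primeFraction (fun p ↦ ℓ < p ∧ (p - ℓ).totient < (p + ℓ).totient) x ∧
      1 / 2 - δ ≤ primeFraction (fun p ↦ ¬(ℓ < p ∧ (p - ℓ).totient < (p + ℓ).totient)) x := by
  have hδ₃ : 0 < δ / 3 := by positivity
  obtain ⟨ε, hε, hbias⟩ := exists_eventually_primeFraction_truncatedBias_ge hℓ hδ₃
  have hε₂ : 0 < ε / 2 := half_pos hε
  obtain ⟨y, hy, htail⟩ := (hbias.and (eventually_primeFraction_biasTail_le hℓ hε₂ hδ₃)).exists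
  have hpos := eventually_totient_lt_of_lt_truncatedBias ℓ y hε₂
  have hneg := eventually_not_totient_lt_of_truncatedBias_lt ℓ y hε₂
  rw [mul_div_cancel₀ _ two_ne_zero] at hpos hneg
  filter_upwards [hy, htail, eventually_primeFraction_le_add hpos hδ₃,
    eventually_primeFraction_le_add hneg hδ₃] with x hbias htail hpos hneg
  constructor <;> linarith

end TotientComparison

theorem phi_diff_negative_density (ℓ : ℕ) (hℓ : 0 < ℓ) :
    Tendsto (fun x : ℕ =>
      ({p : ℕ | p.Prime ∧ p ≤ x ∧ ℓ < p ∧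
          Nat.totient (p - ℓ) < Nat.totient (p + ℓ)}.ncard : ℝ) /
        (Nat.primeCounting x : ℝ)) atTop (𝓝 (1 / 2)) := by
  have hdensity := tendsto_primeFraction_one_half
    (fun δ hδ ↦ (eventually_half_sub_le_primeFraction_totient_lt hℓ hδ).mono fun _ ↦ And.left)
    (fun δ hδ ↦ (eventually_half_sub_le_primeFraction_totient_lt hℓ hδ).mono fun _ ↦ And.right)
  refine hdensity.congr fun x ↦ ?_
  rw [primeFraction_eq, ← Set.ncard_coe_finset]
  congr 3
  ext p
  simp only [Finset.coe_filter, Nat.mem_primesLE, Set.mem_ofPred_eq]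
  tauto
end

section
/- For each positive integer ℓ, the number of primes p ≤ x with p > ℓ and φ(p−ℓ) = φ(p+ℓ) is o(π(x)); that is, #{p ≤ x : p prime, p > ℓ, φ(p−ℓ) = φ(p+ℓ)} / π(x) tends to 0 as x tends to infinity. -/
open Filter Topology

/-!
If `φ(p - ℓ) = φ(p + ℓ)`, then comparing the Euler products `φ(n) / n = ∏_{q ∣ n} (1 - 1/q)` shows
that `∑_q X_q(p)` is close to `0`, where `X_q(p) = ± (-log (1 - 1/q))` if `p ≡ ± ℓ mod q` and
`X_q(p) = 0` otherwise. By the Brun–Titchmarsh inequality the primes `q > y` contribute little for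
most `p`, uniformly as `y` grows. For fixed `y`, Brun–Titchmarsh modulo `∏_{q ≤ y} q` bounds the
number of `p ≤ x` with prescribed residues by a constant times its expected value, so that up to
this constant the `X_q(p)`, `q ≤ y`, may be treated as independent symmetric random variables.
Conditionally on their absolute values only the signs are random, and by Littlewood–Offord the sum
is rarely small once many of the `X_q` are nonzero; the latter happens with high probability
because `∑ 1/q` diverges.
-/

namespace ShiftedTotient

open Finset

section Selberg

open ArithmeticFunction
open scoped ArithmeticFunction.Moebius

theorem sum_moebius_divisors_filter_dvd {l : ℕ} (hl : Squarefree l) (j : ℕ) :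
    ∑ d ∈ l.divisors with j ∣ d, μ d = if j = l then μ l else 0 := by
  by_cases hjl : j ∣ l
  · obtain ⟨k, rfl⟩ := hjl
    have hj0 : j ≠ 0 := left_ne_zero_of_mul hl.ne_zero
    have hmultiples : {d ∈ (j * k).divisors | j ∣ d} = k.divisors.image (j * ·) := by
      ext d
      simp only [mem_filter, mem_image, Nat.mem_divisors]
      constructor
      · rintro ⟨⟨hdvd, hne⟩, e, rfl⟩
        exact ⟨e, ⟨Nat.dvd_of_mul_dvd_mul_left hj0.pos hdvd, right_ne_zero_of_mul hne⟩, rfl⟩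
      · rintro ⟨e, ⟨hek, hk0⟩, rfl⟩
        exact ⟨⟨mul_dvd_mul_left j hek, mul_ne_zero hj0 hk0⟩, dvd_mul_right j e⟩
    have hcop : j.Coprime k := Nat.coprime_of_squarefree_mul hl
    calc ∑ d ∈ (j * k).divisors with j ∣ d, μ d = ∑ e ∈ k.divisors, μ (j * e) := by
          rw [hmultiples, sum_image fun _ _ _ _ h ↦ Nat.eq_of_mul_eq_mul_left hj0.pos h]
      _ = μ j * ∑ e ∈ k.divisors, μ e := by
          rw [mul_sum]
          refine sum_congr rfl fun e he ↦ isMultiplicative_moebius.map_mul_of_coprime ?_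
          exact hcop.coprime_dvd_right (Nat.dvd_of_mem_divisors he)
      _ = if j = j * k then μ (j * k) else 0 := by
          rw [← coe_mul_zeta_apply, moebius_mul_coe_zeta, one_apply]
          by_cases hk : k = 1
          · simp [hk]
          · simp [hk, hj0]
  · rw [if_neg (fun h ↦ hjl h.dvd), filter_false_of_mem, sum_empty]
    exact fun d hd hjd ↦ hjl (hjd.trans (Nat.dvd_of_mem_divisors hd))

variable (s : SelbergSieve)

/-- The divisors of the sifting modulus up to the level: the support of Selberg's weights. -/
noncomputable def levelDivisors : Finset ℕ :=
  {d ∈ s.prodPrimes.divisors | (d : ℝ) ≤ s.level}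

/-- The sum `S = ∑ g(l)` over `levelDivisors s`, whose inverse is the density factor in the main
term of Selberg's sieve. -/
noncomputable def selbergSum : ℝ := ∑ l ∈ levelDivisors s, s.selbergTerms l

/-- Selberg's weights, the minimiser of the quadratic form `mainSum (lambdaSquared w)` subject to
`w 1 = 1`. -/
noncomputable def selbergWeight (d : ℕ) : ℝ :=
  μ d / s.nu d * (∑ l ∈ levelDivisors s with d ∣ l, s.selbergTerms l) / selbergSum s

variable {s} {d : ℕ}

theorem dvd_of_mem_levelDivisors (hd : d ∈ levelDivisors s) : d ∣ s.prodPrimes :=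
  Nat.dvd_of_mem_divisors (mem_filter.1 hd).1

variable (s) in
theorem selbergSum_pos : 0 < selbergSum s := by
  refine sum_pos (fun l hl ↦ s.selbergTerms_pos (dvd_of_mem_levelDivisors hl)) ⟨1, ?_⟩
  simp [levelDivisors, s.prodPrimes_ne_zero, s.one_le_level]

variable (s) in
theorem selbergWeight_one : selbergWeight s 1 = 1 := by
  have hall : ∑ l ∈ levelDivisors s with 1 ∣ l, s.selbergTerms l = selbergSum s := by
    simp only [one_dvd, filter_true, selbergSum]
  rw [selbergWeight, hall, s.nu_mult.map_one, moebius_apply_one, Int.cast_one, div_one, one_mul,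
    div_self (selbergSum_pos s).ne']

theorem abs_selbergWeight_le (hd : d ∣ s.prodPrimes) : |selbergWeight s d| ≤ (s.nu d)⁻¹ := by
  have hterms (l) (hl : l ∈ levelDivisors s) : 0 ≤ s.selbergTerms l :=
    (s.selbergTerms_pos (dvd_of_mem_levelDivisors hl)).le
  have hpartial : ∑ l ∈ levelDivisors s with d ∣ l, s.selbergTerms l ≤ selbergSum s :=
    sum_le_sum_of_subset_of_nonneg (filter_subset _ _) fun l hl _ ↦ hterms l hl
  have hpartial_nonneg : 0 ≤ ∑ l ∈ levelDivisors s with d ∣ l, s.selbergTerms l :=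
    sum_nonneg fun l hl ↦ hterms l (mem_filter.1 hl).1
  have hmoebius : |(μ d : ℝ)| ≤ 1 := mod_cast abs_moebius_le_one
  have hnu := s.nu_pos_of_dvd_prodPrimes hd
  have hS := selbergSum_pos s
  rw [selbergWeight, abs_div, abs_mul, abs_div, abs_of_pos hnu, abs_of_pos hS,
    abs_of_nonneg hpartial_nonneg, mul_div_assoc, inv_eq_one_div, ← mul_one (1 / s.nu d)]
  gcongr
  exact (div_le_one hS).2 hpartial

theorem selbergWeight_eq_zero (hd : d ∣ s.prodPrimes) (hdL : d ∉ levelDivisors s) :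
    selbergWeight s d = 0 := by
  have hempty : {l ∈ levelDivisors s | d ∣ l} = ∅ := by
    refine filter_false_of_mem fun l hl hdl ↦ hdL ?_
    refine mem_filter.2 ⟨Nat.mem_divisors.2 ⟨hd, s.prodPrimes_ne_zero⟩, ?_⟩
    refine le_trans ?_ (mem_filter.1 hl).2
    exact mod_cast Nat.le_of_dvd (Nat.pos_of_mem_divisors (mem_filter.1 hl).1) hdl
  rw [selbergWeight, hempty, sum_empty, mul_zero, zero_div]

theorem sum_nu_mul_selbergWeight (j : ℕ) :
    (∑ d ∈ s.prodPrimes.divisors, if j ∣ d then s.nu d * selbergWeight s d else 0) =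
      if j ∈ levelDivisors s then μ j * s.selbergTerms j / selbergSum s else 0 := by
  have hterm (d) (hd : d ∈ s.prodPrimes.divisors) :
      (if j ∣ d then s.nu d * selbergWeight s d else 0) =
        ∑ l ∈ levelDivisors s,
          if d ∣ l ∧ j ∣ d then μ d * (s.selbergTerms l / selbergSum s) else 0 := by
    have hnu := s.nu_ne_zero (Nat.dvd_of_mem_divisors hd)
    by_cases hjd : j ∣ d
    · simp only [hjd, if_true, and_true, ← sum_filter, ← mul_sum, ← sum_div, selbergWeight]
      field_simp
    · simp [hjd]
  have hinner (l) (hl : l ∈ levelDivisors s) :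
      (∑ d ∈ s.prodPrimes.divisors,
        if d ∣ l ∧ j ∣ d then (μ d : ℝ) * (s.selbergTerms l / selbergSum s) else 0) =
        if j = l then μ l * (s.selbergTerms l / selbergSum s) else 0 := by
    have hlP := dvd_of_mem_levelDivisors hl
    rw [← sum_filter, ← filter_filter, Nat.divisors_filter_dvd_of_dvd s.prodPrimes_ne_zero hlP,
      ← sum_mul, ← Int.cast_sum,
      sum_moebius_divisors_filter_dvd (s.squarefree_of_dvd_prodPrimes hlP)]
    split_ifs <;> simp
  rw [sum_congr rfl hterm, sum_comm, sum_congr rfl hinner, sum_ite_eq]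
  simp only [mul_div_assoc]

variable (s) in
theorem mainSum_selbergWeight :
    s.mainSum (BoundingSieve.lambdaSquared (selbergWeight s)) = (selbergSum s)⁻¹ := by
  have hsquare (j) (hj : j ∈ levelDivisors s) :
      (s.selbergTerms j)⁻¹ * (μ j * s.selbergTerms j / selbergSum s) ^ 2 =
        s.selbergTerms j / selbergSum s ^ 2 := by
    have hjP := dvd_of_mem_levelDivisors hj
    have hmoebius : (μ j : ℝ) ^ 2 = 1 :=
      mod_cast moebius_sq_eq_one_of_squarefree (s.squarefree_of_dvd_prodPrimes hjP)
    have hg := (s.selbergTerms_pos hjP).ne'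
    rw [div_pow, mul_pow, hmoebius]
    field_simp
  calc s.mainSum (BoundingSieve.lambdaSquared (selbergWeight s))
      = ∑ j ∈ levelDivisors s,
          (s.selbergTerms j)⁻¹ * (μ j * s.selbergTerms j / selbergSum s) ^ 2 := by
        simp only [s.mainSum_lambdaSquared_eq_sum_mul_sum_sq, sum_nu_mul_selbergWeight, ite_pow,
          mul_ite, ne_eq, OfNat.ofNat_ne_zero, not_false_eq_true, zero_pow, mul_zero]
        rw [sum_ite_mem, show s.prodPrimes.divisors ∩ levelDivisors s = levelDivisors s from
          inter_eq_right.2 (filter_subset _ _)]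
    _ = selbergSum s / selbergSum s ^ 2 := by rw [sum_congr rfl hsquare, ← sum_div, selbergSum]
    _ = (selbergSum s)⁻¹ := by rw [sq, div_self_mul_self']

theorem abs_lambdaSquared_selbergWeight_le (hd : d ∣ s.prodPrimes) :
    |BoundingSieve.lambdaSquared (selbergWeight s) d| ≤
      ∑ x ∈ levelDivisors s ×ˢ levelDivisors s with x.1.lcm x.2 = d,
        (s.nu x.1 * s.nu x.2)⁻¹ := by
  have hterm (x) (hx : x ∈ d.divisors ×ˢ d.divisors) :
      |if d = x.1.lcm x.2 then selbergWeight s x.1 * selbergWeight s x.2 else 0| ≤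
        if x ∈ levelDivisors s ×ˢ levelDivisors s ∧ x.1.lcm x.2 = d
          then (s.nu x.1 * s.nu x.2)⁻¹ else 0 := by
    have hx₁ := (Nat.dvd_of_mem_divisors (mem_product.1 hx).1).trans hd
    have hx₂ := (Nat.dvd_of_mem_divisors (mem_product.1 hx).2).trans hd
    by_cases hlcm : d = x.1.lcm x.2
    swap
    · simp [hlcm, Ne.symm hlcm]
    by_cases hx₁L : x.1 ∈ levelDivisors s
    swap
    · simp [selbergWeight_eq_zero hx₁ hx₁L, hx₁L]
    by_cases hx₂L : x.2 ∈ levelDivisors s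
    swap
    · simp [selbergWeight_eq_zero hx₂ hx₂L, hx₂L]
    rw [if_pos hlcm, if_pos ⟨mem_product.2 ⟨hx₁L, hx₂L⟩, hlcm.symm⟩, abs_mul, mul_inv]
    gcongr
    · exact (inv_pos.2 (s.nu_pos_of_dvd_prodPrimes hx₁)).le
    · exact abs_selbergWeight_le hx₁
    · exact abs_selbergWeight_le hx₂
  rw [BoundingSieve.lambdaSquared, ← sum_product']
  refine (abs_sum_le_sum_abs _ _).trans ((sum_le_sum hterm).trans ?_)
  rw [← sum_filter, ← filter_filter]
  refine sum_le_sum_of_subset_of_nonneg (filter_subset_filter _ fun x hx ↦ ?_) fun x hx _ ↦ ?_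
  · exact (mem_filter.1 hx).2
  · obtain ⟨hx₁, hx₂⟩ := mem_product.1 (mem_filter.1 hx).1
    exact inv_nonneg.2 (mul_pos (s.nu_pos_of_dvd_prodPrimes (dvd_of_mem_levelDivisors hx₁))
      (s.nu_pos_of_dvd_prodPrimes (dvd_of_mem_levelDivisors hx₂))).le

variable (s) in
theorem errSum_selbergWeight_le :
    s.errSum (BoundingSieve.lambdaSquared (selbergWeight s)) ≤
      ∑ d ∈ levelDivisors s, ∑ e ∈ levelDivisors s,
        |s.rem (d.lcm e)| / (s.nu d * s.nu e) := by
  have hmaps : ∀ x ∈ levelDivisors s ×ˢ levelDivisors s,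
      x.1.lcm x.2 ∈ s.prodPrimes.divisors := fun x hx ↦ by
    obtain ⟨hx₁, hx₂⟩ := mem_product.1 hx
    exact Nat.mem_divisors.2 ⟨Nat.lcm_dvd (dvd_of_mem_levelDivisors hx₁)
      (dvd_of_mem_levelDivisors hx₂), s.prodPrimes_ne_zero⟩
  calc s.errSum (BoundingSieve.lambdaSquared (selbergWeight s))
      ≤ ∑ d ∈ s.prodPrimes.divisors,
          (∑ x ∈ levelDivisors s ×ˢ levelDivisors s with x.1.lcm x.2 = d,
            (s.nu x.1 * s.nu x.2)⁻¹) * |s.rem d| := by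
        rw [BoundingSieve.errSum]
        gcongr with d hd
        exact abs_lambdaSquared_selbergWeight_le (Nat.dvd_of_mem_divisors hd)
    _ = ∑ d ∈ s.prodPrimes.divisors,
          ∑ x ∈ levelDivisors s ×ˢ levelDivisors s with x.1.lcm x.2 = d,
            |s.rem (x.1.lcm x.2)| / (s.nu x.1 * s.nu x.2) := by
        refine sum_congr rfl fun d _ ↦ ?_
        rw [sum_mul]
        refine sum_congr rfl fun x hx ↦ ?_
        rw [(mem_filter.1 hx).2, div_eq_inv_mul]
    _ = _ := by rw [sum_fiberwise_of_maps_to hmaps, sum_product]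

variable (s) in
theorem siftedSum_le_div_selbergSum_add :
    s.siftedSum ≤ s.totalMass / selbergSum s +
      ∑ d ∈ levelDivisors s, ∑ e ∈ levelDivisors s,
        |s.rem (d.lcm e)| / (s.nu d * s.nu e) := by
  have hupper := BoundingSieve.upperMoebius_lambdaSquared _ (selbergWeight_one s)
  have hsieve := s.siftedSum_le_mainSum_errSum_of_upperMoebius _ hupper
  rw [mainSum_selbergWeight, ← div_eq_mul_inv] at hsieve
  exact hsieve.trans (by gcongr; exact errSum_selbergWeight_le s)

end Selberg

section InverseTotient

open UniqueFactorizationMonoid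

theorem cast_totient_eq_mul_prod (n : ℕ) :
    (n.totient : ℝ) = n * ∏ p ∈ n.primeFactors, (1 - (p : ℝ)⁻¹) := by
  simpa using congrArg (Rat.cast (K := ℝ)) n.totient_eq_mul_prod_factors

theorem sum_inv_le_div_totient {r : ℕ} (hr : r ≠ 0) {T : Finset ℕ}
    (hT : ∀ t ∈ T, t ∈ Nat.factoredNumbers r.primeFactors) :
    ∑ t ∈ T, (t : ℝ)⁻¹ ≤ r / r.totient := by
  let inv : ℕ →* ℝ := (invMonoidHom : ℝ →* ℝ).comp (Nat.castRingHom ℝ : ℕ →* ℝ)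
  have hinv {p : ℕ} (hp : p.Prime) : ‖inv p‖ < 1 := by
    simpa [inv] using inv_lt_one_of_one_lt₀ (Nat.one_lt_cast.2 hp.one_lt)
  have hEuler := (EulerProduct.summable_and_hasSum_factoredNumbers_prod_filter_prime_geometric
    hinv r.primeFactors).2
  rw [filter_true_of_mem fun p hp ↦ Nat.prime_of_mem_primeFactors hp] at hEuler
  calc ∑ t ∈ T, (t : ℝ)⁻¹
      = ∑ t ∈ T.subtype (· ∈ Nat.factoredNumbers r.primeFactors), inv t := by
        rw [sum_subtype_of_mem (fun t ↦ inv t) hT]; rfl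
    _ ≤ ∏ p ∈ r.primeFactors, (1 - inv p)⁻¹ :=
        sum_le_hasSum _ (fun t _ ↦ inv_nonneg.2 (Nat.cast_nonneg (t : ℕ))) hEuler
    _ = r / r.totient := by
        rw [cast_totient_eq_mul_prod, ← div_div, div_self (Nat.cast_ne_zero.2 hr), one_div,
          prod_inv_distrib]
        rfl

/-- The product of the primes dividing `n` but not `m`, for `m ≠ 0`. -/
noncomputable def coprimeRadical (m n : ℕ) : ℕ := radical n / (radical n).gcd m

variable {m : ℕ}

theorem coprimeRadical_dvd_radical (m n : ℕ) : coprimeRadical m n ∣ radical n :=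
  Nat.div_dvd_of_dvd (Nat.gcd_dvd_left _ _)

theorem coprimeRadical_dvd (m n : ℕ) : coprimeRadical m n ∣ n :=
  (coprimeRadical_dvd_radical m n).trans radical_dvd_self

theorem squarefree_coprimeRadical (m n : ℕ) : Squarefree (coprimeRadical m n) :=
  squarefree_radical.squarefree_of_dvd (coprimeRadical_dvd_radical m n)

theorem coprime_coprimeRadical (hm : m ≠ 0) (n : ℕ) : (coprimeRadical m n).Coprime m :=
  Nat.coprime_div_gcd_of_squarefree squarefree_radical hm

theorem primeFactors_coprimeRadical (hm : m ≠ 0) (n : ℕ) :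
    (coprimeRadical m n).primeFactors = n.primeFactors \ m.primeFactors := by
  rw [coprimeRadical, Nat.primeFactors_div_gcd squarefree_radical hm, Nat.primeFactors_radical]

theorem sum_inv_filter_coprimeRadical_le {k : ℕ} (hm : m ≠ 0) (hk : k ≠ 0) (hkm : k.Coprime m)
    {s : Finset ℕ} (hs : 0 ∉ s) :
    ∑ n ∈ s with coprimeRadical m n = k, (n : ℝ)⁻¹ ≤ m / m.totient * (k.totient : ℝ)⁻¹ := by
  have hquot (n) (hn : n ∈ {n ∈ s | coprimeRadical m n = k}) : n = k * (n / k) := by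
    rw [Nat.mul_div_cancel' ((mem_filter.1 hn).2 ▸ coprimeRadical_dvd m n)]
  have hfactored : ∀ t ∈ {n ∈ s | coprimeRadical m n = k}.image (· / k),
      t ∈ Nat.factoredNumbers (k * m).primeFactors := by
    simp only [mem_image]
    rintro _ ⟨n, hn, rfl⟩
    obtain ⟨hns, hnk⟩ := mem_filter.1 hn
    refine Nat.mem_factoredNumbers_of_dvd
      (Nat.mem_factoredNumbers_of_primeFactors_subset (ne_of_mem_of_not_mem hns hs) ?_)
      (Nat.div_dvd_of_dvd (Dvd.intro _ (hquot n hn).symm))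
    rw [Nat.primeFactors_mul hk hm, ← hnk, primeFactors_coprimeRadical hm,
      sdiff_union_self_eq_union]
    exact subset_union_left
  calc ∑ n ∈ s with coprimeRadical m n = k, (n : ℝ)⁻¹
      = (k : ℝ)⁻¹ * ∑ t ∈ {n ∈ s | coprimeRadical m n = k}.image (· / k), (t : ℝ)⁻¹ := by
        rw [sum_image fun n hn n' hn' h ↦ by rw [hquot n hn, hquot n' hn', h], mul_sum]
        refine sum_congr rfl fun n hn ↦ ?_
        rw [← mul_inv, ← Nat.cast_mul, ← hquot n hn]
    _ ≤ (k : ℝ)⁻¹ * ((k * m : ℕ) / (k * m).totient) := by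
        gcongr
        exact sum_inv_le_div_totient (mul_ne_zero hk hm) hfactored
    _ = m / m.totient * (k.totient : ℝ)⁻¹ := by
        have hk0 : (k : ℝ) ≠ 0 := Nat.cast_ne_zero.2 hk
        rw [Nat.totient_mul hkm]
        push_cast
        field_simp

theorem harmonic_le_mul_sum_inv_totient (hm : m ≠ 0) (D : ℕ) :
    (harmonic D : ℝ) ≤ m / m.totient *
      ∑ k ∈ Ioc 0 D with Squarefree k ∧ k.Coprime m, (k.totient : ℝ)⁻¹ := by
  have hmaps : ∀ n ∈ Ioc 0 D,
      coprimeRadical m n ∈ {k ∈ Ioc 0 D | Squarefree k ∧ k.Coprime m} := by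
    intro n hn
    obtain ⟨hn0, hnD⟩ := mem_Ioc.1 hn
    have hdvd := coprimeRadical_dvd m n
    exact mem_filter.2
      ⟨mem_Ioc.2 ⟨Nat.pos_of_dvd_of_pos hdvd hn0, (Nat.le_of_dvd hn0 hdvd).trans hnD⟩,
      squarefree_coprimeRadical m n, coprime_coprimeRadical hm n⟩
  calc (harmonic D : ℝ) = ∑ n ∈ Ioc 0 D, (n : ℝ)⁻¹ := by
        rw [harmonic_eq_sum_Icc]
        push_cast
        rfl
    _ = ∑ k ∈ Ioc 0 D with Squarefree k ∧ k.Coprime m,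
          ∑ n ∈ Ioc 0 D with coprimeRadical m n = k, (n : ℝ)⁻¹ :=
        (sum_fiberwise_of_maps_to hmaps _).symm
    _ ≤ _ := by
        rw [mul_sum]
        refine sum_le_sum fun k hk ↦ ?_
        obtain ⟨hkD, -, hkm⟩ := mem_filter.1 hk
        exact sum_inv_filter_coprimeRadical_le hm (mem_Ioc.1 hkD).1.ne' hkm left_notMem_Ioc

end InverseTotient

section BrunTitchmarsh

theorem abs_card_filter_modEq_sub_le {r : ℕ} (hr : 0 < r) (x a : ℕ) :
    |(#{n ∈ Ioc 0 x | n ≡ a [MOD r]} : ℝ) - x / r| ≤ 1 := by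
  have hcard := Nat.Ioc_filter_modEq_card 0 x hr a
  have hfloor_le : ⌊((0 : ℕ) - a : ℚ) / r⌋ ≤ ⌊(x - a : ℚ) / r⌋ := by gcongr; simp
  rw [max_eq_left (sub_nonneg.2 hfloor_le)] at hcard
  have hdiff : (x - a : ℚ) / r - ((0 : ℕ) - a) / r = x / r := by simp [← sub_div]
  suffices |(#{n ∈ Ioc 0 x | n ≡ a [MOD r]} : ℚ) - x / r| ≤ 1 by
    simpa using (Rat.cast_le (K := ℝ)).2 this
  rw [← Int.cast_natCast (#_), hcard, ← hdiff, abs_le]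
  push_cast
  have := Int.floor_le ((x - a : ℚ) / r)
  have := Int.lt_floor_add_one ((x - a : ℚ) / r)
  have := Int.floor_le (((0 : ℕ) - a : ℚ) / r)
  have := Int.lt_floor_add_one (((0 : ℕ) - a : ℚ) / r)
  constructor <;> linarith

theorem abs_card_filter_modEq_dvd_sub_le {m d : ℕ} (hm : 0 < m) (hd : 0 < d) (hmd : m.Coprime d)
    (x a : ℕ) :
    |(#{n ∈ Ioc 0 x | n ≡ a [MOD m] ∧ d ∣ n} : ℝ) - x / (m * d)| ≤ 1 := by
  obtain ⟨b, hbm, hbd⟩ := Nat.chineseRemainder hmd a 0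
  have hcrt : {n ∈ Ioc 0 x | n ≡ a [MOD m] ∧ d ∣ n} = {n ∈ Ioc 0 x | n ≡ b [MOD m * d]} := by
    refine filter_congr fun n _ ↦ ?_
    rw [← Nat.modEq_and_modEq_iff_modEq_mul hmd, ← Nat.modEq_zero_iff_dvd]
    exact ⟨fun h ↦ ⟨h.1.trans hbm.symm, h.2.trans hbd.symm⟩,
      fun h ↦ ⟨h.1.trans hbm, h.2.trans hbd⟩⟩
  rw [hcrt]
  exact_mod_cast abs_card_filter_modEq_sub_le (Nat.mul_pos hm hd) x b

/-- The sieve of the progression `a mod m` in `(0, x]` by the primes up to `z` not dividing `m`. -/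
@[simps]
noncomputable def progressionSieve (a m x : ℕ) {z : ℝ} (hz : 1 ≤ z) : SelbergSieve where
  support := {n ∈ Ioc 0 x | n ≡ a [MOD m]}
  prodPrimes := primorial ⌊z⌋₊ / (primorial ⌊z⌋₊).gcd m
  prodPrimes_squarefree := (squarefree_primorial _).squarefree_of_dvd
    (Nat.div_dvd_of_dvd (Nat.gcd_dvd_left _ _))
  weights _ := 1
  weights_nonneg _ := zero_le_one
  totalMass := x / m
  nu := ⟨fun n ↦ (n : ℝ)⁻¹, by simp⟩
  nu_mult := ⟨by simp, fun _ ↦ by simp [mul_comm]⟩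
  nu_pos_of_prime p hp _ := by simpa using hp.pos
  nu_lt_one_of_prime p hp _ := inv_lt_one_of_one_lt₀ (Nat.one_lt_cast.2 hp.one_lt)
  level := z
  one_le_level := hz

variable {a m x : ℕ} {z : ℝ} {hz : 1 ≤ z}

theorem coprime_of_dvd_progressionSieve_prodPrimes {d : ℕ} (hm : m ≠ 0)
    (hd : d ∣ (progressionSieve a m x hz).prodPrimes) : d.Coprime m :=
  (Nat.coprime_div_gcd_of_squarefree (squarefree_primorial _) hm).coprime_dvd_left hd

theorem levelDivisors_progressionSieve (hm : m ≠ 0) :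
    levelDivisors (progressionSieve a m x hz) =
      {k ∈ Ioc 0 ⌊z⌋₊ | Squarefree k ∧ k.Coprime m} := by
  ext k
  simp only [levelDivisors, mem_filter, mem_Ioc, Nat.mem_divisors]
  constructor
  · rintro ⟨⟨hkP, hP⟩, hkz⟩
    exact ⟨⟨Nat.pos_of_dvd_of_pos hkP hP.pos, Nat.le_floor hkz⟩,
      BoundingSieve.squarefree_of_dvd_prodPrimes hkP,
      coprime_of_dvd_progressionSieve_prodPrimes hm hkP⟩
  · rintro ⟨⟨hk0, hkz⟩, hksq, hkm⟩
    refine ⟨⟨?_, BoundingSieve.prodPrimes_ne_zero⟩, (Nat.le_floor_iff' hk0.ne').1 hkz⟩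
    have hkprimorial : k ∣ primorial ⌊z⌋₊ :=
      hksq.dvd_primorial.trans (primorial_dvd_primorial hkz)
    refine (Nat.Coprime.coprime_dvd_right (Nat.gcd_dvd_right _ _) hkm).dvd_of_dvd_mul_right
      (n := (primorial ⌊z⌋₊).gcd m) ?_
    rwa [progressionSieve_prodPrimes, Nat.div_mul_cancel (Nat.gcd_dvd_left _ _)]

theorem selbergTerms_progressionSieve (k : ℕ) :
    (progressionSieve a m x hz).selbergTerms k = (k.totient : ℝ)⁻¹ := by
  rw [BoundingSieve.selbergTerms_apply, cast_totient_eq_mul_prod, mul_inv, prod_inv_distrib]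
  rfl

theorem log_le_mul_selbergSum_progressionSieve (hm : m ≠ 0) :
    Real.log z ≤ m / m.totient * selbergSum (progressionSieve a m x hz) := by
  simp only [selbergSum, levelDivisors_progressionSieve hm, selbergTerms_progressionSieve]
  exact (log_le_harmonic_floor z (zero_le_one.trans hz)).trans
    (harmonic_le_mul_sum_inv_totient hm ⌊z⌋₊)

theorem abs_rem_progressionSieve_le {d : ℕ} (hm : m ≠ 0)
    (hd : d ∣ (progressionSieve a m x hz).prodPrimes) :
    |(progressionSieve a m x hz).rem d| ≤ 1 := by
  have hd0 : 0 < d := Nat.pos_of_dvd_of_pos hd BoundingSieve.prodPrimes_ne_zero.pos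
  have hcop := (coprime_of_dvd_progressionSieve_prodPrimes hm hd).symm
  convert abs_card_filter_modEq_dvd_sub_le hm.pos hd0 hcop x a using 2
  simp only [BoundingSieve.rem, BoundingSieve.multSum, progressionSieve_support,
    progressionSieve_weights, progressionSieve_totalMass, ← sum_filter, filter_filter,
    sum_const, nsmul_eq_mul, mul_one]
  change _ - (d : ℝ)⁻¹ * _ = _
  field_simp

theorem siftedSum_progressionSieve_le (hm : m ≠ 0) (hz : 1 < z) :
    (progressionSieve a m x hz.le).siftedSum ≤ x / (m.totient * Real.log z) + z ^ 4 := by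
  set s := progressionSieve a m x hz.le with hs
  have hmain : s.totalMass / selbergSum s ≤ x / (m.totient * Real.log z) := by
    have hS := log_le_mul_selbergSum_progressionSieve (a := a) (x := x) (hz := hz.le) hm
    have htot : (0 : ℝ) < m.totient := Nat.cast_pos.2 (Nat.totient_pos.2 hm.pos)
    have hlog := Real.log_pos hz
    rw [div_mul_eq_mul_div, le_div_iff₀ htot, mul_comm] at hS
    rw [hs, progressionSieve_totalMass, div_div]
    exact div_le_div_of_nonneg_left (Nat.cast_nonneg x) (mul_pos htot hlog) hS
  have hterm (d) (hd : d ∈ levelDivisors s) (e) (he : e ∈ levelDivisors s) :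
      |s.rem (d.lcm e)| / (s.nu d * s.nu e) ≤ z * z := by
    have hrem := abs_rem_progressionSieve_le hm
      (Nat.lcm_dvd (dvd_of_mem_levelDivisors hd) (dvd_of_mem_levelDivisors he))
    have hdz : (d : ℝ) ≤ z := (mem_filter.1 hd).2
    have hez : (e : ℝ) ≤ z := (mem_filter.1 he).2
    calc |s.rem (d.lcm e)| / (s.nu d * s.nu e) = |s.rem (d.lcm e)| * (d * e) := by
          change _ / ((d : ℝ)⁻¹ * (e : ℝ)⁻¹) = _
          rw [← mul_inv, div_inv_eq_mul]
      _ ≤ 1 * (z * z) := by gcongr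
      _ = z * z := one_mul _
  have hcard : (#(levelDivisors s) : ℝ) ≤ z := by
    rw [hs, levelDivisors_progressionSieve hm]
    refine (Nat.cast_le.2 (card_filter_le _ _)).trans ?_
    rw [Nat.card_Ioc, Nat.sub_zero]
    exact Nat.floor_le (zero_le_one.trans hz.le)
  have herr : ∑ d ∈ levelDivisors s, ∑ e ∈ levelDivisors s,
      |s.rem (d.lcm e)| / (s.nu d * s.nu e) ≤ z ^ 4 := by
    calc _ ≤ ∑ _ ∈ levelDivisors s, ∑ _ ∈ levelDivisors s, z * z :=
          sum_le_sum fun d hd ↦ sum_le_sum fun e he ↦ hterm d hd e he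
      _ = #(levelDivisors s) * (#(levelDivisors s) * (z * z)) := by
          simp only [sum_const, nsmul_eq_mul]
      _ ≤ z * (z * (z * z)) := by gcongr
      _ = z ^ 4 := by ring
  exact (siftedSum_le_div_selbergSum_add s).trans (add_le_add hmain herr)

theorem card_primes_modEq_le_add (hm : m ≠ 0) (hz : 1 < z) :
    (#{p ∈ Nat.primesLE x | p ≡ a [MOD m]} : ℝ) ≤ x / (m.totient * Real.log z) + z ^ 4 + z := by
  set s := progressionSieve a m x hz.le
  have hcover : {p ∈ Nat.primesLE x | p ≡ a [MOD m]} ⊆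
      {n ∈ s.support | s.prodPrimes.Coprime n} ∪ Ioc 0 ⌊z⌋₊ := by
    intro p hp
    obtain ⟨hpx, hpa⟩ := mem_filter.1 hp
    obtain ⟨hpx, hprime⟩ := Nat.mem_primesLE.1 hpx
    by_cases hpz : p ≤ ⌊z⌋₊
    · exact mem_union_right _ (mem_Ioc.2 ⟨hprime.pos, hpz⟩)
    · refine mem_union_left _ (mem_filter.2
        ⟨mem_filter.2 ⟨mem_Ioc.2 ⟨hprime.pos, hpx⟩, hpa⟩, ?_⟩)
      refine (hprime.coprime_iff_not_dvd.2 fun hpP ↦ hpz ?_).symm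
      exact hprime.dvd_primorial_iff.1 (hpP.trans (Nat.div_dvd_of_dvd (Nat.gcd_dvd_left _ _)))
  have hsifted : (#{n ∈ s.support | s.prodPrimes.Coprime n} : ℝ) = s.siftedSum := by
    rw [BoundingSieve.siftedSum, ← sum_filter, card_eq_sum_ones, Nat.cast_sum, Nat.cast_one]
    rfl
  have hfloor : (#(Ioc 0 ⌊z⌋₊) : ℝ) ≤ z := by
    rw [Nat.card_Ioc, Nat.sub_zero]
    exact Nat.floor_le (zero_le_one.trans hz.le)
  calc (#{p ∈ Nat.primesLE x | p ≡ a [MOD m]} : ℝ)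
      ≤ #{n ∈ s.support | s.prodPrimes.Coprime n} + #(Ioc 0 ⌊z⌋₊) := by
        exact_mod_cast (card_le_card hcover).trans (card_union_le _ _)
    _ ≤ x / (m.totient * Real.log z) + z ^ 4 + z := by
        rw [hsifted]
        exact add_le_add (siftedSum_progressionSieve_le hm hz) hfloor

theorem brunTitchmarsh (a : ℕ) (hm : m ≠ 0) (hx : 2 ≤ x) :
    (#{p ∈ Nat.primesLE x | p ≡ a [MOD m]} : ℝ) ≤
      8 * x / (m.totient * Real.log x) + 2 * √x := by
  have hx0 : (0 : ℝ) ≤ x := Nat.cast_nonneg x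
  have hx1 : (1 : ℝ) < x := by exact_mod_cast hx
  have hz : 1 < (x : ℝ) ^ (1 / 8 : ℝ) := Real.one_lt_rpow hx1 (by norm_num)
  have hzpow : ((x : ℝ) ^ (1 / 8 : ℝ)) ^ 4 = √x := by
    rw [← Real.rpow_natCast, ← Real.rpow_mul hx0, Real.sqrt_eq_rpow]
    norm_num
  have hzle : (x : ℝ) ^ (1 / 8 : ℝ) ≤ √x := hzpow ▸ le_self_pow₀ hz.le (by norm_num)
  have hlog : Real.log ((x : ℝ) ^ (1 / 8 : ℝ)) = Real.log x / 8 := by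
    rw [Real.log_rpow (zero_lt_one.trans hx1)]
    ring
  have hbound := card_primes_modEq_le_add (a := a) (x := x) hm hz
  rw [hlog, hzpow] at hbound
  calc _ ≤ _ := hbound
    _ ≤ x / (m.totient * (Real.log x / 8)) + √x + √x := by gcongr
    _ = 8 * x / (m.totient * Real.log x) + 2 * √x := by
        rw [two_mul, ← add_assoc, mul_div_assoc', div_div_eq_mul_div, mul_comm (x : ℝ)]

end BrunTitchmarsh

section PrimeTail

/-- The contribution `-log (1 - 1/q)` of a prime factor `q` of `n` to `log (n / φ(n))`. -/
noncomputable def eulerLog (q : ℕ) : ℝ := -Real.log (1 - (q : ℝ)⁻¹)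

theorem log_totient_eq_sub_sum_eulerLog {n : ℕ} (hn : n ≠ 0) :
    Real.log n.totient = Real.log n - ∑ q ∈ n.primeFactors, eulerLog q := by
  have hfactor (q) (hq : q ∈ n.primeFactors) : 1 - (q : ℝ)⁻¹ ≠ 0 :=
    (sub_pos.2 (inv_lt_one_of_one_lt₀
      (Nat.one_lt_cast.2 (Nat.prime_of_mem_primeFactors hq).one_lt))).ne'
  rw [cast_totient_eq_mul_prod, Real.log_mul (Nat.cast_ne_zero.2 hn) (prod_ne_zero_iff.2 hfactor),
    Real.log_prod hfactor]
  simp only [eulerLog, sum_neg_distrib, sub_neg_eq_add]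

theorem inv_le_eulerLog {q : ℕ} (hq : 2 ≤ q) : (q : ℝ)⁻¹ ≤ eulerLog q := by
  have hq1 : (1 : ℝ) < q := by exact_mod_cast hq
  have hlog := Real.log_le_sub_one_of_pos (sub_pos.2 (inv_lt_one_of_one_lt₀ hq1))
  rw [eulerLog]
  linarith

theorem eulerLog_le_two_div {q : ℕ} (hq : 2 ≤ q) : eulerLog q ≤ 2 / q := by
  have hq2 : (2 : ℝ) ≤ q := by exact_mod_cast hq
  have hlog := Real.one_sub_inv_le_log_of_pos
    (sub_pos.2 (inv_lt_one_of_one_lt₀ (one_lt_two.trans_le hq2)))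
  have hinv : (1 - (q : ℝ)⁻¹)⁻¹ - 1 ≤ 2 / q := by
    have hq1 : (0 : ℝ) < q - 1 := by linarith
    have : (1 - (q : ℝ)⁻¹)⁻¹ - 1 = 1 / (q - 1) := by field_simp; ring
    rw [this, div_le_div_iff₀ hq1 (by linarith)]
    linarith
  rw [eulerLog]
  linarith

theorem eulerLog_nonneg {q : ℕ} (hq : 2 ≤ q) : 0 ≤ eulerLog q :=
  (inv_nonneg.2 (Nat.cast_nonneg q)).trans (inv_le_eulerLog hq)

/-- The part of `log (n / φ(n))` contributed by the prime factors of `n` exceeding `y`. -/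
noncomputable def primeTail (y n : ℕ) : ℝ := ∑ q ∈ n.primeFactors with y < q, eulerLog q

theorem primeTail_nonneg (y n : ℕ) : 0 ≤ primeTail y n :=
  sum_nonneg fun _ hq ↦
    eulerLog_nonneg (Nat.prime_of_mem_primeFactors (mem_filter.1 hq).1).two_le

theorem brunTitchmarsh_prime {x q : ℕ} (a : ℕ) (hq : q.Prime) (hx : 2 ≤ x) :
    (#{p ∈ Nat.primesLE x | p ≡ a [MOD q]} : ℝ) ≤ 16 * x / (q * Real.log x) + 2 * √x := by
  have hq2 : (2 : ℝ) ≤ q := by exact_mod_cast hq.two_le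
  have hlog : 0 < Real.log x := Real.log_pos (by exact_mod_cast hx)
  have htotient : (q : ℝ) / 2 ≤ q.totient := by
    rw [Nat.totient_prime hq, Nat.cast_sub hq.one_le, Nat.cast_one]
    linarith
  calc _ ≤ _ := brunTitchmarsh a hq.ne_zero hx
    _ ≤ 8 * x / (q / 2 * Real.log x) + 2 * √x := by gcongr
    _ = 16 * x / (q * Real.log x) + 2 * √x := by field_simp; ring

theorem sum_Ioc_inv_sq_le_inv {y : ℕ} (hy : y ≠ 0) (N : ℕ) :
    ∑ q ∈ Ioc y N, ((q : ℝ) ^ 2)⁻¹ ≤ (y : ℝ)⁻¹ := by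
  rcases le_total y N with hyN | hNy
  · exact (sum_Ioc_inv_sq_le_sub hy hyN).trans (sub_le_self _ (by positivity))
  · rw [Ioc_eq_empty_of_le hNy, sum_empty]
    positivity

theorem sum_Ioc_inv_le_one_add_log (y N : ℕ) :
    ∑ q ∈ Ioc y N, (q : ℝ)⁻¹ ≤ 1 + Real.log N := by
  refine le_trans ?_ (harmonic_le_one_add_log N)
  rw [harmonic_eq_sum_Icc]
  push_cast
  refine sum_le_sum_of_subset_of_nonneg (fun q hq ↦ ?_) fun _ _ _ ↦ by positivity
  obtain ⟨hyq, hqN⟩ := mem_Ioc.1 hq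
  exact mem_Icc.2 ⟨hyq.pos, hqN⟩

theorem sum_primeTail_le {x y N : ℕ} (hx : 2 ≤ x) (hy : y ≠ 0) {P : Finset ℕ}
    (hP : P ⊆ Nat.primesLE x) {f : ℕ → ℕ} (hfN : ∀ p ∈ P, f p ≤ N)
    (hf : ∀ q, ∃ a, ∀ p ∈ P, q ∣ f p → p ≡ a [MOD q]) :
    ∑ p ∈ P, primeTail y (f p) ≤ 32 * x / (y * Real.log x) + 4 * √x * (1 + Real.log N) := by
  have hlog : 0 < Real.log x := Real.log_pos (by exact_mod_cast hx)
  have htail (p) (hp : p ∈ P) : primeTail y (f p) ≤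
      ∑ q ∈ Ioc y N with q.Prime, if q ∣ f p then eulerLog q else 0 := by
    rw [primeTail, ← sum_filter, filter_filter]
    refine sum_le_sum_of_subset_of_nonneg (fun q hq ↦ ?_) fun q hq _ ↦
      eulerLog_nonneg (mem_filter.1 hq).2.1.two_le
    obtain ⟨hqf, hyq⟩ := mem_filter.1 hq
    refine mem_filter.2 ⟨mem_Ioc.2 ⟨hyq, ?_⟩, Nat.prime_of_mem_primeFactors hqf,
      Nat.dvd_of_mem_primeFactors hqf⟩
    exact (Nat.le_of_mem_primeFactors hqf).trans (hfN p hp)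
  have hprime (q) (hq : q ∈ {q ∈ Ioc y N | q.Prime}) :
      (∑ p ∈ P, if q ∣ f p then eulerLog q else 0) ≤
        32 * x / Real.log x * ((q : ℝ) ^ 2)⁻¹ + 4 * √x * (q : ℝ)⁻¹ := by
    have hqprime := (mem_filter.1 hq).2
    obtain ⟨a, ha⟩ := hf q
    have hcard : (#{p ∈ P | q ∣ f p} : ℝ) ≤ 16 * x / (q * Real.log x) + 2 * √x := by
      refine le_trans (Nat.cast_le.2 (card_le_card fun p hp ↦ ?_))
        (brunTitchmarsh_prime a hqprime hx)
      obtain ⟨hpP, hqf⟩ := mem_filter.1 hp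
      exact mem_filter.2 ⟨hP hpP, ha p hpP hqf⟩
    rw [← sum_filter, sum_const, nsmul_eq_mul]
    calc _ ≤ (16 * x / (q * Real.log x) + 2 * √x) * (2 / q) := by
          gcongr
          · exact eulerLog_nonneg hqprime.two_le
          · exact eulerLog_le_two_div hqprime.two_le
      _ = _ := by ring
  calc ∑ p ∈ P, primeTail y (f p)
      ≤ ∑ q ∈ Ioc y N with q.Prime, ∑ p ∈ P, if q ∣ f p then eulerLog q else 0 :=
        (sum_le_sum htail).trans_eq sum_comm
    _ ≤ ∑ q ∈ Ioc y N with q.Prime,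
          (32 * x / Real.log x * ((q : ℝ) ^ 2)⁻¹ + 4 * √x * (q : ℝ)⁻¹) := sum_le_sum hprime
    _ ≤ ∑ q ∈ Ioc y N, (32 * x / Real.log x * ((q : ℝ) ^ 2)⁻¹ + 4 * √x * (q : ℝ)⁻¹) :=
        sum_le_sum_of_subset_of_nonneg (filter_subset _ _) fun _ _ _ ↦ by positivity
    _ ≤ 32 * x / Real.log x * (y : ℝ)⁻¹ + 4 * √x * (1 + Real.log N) := by
        rw [sum_add_distrib, ← mul_sum, ← mul_sum]
        gcongr
        · exact sum_Ioc_inv_sq_le_inv hy N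
        · exact sum_Ioc_inv_le_one_add_log y N
    _ = _ := by ring

theorem mul_card_le_primeTail_le {x y N : ℕ} (hx : 2 ≤ x) (hy : y ≠ 0) {P : Finset ℕ}
    (hP : P ⊆ Nat.primesLE x) {f : ℕ → ℕ} (hfN : ∀ p ∈ P, f p ≤ N)
    (hf : ∀ q, ∃ a, ∀ p ∈ P, q ∣ f p → p ≡ a [MOD q]) (t : ℝ) :
    t * #{p ∈ P | t ≤ primeTail y (f p)} ≤
      32 * x / (y * Real.log x) + 4 * √x * (1 + Real.log N) := by
  calc t * #{p ∈ P | t ≤ primeTail y (f p)}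
      = ∑ p ∈ P with t ≤ primeTail y (f p), t := by rw [sum_const, nsmul_eq_mul, mul_comm]
    _ ≤ ∑ p ∈ P with t ≤ primeTail y (f p), primeTail y (f p) :=
        sum_le_sum fun p hp ↦ (mem_filter.1 hp).2
    _ ≤ ∑ p ∈ P, primeTail y (f p) :=
        sum_le_sum_of_subset_of_nonneg (filter_subset _ _) fun p _ _ ↦ primeTail_nonneg y (f p)
    _ ≤ _ := sum_primeTail_le hx hy hP hfN hf

end PrimeTail

section LittlewoodOfford

theorem centralBinom_sq_mul_le (n : ℕ) : n.centralBinom ^ 2 * (2 * n + 1) ≤ 16 ^ n := by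
  induction n with
  | zero => simp
  | succ n ih =>
    refine Nat.le_of_mul_le_mul_left ?_ (by positivity : 0 < (n + 1) ^ 2)
    calc (n + 1) ^ 2 * ((n + 1).centralBinom ^ 2 * (2 * (n + 1) + 1))
        = ((n + 1) * (n + 1).centralBinom) ^ 2 * (2 * n + 3) := by ring
      _ = 4 * (2 * n + 1) * (2 * n + 3) * (n.centralBinom ^ 2 * (2 * n + 1)) := by
          rw [Nat.succ_mul_centralBinom_succ]; ring
      _ ≤ 4 * (2 * n + 1) * (2 * n + 3) * 16 ^ n := by gcongr
      _ ≤ 16 * (n + 1) ^ 2 * 16 ^ n := Nat.mul_le_mul_right _ (by nlinarith)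
      _ = (n + 1) ^ 2 * 16 ^ (n + 1) := by ring

theorem choose_half_sq_mul_le (k : ℕ) : k.choose (k / 2) ^ 2 * (k + 1) ≤ 4 ^ k := by
  obtain ⟨n, rfl | rfl⟩ := k.even_or_odd'
  · rw [Nat.mul_div_cancel_left _ two_pos, pow_mul]
    exact centralBinom_sq_mul_le n
  · have hcentral : (n + 1).centralBinom = 2 * (2 * n + 1).choose n := by
      rw [Nat.centralBinom_eq_two_mul_choose, mul_add_one, Nat.choose_succ_succ,
        Nat.choose_symm_half]
      ring
    have hbound := centralBinom_sq_mul_le (n + 1)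
    have hpow : (16 : ℕ) ^ (n + 1) = 4 * 4 ^ (2 * n + 1) := by
      rw [← pow_succ', ← mul_add_one 2 n, pow_mul]; norm_num
    rw [hcentral, hpow] at hbound
    rw [show (2 * n + 1) / 2 = n by lia]
    nlinarith

/-- The largest point mass `C(k, ⌊k / 2⌋) / 2 ^ k` of a sum of `k` independent random signs. -/
noncomputable def binomialPeak (k : ℕ) : ℝ := k.choose (k / 2) / 2 ^ k

theorem binomialPeak_le_one (k : ℕ) : binomialPeak k ≤ 1 := by
  rw [binomialPeak, div_le_one (by positivity)]
  exact_mod_cast Nat.choose_le_two_pow k (k / 2)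

theorem binomialPeak_sq_le (k : ℕ) : binomialPeak k ^ 2 ≤ 1 / (k + 1) := by
  rw [binomialPeak, div_pow, div_le_div_iff₀ (by positivity) (by positivity), one_mul,
    pow_right_comm]
  exact_mod_cast choose_half_sq_mul_le k

theorem exists_binomialPeak_le {ε : ℝ} (hε : 0 < ε) :
    ∃ K : ℕ, ∀ k, binomialPeak k ≤ ε + 2 ^ K * (1 / 2) ^ k := by
  obtain ⟨K, hK⟩ := exists_nat_gt (1 / ε ^ 2)
  refine ⟨K, fun k ↦ ?_⟩
  rcases le_total K k with hKk | hkK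
  · have hsq : binomialPeak k ^ 2 ≤ ε ^ 2 := by
      refine (binomialPeak_sq_le k).trans ?_
      rw [one_div_le (by positivity) (by positivity)]
      exact hK.le.trans (by exact_mod_cast hKk.trans k.le_succ)
    exact (le_of_sq_le_sq hsq hε.le).trans (le_add_of_nonneg_right (by positivity))
  · have hpow : (1 : ℝ) ≤ 2 ^ K * (1 / 2) ^ k := by
      rw [one_div, inv_pow, ← div_eq_mul_inv, one_le_div (by positivity)]
      exact pow_le_pow_right₀ one_le_two hkK
    linarith [binomialPeak_le_one k]

variable {ι : Type*} [Fintype ι] [DecidableEq ι] {δ : ℝ}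

theorem abs_units_smul (ε : ℤˣ) (x : ℝ) : |ε • x| = |x| := by
  rcases Int.units_eq_one_or ε with rfl | rfl <;> simp

theorem units_smul_left_injective {x : ℝ} (hx : x ≠ 0) :
    Function.Injective fun ε : ℤˣ ↦ ε • x := by
  intro ε ε' h
  have hcast : ((ε : ℤ) : ℝ) = (ε' : ℤ) :=
    mul_right_cancel₀ hx (by simpa only [Units.smul_def, zsmul_eq_mul] using h)
  exact_mod_cast hcast

-- Erdős: flipping further signs so that more summands become positive moves the sum by `2 * δ`,
-- so the sets of positive summands form an antichain.
theorem card_signs_abs_add_sum_lt_le {x : ι → ℝ} (hx : ∀ i, δ ≤ |x i|) (c : ℝ) :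
    #{ε : ι → ℤˣ | |c + ∑ i, ε i • x i| < δ} ≤
      (Fintype.card ι).choose (Fintype.card ι / 2) := by
  set F : Finset (ι → ℤˣ) := {ε | |c + ∑ i, ε i • x i| < δ}
  have hF {ε} (hε : ε ∈ F) : |c + ∑ i, ε i • x i| < δ := (mem_filter.1 hε).2
  let pos (ε : ι → ℤˣ) : Finset ι := {i | 0 < ε i • x i}
  have hpos {ε i} : i ∈ pos ε ↔ 0 < ε i • x i := mem_filter_univ i
  have hle {ε ε'} (hsub : pos ε ⊆ pos ε') (i) : ε i • x i ≤ ε' i • x i := by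
    have habs : |ε i • x i| = |ε' i • x i| := by simp only [abs_units_smul]
    rcases lt_or_ge 0 (ε i • x i) with h | h
    · rw [← abs_of_pos h, habs, abs_of_pos (hpos.1 (hsub (hpos.2 h)))]
    · rw [← neg_neg (ε i • x i), ← abs_of_nonpos h, habs]
      exact neg_abs_le _
  have hinj : Set.InjOn pos F := by
    intro ε hε ε' _ heq
    have hδ : 0 < δ := (abs_nonneg _).trans_lt (hF hε)
    exact funext fun i ↦ units_smul_left_injective (abs_pos.1 (hδ.trans_le (hx i)))
      ((hle heq.le i).antisymm (hle heq.ge i))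
  rw [← card_image_of_injOn hinj]
  refine IsAntichain.sperner ?_
  simp only [coe_image]
  rintro _ ⟨ε, hε, rfl⟩ _ ⟨ε', hε', rfl⟩ hne hsub
  obtain ⟨j, hj', hj⟩ := exists_of_ssubset (hsub.ssubset_of_ne hne)
  rw [hpos] at hj' hj
  have hjump : 2 * δ ≤ ε' j • x j - ε j • x j := by
    have hxj := abs_of_pos hj' ▸ (abs_units_smul (ε' j) (x j)).ge.trans' (hx j)
    have hxj' := abs_of_nonpos (not_lt.1 hj) ▸ (abs_units_smul (ε j) (x j)).ge.trans' (hx j)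
    linarith
  have hsum : ε' j • x j - ε j • x j ≤ ∑ i, ε' i • x i - ∑ i, ε i • x i := by
    rw [← sum_sub_distrib]
    exact single_le_sum (fun i _ ↦ sub_nonneg.2 (hle hsub i)) (mem_univ j)
  linarith [(abs_lt.1 (hF hε)).1, (abs_lt.1 (hF hε')).2]

theorem card_signs_abs_sum_lt_le (x : ι → ℝ) (δ : ℝ) :
    (#{ε : ι → ℤˣ | |∑ i, ε i • x i| < δ} : ℝ) ≤
      2 ^ Fintype.card ι * binomialPeak #{i | δ ≤ |x i|} := by
  let big (i : ι) : Prop := δ ≤ |x i|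
  let small (ε : ι → ℤˣ) (i : {i // ¬ big i}) : ℤˣ := ε i
  have hfibre (η) : #{ε ∈ {ε : ι → ℤˣ | |∑ i, ε i • x i| < δ} | small ε = η} ≤
      (#{i | big i}).choose (#{i | big i} / 2) := by
    rw [← Fintype.card_subtype]
    refine le_trans (card_le_card_of_injOn (fun ε (i : {i // big i}) ↦ ε i) ?_ ?_)
      (card_signs_abs_add_sum_lt_le (x := fun i : {i // big i} ↦ x i) (fun i ↦ i.2)
        (∑ i, η i • x i))
    · intro ε hε
      simp only [coe_filter, mem_filter, mem_univ, true_and, Set.mem_ofPred_eq] at hε ⊢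
      obtain ⟨hε, rfl⟩ := hε
      rwa [add_comm, Fintype.sum_subtype_add_sum_subtype big fun i ↦ ε i • x i]
    · intro ε hε ε' hε' heq
      have hsmall : small ε = small ε' := (mem_filter.1 hε).2.trans (mem_filter.1 hε').2.symm
      funext i
      by_cases hi : big i
      · exact congrFun heq ⟨i, hi⟩
      · exact congrFun hsmall ⟨i, hi⟩
  have hcard : #{ε : ι → ℤˣ | |∑ i, ε i • x i| < δ} ≤
      (#{i | big i}).choose (#{i | big i} / 2) * 2 ^ #{i | ¬ big i} := by
    refine (card_le_mul_card_image_of_maps_to (fun ε _ ↦ mem_univ (small ε)) _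
      fun η _ ↦ hfibre η).trans_eq ?_
    rw [card_univ, Fintype.card_fun, Fintype.card_units_int, Fintype.card_subtype]
  have hsplit : Fintype.card ι = #{i | big i} + #{i | ¬ big i} :=
    (card_filter_add_card_filter_not big).symm
  calc (#{ε : ι → ℤˣ | |∑ i, ε i • x i| < δ} : ℝ)
      ≤ (#{i | big i}).choose (#{i | big i} / 2) * 2 ^ #{i | ¬ big i} := by exact_mod_cast hcard
    _ = _ := by
        rw [hsplit, pow_add, binomialPeak]
        field_simp
        exact mul_comm _ _

variable {Ω : ι → Type*} [∀ i, Fintype (Ω i)]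

theorem card_abs_sum_lt_le_sum_binomialPeak [∀ i, InvolutiveNeg (Ω i)] {f : ∀ i, Ω i → ℝ}
    (hf : ∀ i u, f i (-u) = -f i u) (δ : ℝ) :
    (#{ω : ∀ i, Ω i | |∑ i, f i (ω i)| < δ} : ℝ) ≤
      ∑ ω : ∀ i, Ω i, binomialPeak #{i | δ ≤ |f i (ω i)|} := by
  have hflip (ε : ι → ℤˣ) : #{ω : ∀ i, Ω i | |∑ i, f i (ω i)| < δ} =
      #{ω : ∀ i, Ω i | |∑ i, ε i • f i (ω i)| < δ} := by
    let e : (∀ i, Ω i) ≃ ∀ i, Ω i :=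
      Equiv.piCongrRight fun i ↦ if ε i = 1 then Equiv.refl _ else Equiv.neg _
    have he (ω i) : ε i • f i (e ω i) = f i (ω i) := by
      rcases Int.units_eq_one_or (ε i) with h | h <;> simp [e, h, hf]
    refine card_equiv e fun ω ↦ ?_
    simp only [mem_filter_univ, he]
  have hcount : (2 : ℝ) ^ Fintype.card ι * #{ω : ∀ i, Ω i | |∑ i, f i (ω i)| < δ} =
      ∑ ω : ∀ i, Ω i, (#{ε : ι → ℤˣ | |∑ i, ε i • f i (ω i)| < δ} : ℝ) := by
    have hswap := sum_card_bipartiteAbove_eq_sum_card_bipartiteBelow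
      (s := univ) (t := univ) fun (ε : ι → ℤˣ) (ω : ∀ i, Ω i) ↦ |∑ i, ε i • f i (ω i)| < δ
    simp only [bipartiteAbove, bipartiteBelow, ← hflip, sum_const, card_univ, Fintype.card_fun,
      Fintype.card_units_int, smul_eq_mul] at hswap
    exact_mod_cast hswap
  refine le_of_mul_le_mul_left ?_ (by positivity : (0 : ℝ) < 2 ^ Fintype.card ι)
  rw [hcount, mul_sum]
  exact sum_le_sum fun ω _ ↦ card_signs_abs_sum_lt_le _ δ

theorem sum_half_pow_card [∀ i, DecidableEq (Ω i)] (B : ∀ i, Finset (Ω i)) :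
    ∑ ω : ∀ i, Ω i, (1 / 2 : ℝ) ^ #{i | ω i ∈ B i} =
      ∏ i, (Fintype.card (Ω i) - #(B i) / 2 : ℝ) := by
  have hfactor (i) : (Fintype.card (Ω i) - #(B i) / 2 : ℝ) =
      ∑ u, if u ∈ B i then (1 / 2 : ℝ) else 1 := by
    have (u : Ω i) : (if u ∈ B i then (1 / 2 : ℝ) else 1) = 1 - if u ∈ B i then 1 / 2 else 0 := by
      split_ifs <;> norm_num
    simp only [this, sum_sub_distrib, sum_const, card_univ, nsmul_eq_mul, mul_one,
      sum_ite_mem, univ_inter]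
    ring
  simp only [hfactor, prod_univ_sum, Fintype.piFinset_univ, prod_ite, prod_const, one_pow, mul_one]

theorem sum_half_pow_card_le [∀ i, DecidableEq (Ω i)] {T : Finset ι} {B : ∀ i, Finset (Ω i)}
    (hB : ∀ i ∈ T, 2 ≤ #(B i)) :
    ∑ ω : ∀ i, Ω i, (1 / 2 : ℝ) ^ #{i | ω i ∈ B i} ≤
      (∏ i, Fintype.card (Ω i) : ℝ) * ∏ i ∈ T, (1 - 1 / Fintype.card (Ω i) : ℝ) := by
  rw [sum_half_pow_card, ← Fintype.prod_ite_mem T, ← prod_mul_distrib]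
  have hcard (i) : (#(B i) : ℝ) ≤ Fintype.card (Ω i) := by exact_mod_cast card_le_univ (B i)
  refine prod_le_prod (fun i _ ↦ by linarith [hcard i, (#(B i)).cast_nonneg (α := ℝ)])
    fun i _ ↦ ?_
  split_ifs with hi
  · have hBi : (2 : ℝ) ≤ #(B i) := by exact_mod_cast hB i hi
    have hpos : (0 : ℝ) < Fintype.card (Ω i) := two_pos.trans_le (hBi.trans (hcard i))
    rw [mul_sub, mul_one_div_cancel hpos.ne']
    linarith
  · linarith [(#(B i)).cast_nonneg (α := ℝ)]

theorem card_abs_sum_lt_le [∀ i, InvolutiveNeg (Ω i)] {f : ∀ i, Ω i → ℝ}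
    (hf : ∀ i u, f i (-u) = -f i u) {T : Finset ι} (hT : ∀ i ∈ T, 2 ≤ #{u | δ ≤ |f i u|})
    {ε : ℝ} {K : ℕ} (hK : ∀ k, binomialPeak k ≤ ε + 2 ^ K * (1 / 2) ^ k) :
    (#{ω : ∀ i, Ω i | |∑ i, f i (ω i)| < δ} : ℝ) ≤ (∏ i, Fintype.card (Ω i) : ℝ) *
      (ε + 2 ^ K * ∏ i ∈ T, (1 - 1 / Fintype.card (Ω i) : ℝ)) := by
  classical
  have hhalf := sum_half_pow_card_le (B := fun i ↦ {u | δ ≤ |f i u|}) hT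
  simp only [mem_filter_univ] at hhalf
  calc _ ≤ ∑ ω : ∀ i, Ω i, binomialPeak #{i | δ ≤ |f i (ω i)|} :=
        card_abs_sum_lt_le_sum_binomialPeak hf δ
    _ ≤ ∑ ω : ∀ i, Ω i, (ε + 2 ^ K * (1 / 2) ^ #{i | δ ≤ |f i (ω i)|}) :=
        sum_le_sum fun ω _ ↦ hK _
    _ = (∏ i, Fintype.card (Ω i) : ℝ) * ε +
          2 ^ K * ∑ ω : ∀ i, Ω i, (1 / 2 : ℝ) ^ #{i | δ ≤ |f i (ω i)|} := by
        rw [sum_add_distrib, sum_const, card_univ, Fintype.card_pi, nsmul_eq_mul, mul_sum,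
          Nat.cast_prod]
    _ ≤ _ := by
        rw [mul_add, mul_left_comm _ (2 ^ K : ℝ)]
        gcongr

end LittlewoodOfford

section SmallBall

open Function

theorem totient_prod {ι : Type*} [Fintype ι] {m : ι → ℕ} (hm : Pairwise (Nat.Coprime on m)) :
    (∏ i, m i).totient = ∏ i, (m i).totient := by
  classical
  suffices ∀ s : Finset ι, (∏ i ∈ s, m i).totient = ∏ i ∈ s, (m i).totient from this univ
  intro s
  induction s using Finset.induction_on with
  | empty => simp
  | insert i s hi ih =>
    rw [prod_insert hi, prod_insert hi, Nat.totient_mul, ih]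
    exact Nat.Coprime.prod_right fun j hj ↦ hm (ne_of_mem_of_not_mem hj hi).symm

theorem modEq_prod {ι : Type*} [Fintype ι] {m : ι → ℕ} (hm : Pairwise (Nat.Coprime on m))
    {a b : ℕ} (h : ∀ i, (a : ZMod (m i)) = b) : a ≡ b [MOD ∏ i, m i] := by
  rw [← ZMod.natCast_eq_natCast_iff]
  apply (ZMod.prodEquivPi m hm).injective
  funext i
  simp only [map_natCast, Pi.natCast_apply, h]

theorem card_primes_le_mul_of_residues {ι : Type*} [Fintype ι] {m : ι → ℕ}
    (hm : Pairwise (Nat.Coprime on m)) (hm0 : ∀ i, m i ≠ 0) {x : ℕ} (hx : 2 ≤ x) {P : Finset ℕ}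
    (hP : P ⊆ Nat.primesLE x) {E : Finset (∀ i, (ZMod (m i))ˣ)}
    (hE : ∀ p ∈ P, ∃ ω ∈ E, ∀ i, (ω i : ZMod (m i)) = p) :
    (#P : ℝ) ≤ #E * (8 * x / ((∏ i, m i).totient * Real.log x) + 2 * √x) := by
  classical
  choose! residues hmem hres using hE
  have hfibre (ω) (_ : ω ∈ E) : (#{p ∈ P | residues p = ω} : ℝ) ≤
      8 * x / ((∏ i, m i).totient * Real.log x) + 2 * √x := by
    rcases {p ∈ P | residues p = ω}.eq_empty_or_nonempty with hempty | ⟨a, ha⟩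
    · have hlog : 0 < Real.log x := Real.log_pos (by exact_mod_cast hx)
      rw [hempty, card_empty, Nat.cast_zero]
      positivity
    · obtain ⟨haP, rfl⟩ := mem_filter.1 ha
      refine le_trans (Nat.cast_le.2 (card_le_card fun p hp ↦ ?_))
        (brunTitchmarsh a (prod_ne_zero_iff.2 fun i _ ↦ hm0 i) hx)
      obtain ⟨hpP, hpa⟩ := mem_filter.1 hp
      refine mem_filter.2 ⟨hP hpP, modEq_prod hm fun i ↦ ?_⟩
      rw [← hres p hpP, ← hres a haP, hpa]
  rw [card_eq_sum_card_fiberwise hmem, Nat.cast_sum, ← nsmul_eq_mul]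
  exact sum_le_card_nsmul _ _ _ hfibre

/-- The contribution of a prime `q` to `log φ(p + ℓ) - log φ(p - ℓ)` when `p ≡ a mod q`: only the
two residue classes `a = ± ℓ` matter. -/
noncomputable def eulerLogDiff (ℓ q : ℕ) (a : ZMod q) : ℝ :=
  (if a = ℓ then eulerLog q else 0) - if a = -ℓ then eulerLog q else 0

theorem eulerLogDiff_neg (ℓ q : ℕ) (a : ZMod q) : eulerLogDiff ℓ q (-a) = -eulerLogDiff ℓ q a := by
  simp only [eulerLogDiff, neg_eq_iff_eq_neg, neg_neg, neg_sub]

theorem eulerLogDiff_natCast {ℓ p : ℕ} (hp : ℓ ≤ p) (q : ℕ) :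
    eulerLogDiff ℓ q p =
      (if q ∣ p - ℓ then eulerLog q else 0) - if q ∣ p + ℓ then eulerLog q else 0 := by
  simp only [eulerLogDiff, ← ZMod.natCast_eq_zero_iff, Nat.cast_sub hp, Nat.cast_add, sub_eq_zero,
    eq_neg_iff_add_eq_zero]

theorem two_le_card_le_abs_eulerLogDiff {ℓ q : ℕ} [Fact q.Prime] (hℓ : 0 < ℓ) (hq : 2 * ℓ < q) :
    2 ≤ #{u : (ZMod q)ˣ | eulerLog q ≤ |eulerLogDiff ℓ q u|} := by
  have hℓ0 : (ℓ : ZMod q) ≠ 0 := by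
    rw [Ne, ZMod.natCast_eq_zero_iff]
    exact Nat.not_dvd_of_pos_of_lt hℓ (by lia)
  have hne : (ℓ : ZMod q) ≠ -ℓ := by
    rw [Ne, eq_neg_iff_add_eq_zero, ← Nat.cast_add, ZMod.natCast_eq_zero_iff]
    exact Nat.not_dvd_of_pos_of_lt (by lia) (by lia)
  let u : (ZMod q)ˣ := Units.mk0 ℓ hℓ0
  have hu : eulerLogDiff ℓ q u = eulerLog q := by
    rw [eulerLogDiff, Units.val_mk0, if_pos rfl, if_neg hne, sub_zero]
  have huneg : u ≠ -u := fun h ↦ hne (congrArg Units.val h)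
  rw [← card_pair huneg]
  refine card_le_card fun w hw ↦ mem_filter.2 ⟨mem_univ w, ?_⟩
  rcases mem_insert.1 hw with rfl | hw
  · exact hu ▸ le_abs_self _
  · rw [mem_singleton.1 hw, Units.val_neg, eulerLogDiff_neg, abs_neg, hu]
    exact le_abs_self _

instance fact_prime_primesLE (y : ℕ) (q : Nat.primesLE y) : Fact (q : ℕ).Prime :=
  ⟨(Nat.mem_primesLE.1 q.2).2⟩

theorem pairwise_coprime_primesLE (y : ℕ) :
    Pairwise (Nat.Coprime on fun q : Nat.primesLE y ↦ (q : ℕ)) := fun _ _ hqr ↦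
  (Nat.coprime_primes Fact.out Fact.out).2 fun h ↦ hqr (Subtype.ext h)

theorem totient_primorial (y : ℕ) :
    (primorial y).totient = ∏ q : Nat.primesLE y, Fintype.card (ZMod q)ˣ := by
  rw [primorial_eq_prod_primesLE, ← prod_coe_sort, totient_prod (pairwise_coprime_primesLE y)]
  simp only [ZMod.card_units_eq_totient]

theorem card_abs_sum_eulerLogDiff_lt_le {ℓ v y : ℕ} (hℓ : 0 < ℓ) (hvy : v ≤ y) {ε : ℝ} {K : ℕ}
    (hK : ∀ k, binomialPeak k ≤ ε + 2 ^ K * (1 / 2) ^ k) :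
    (#{ω : ∀ q : Nat.primesLE y, (ZMod q)ˣ |
        |∑ q : Nat.primesLE y, eulerLogDiff ℓ q (ω q)| < (v : ℝ)⁻¹} : ℝ) ≤
      (primorial y).totient *
        (ε + 2 ^ K * ∏ q ∈ Nat.primesLE v with 2 * ℓ < q, (1 - 1 / (q - 1) : ℝ)) := by
  let T : Finset (Nat.primesLE y) := {q | 2 * ℓ < q.1 ∧ q.1 ≤ v}
  have hT (q) (hq : q ∈ T) : 2 ≤ #{u : (ZMod q)ˣ | (v : ℝ)⁻¹ ≤ |eulerLogDiff ℓ q u|} := by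
    obtain ⟨hℓq, hqv⟩ := (mem_filter_univ q).1 hq
    have hprime : q.1.Prime := Fact.out
    have hv : (v : ℝ)⁻¹ ≤ eulerLog q :=
      (inv_anti₀ (by exact_mod_cast hprime.pos) (by exact_mod_cast hqv)).trans
        (inv_le_eulerLog hprime.two_le)
    exact (two_le_card_le_abs_eulerLogDiff hℓ hℓq).trans
      (card_le_card (monotone_filter_right _ fun u _ hu ↦ hv.trans hu))
  have hprod : ∏ q ∈ T, (1 - 1 / Fintype.card (ZMod q)ˣ : ℝ) =
      ∏ q ∈ Nat.primesLE v with 2 * ℓ < q, (1 - 1 / (q - 1) : ℝ) := by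
    have hcard (q : Nat.primesLE y) : (Fintype.card (ZMod q)ˣ : ℝ) = q - 1 := by
      rw [ZMod.card_units, Nat.cast_sub (Fact.out : q.1.Prime).one_le, Nat.cast_one]
    have hfilter : {q ∈ Nat.primesLE y | 2 * ℓ < q ∧ q ≤ v} =
        {q ∈ Nat.primesLE v | 2 * ℓ < q} := by
      ext q
      simp only [mem_filter, Nat.mem_primesLE]
      grind
    simp only [hcard, T, prod_filter]
    rw [prod_coe_sort (Nat.primesLE y) fun q ↦
      if 2 * ℓ < q ∧ q ≤ v then (1 - 1 / (q - 1) : ℝ) else 1, ← prod_filter, hfilter, prod_filter]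
  rw [totient_primorial, Nat.cast_prod, ← hprod]
  exact card_abs_sum_lt_le (fun _ _ ↦ by rw [Units.val_neg, eulerLogDiff_neg]) hT hK

theorem card_primes_abs_sum_eulerLogDiff_lt_le {ℓ v x y : ℕ} (hℓ : 0 < ℓ) (hvy : v ≤ y)
    (hx : 2 ≤ x) {ε : ℝ} {K : ℕ} (hK : ∀ k, binomialPeak k ≤ ε + 2 ^ K * (1 / 2) ^ k)
    {P : Finset ℕ} (hP : P ⊆ Nat.primesLE x) (hyP : ∀ p ∈ P, y < p)
    (hsum : ∀ p ∈ P, |∑ q ∈ Nat.primesLE y, eulerLogDiff ℓ q p| < (v : ℝ)⁻¹) :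
    (#P : ℝ) ≤ 8 * (ε + 2 ^ K * ∏ q ∈ Nat.primesLE v with 2 * ℓ < q, (1 - 1 / (q - 1) : ℝ)) *
      (x / Real.log x) + 2 * (primorial y).totient * √x := by
  let E : Finset (∀ q : Nat.primesLE y, (ZMod q)ˣ) :=
    {ω | |∑ q : Nat.primesLE y, eulerLogDiff ℓ q (ω q)| < (v : ℝ)⁻¹}
  have hlog : 0 < Real.log x := Real.log_pos (by exact_mod_cast hx)
  have htotient : (0 : ℝ) < (primorial y).totient := by
    exact_mod_cast Nat.totient_pos.2 (primorial_pos y)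
  have hE (p) (hp : p ∈ P) : ∃ ω ∈ E, ∀ q : Nat.primesLE y, (ω q : ZMod q) = p := by
    have hcop (q : Nat.primesLE y) : p.Coprime q :=
      (Nat.coprime_primes (Nat.mem_primesLE.1 (hP hp)).2 Fact.out).2
        ((Nat.mem_primesLE.1 q.2).1.trans_lt (hyP p hp)).ne'
    refine ⟨fun q ↦ ZMod.unitOfCoprime p (hcop q), mem_filter.2 ⟨mem_univ _, ?_⟩, fun q ↦
      ZMod.coe_unitOfCoprime p (hcop q)⟩
    simp only [ZMod.coe_unitOfCoprime]
    rw [sum_coe_sort (Nat.primesLE y) fun q ↦ eulerLogDiff ℓ q p]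
    exact hsum p hp
  have hcard : (#E : ℝ) ≤ (primorial y).totient := by
    rw [totient_primorial, ← Fintype.card_pi]
    exact_mod_cast card_le_univ E
  have hres := card_primes_le_mul_of_residues (pairwise_coprime_primesLE y)
    (fun q ↦ (Fact.out : q.1.Prime).ne_zero) hx hP hE
  rw [prod_coe_sort (Nat.primesLE y) fun q ↦ q, ← primorial_eq_prod_primesLE] at hres
  calc (#P : ℝ)
      ≤ #E * (8 * x / ((primorial y).totient * Real.log x)) + #E * (2 * √x) := by
        rwa [← mul_add]
    _ ≤ (primorial y).totient *
          (ε + 2 ^ K * ∏ q ∈ Nat.primesLE v with 2 * ℓ < q, (1 - 1 / (q - 1) : ℝ)) *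
          (8 * x / ((primorial y).totient * Real.log x)) +
        (primorial y).totient * (2 * √x) := by
        gcongr
        exact card_abs_sum_eulerLogDiff_lt_le hℓ hvy hK
    _ = _ := by field_simp

end SmallBall

open Asymptotics

section Asymptotics

theorem sqrt_mul_log_isLittleO_div_log :
    (fun x : ℕ ↦ √x * Real.log x) =o[atTop] fun x : ℕ ↦ x / Real.log x := by
  have hlogsq : (fun x : ℝ ↦ Real.log x ^ 2) =o[atTop] fun x ↦ √x := by
    simpa only [Real.rpow_ofNat, Real.sqrt_eq_rpow] using
      isLittleO_log_rpow_rpow_atTop 2 one_half_pos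
  have hmul := (isBigO_refl (fun x : ℝ ↦ √x / Real.log x) atTop).mul_isLittleO hlogsq
  suffices (fun x : ℝ ↦ √x * Real.log x) =o[atTop] fun x ↦ x / Real.log x from this.natCast_atTop
  refine hmul.congr' ?_ ?_
  · filter_upwards [eventually_gt_atTop 1] with x hx
    have := Real.log_pos hx
    field_simp
  · filter_upwards [eventually_gt_atTop 1] with x hx
    rw [div_mul_eq_mul_div, Real.mul_self_sqrt (by linarith)]

theorem sqrt_isLittleO_div_log : (fun x : ℕ ↦ √x) =o[atTop] fun x : ℕ ↦ x / Real.log x := by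
  refine IsBigO.trans_isLittleO ?_ sqrt_mul_log_isLittleO_div_log
  refine IsBigO.of_bound' ?_
  filter_upwards [(Real.tendsto_log_atTop.comp tendsto_natCast_atTop_atTop).eventually_ge_atTop 1]
    with x hx
  rw [Real.norm_of_nonneg (Real.sqrt_nonneg _)]
  exact (le_mul_of_one_le_right (Real.sqrt_nonneg _) hx).trans (Real.le_norm_self _)

theorem one_isLittleO_div_log : (fun _ : ℕ ↦ (1 : ℝ)) =o[atTop] fun x : ℕ ↦ x / Real.log x := by
  refine IsBigO.trans_isLittleO (IsBigO.of_bound' ?_) sqrt_isLittleO_div_log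
  filter_upwards [eventually_ge_atTop 1] with x hx
  rw [norm_one, Real.norm_of_nonneg (Real.sqrt_nonneg _), Real.one_le_sqrt]
  exact_mod_cast hx

theorem div_log_isBigO_primeCounting :
    (fun x : ℕ ↦ (x / Real.log x : ℝ)) =O[atTop] fun x ↦ (Nat.primeCounting x : ℝ) := by
  refine IsBigO.of_bound 4 ?_
  filter_upwards [(Real.isLittleO_log_id_atTop.natCast_atTop).bound (by norm_num : (0 : ℝ) < 1 / 4),
    eventually_ge_atTop 4] with x hx hx4
  have hx4' : (4 : ℝ) ≤ x := by exact_mod_cast hx4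
  have hlog : 0 < Real.log x := Real.log_pos (by linarith)
  have hlog_add : Real.log (x + 1) ≤ Real.log 2 + Real.log x := by
    rw [← Real.log_mul two_ne_zero (by linarith)]
    exact Real.log_le_log (by linarith) (by linarith)
  rw [Real.norm_of_nonneg hlog.le, id, Real.norm_of_nonneg (Nat.cast_nonneg x)] at hx
  rw [Real.norm_of_nonneg (by positivity), Real.norm_of_nonneg (Nat.cast_nonneg _)]
  calc x / Real.log x ≤ 4 * (x * Real.log 2 - Real.log (x + 1)) / Real.log x := by
        gcongr
        nlinarith [Real.log_two_gt_d9, Real.log_two_lt_d9]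
    _ = 4 * ((x * Real.log 2 - Real.log (x + 1)) / Real.log x) := mul_div_assoc _ _ _
    _ ≤ 4 * Nat.primeCounting x := by
        gcongr
        exact Chebyshev.pi_ge x

end Asymptotics

section Density

theorem eventually_card_le_primeTail_le {t ε : ℝ} (ht : 0 < t) (hε : 0 < ε) :
    ∀ᶠ y : ℕ in atTop, ∀ᶠ x : ℕ in atTop, ∀ P ⊆ Nat.primesLE x, ∀ f : ℕ → ℕ,
      (∀ p ∈ P, f p ≤ x ^ 2) → (∀ q, ∃ a, ∀ p ∈ P, q ∣ f p → p ≡ a [MOD q]) →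
      (#{p ∈ P | t ≤ primeTail y (f p)} : ℝ) ≤ ε * (x / Real.log x) := by
  have hsqrt : (fun x : ℕ ↦ 4 * √x * (1 + Real.log (x ^ 2 : ℕ))) =o[atTop]
      fun x : ℕ ↦ (x / Real.log x : ℝ) := by
    refine ((sqrt_isLittleO_div_log.const_mul_left 4).add
      (sqrt_mul_log_isLittleO_div_log.const_mul_left 8)).congr_left fun x ↦ ?_
    push_cast
    rw [Real.log_pow]
    push_cast
    ring
  filter_upwards [eventually_ge_atTop 1,
    (tendsto_const_div_atTop_nhds_zero_nat 32).eventually_le_const (by positivity : 0 < t * ε / 2)]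
    with y hy1 hy
  filter_upwards [hsqrt.bound (by positivity : 0 < t * ε / 2), eventually_ge_atTop 2]
    with x hx hx2 P hP f hfN hf
  have hlog : 0 < Real.log x := Real.log_pos (by exact_mod_cast hx2)
  rw [Real.norm_of_nonneg (by positivity : (0 : ℝ) ≤ x / Real.log x)] at hx
  refine le_of_mul_le_mul_left ?_ ht
  calc t * #{p ∈ P | t ≤ primeTail y (f p)}
      ≤ 32 * x / (y * Real.log x) + 4 * √x * (1 + Real.log (x ^ 2 : ℕ)) :=
        mul_card_le_primeTail_le hx2 (by lia) hP hfN hf t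
    _ = 32 / y * (x / Real.log x) + 4 * √x * (1 + Real.log (x ^ 2 : ℕ)) := by field_simp
    _ ≤ t * ε / 2 * (x / Real.log x) + t * ε / 2 * (x / Real.log x) :=
        add_le_add (by gcongr) ((Real.le_norm_self _).trans hx)
    _ = t * (ε * (x / Real.log x)) := by ring

theorem tendsto_sum_primesLE_inv_atTop (m : ℕ) :
    Tendsto (fun v ↦ ∑ q ∈ Nat.primesLE v with m < q, (q : ℝ)⁻¹) atTop atTop := by
  have htendsto := ((not_summable_iff_tendsto_nat_atTop_of_nonneg fun n ↦
    Set.indicator_nonneg (fun _ _ ↦ by positivity) n).1 not_summable_one_div_on_primes).comp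
      (tendsto_add_atTop_nat 1)
  refine tendsto_atTop_mono (fun v ↦ ?_)
    (tendsto_atTop_add_const_right _ (-∑ q ∈ Nat.primesLE m, (q : ℝ)⁻¹) htendsto)
  have hsum : ∑ q ∈ range (v + 1), Set.indicator {p : ℕ | p.Prime} (fun n : ℕ ↦ (1 : ℝ) / n) q =
      ∑ q ∈ Nat.primesLE v, (q : ℝ)⁻¹ := by
    simp only [Set.indicator_apply, Set.mem_ofPred_eq, one_div, ← sum_filter]
    rfl
  rw [Function.comp_apply, hsum, ← sub_eq_add_neg, sub_le_iff_le_add,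
    ← sum_filter_add_sum_filter_not _ (m < ·)]
  gcongr
  intro q hq
  obtain ⟨hqv, hqm⟩ := mem_filter.1 hq
  exact Nat.mem_primesLE.2 ⟨not_lt.1 hqm, (Nat.mem_primesLE.1 hqv).2⟩

theorem tendsto_prod_primesLE_one_sub (m : ℕ) :
    Tendsto (fun v ↦ ∏ q ∈ Nat.primesLE v with m < q, (1 - 1 / (q - 1) : ℝ)) atTop (𝓝 0) := by
  have hfactor {v q} (hq : q ∈ {q ∈ Nat.primesLE v | m < q}) : (1 : ℝ) ≤ q - 1 := by
    have : (2 : ℝ) ≤ q := by exact_mod_cast (Nat.mem_primesLE.1 (mem_filter.1 hq).1).2.two_le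
    linarith
  refine squeeze_zero (fun v ↦ prod_nonneg fun q hq ↦ ?_) (fun v ↦ ?_)
    (Real.tendsto_exp_neg_atTop_nhds_zero.comp (tendsto_sum_primesLE_inv_atTop m))
  · exact sub_nonneg.2 (div_le_one_of_le₀ (hfactor hq) (zero_le_one.trans (hfactor hq)))
  · rw [Function.comp_apply, ← sum_neg_distrib, Real.exp_sum]
    refine prod_le_prod (fun q hq ↦ ?_) fun q hq ↦ ?_
    · exact sub_nonneg.2 (div_le_one_of_le₀ (hfactor hq) (zero_le_one.trans (hfactor hq)))
    · have hinv : (q : ℝ)⁻¹ ≤ 1 / (q - 1) := by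
        rw [one_div]
        exact inv_anti₀ (zero_lt_one.trans_le (hfactor hq)) (sub_le_self _ zero_le_one)
      linarith [Real.add_one_le_exp (-(q : ℝ)⁻¹)]

theorem eventually_card_abs_sum_eulerLogDiff_lt_le {ℓ : ℕ} (hℓ : 0 < ℓ) {ε : ℝ} (hε : 0 < ε) :
    ∀ᶠ v : ℕ in atTop, ∀ y ≥ v, ∀ᶠ x : ℕ in atTop, ∀ P ⊆ Nat.primesLE x, (∀ p ∈ P, y < p) →
      (∀ p ∈ P, |∑ q ∈ Nat.primesLE y, eulerLogDiff ℓ q p| < (v : ℝ)⁻¹) →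
      (#P : ℝ) ≤ ε * (x / Real.log x) := by
  obtain ⟨K, hK⟩ := exists_binomialPeak_le (by positivity : 0 < ε / 32)
  have hprod := (tendsto_prod_primesLE_one_sub (2 * ℓ)).const_mul (2 ^ K)
  rw [mul_zero] at hprod
  filter_upwards [hprod.eventually_le_const (by positivity : 0 < ε / 32)] with v hv y hvy
  have hsqrt := sqrt_isLittleO_div_log.const_mul_left (2 * (primorial y).totient : ℝ)
  filter_upwards [hsqrt.bound (by positivity : 0 < ε / 2), eventually_ge_atTop 2]
    with x hx hx2 P hP hyP hsum
  have hlog : 0 < Real.log x := Real.log_pos (by exact_mod_cast hx2)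
  rw [Real.norm_of_nonneg (by positivity : (0 : ℝ) ≤ x / Real.log x)] at hx
  calc (#P : ℝ)
      ≤ 8 * (ε / 32 + 2 ^ K * ∏ q ∈ Nat.primesLE v with 2 * ℓ < q, (1 - 1 / (q - 1) : ℝ)) *
        (x / Real.log x) + 2 * (primorial y).totient * √x :=
        card_primes_abs_sum_eulerLogDiff_lt_le hℓ hvy hx2 hK hP hyP hsum
    _ ≤ 8 * (ε / 32 + ε / 32) * (x / Real.log x) + ε / 2 * (x / Real.log x) :=
        add_le_add (by gcongr) ((Real.le_norm_self _).trans hx)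
    _ = ε * (x / Real.log x) := by ring

theorem log_totient_eq_sub_sum_primesLE_sub_primeTail {n : ℕ} (hn : n ≠ 0) (y : ℕ) :
    Real.log n.totient =
      Real.log n - (∑ q ∈ Nat.primesLE y, if q ∣ n then eulerLog q else 0) - primeTail y n := by
  have hfilter : {q ∈ n.primeFactors | ¬ y < q} = {q ∈ Nat.primesLE y | q ∣ n} := by
    ext q
    simp only [mem_filter, Nat.mem_primeFactors, Nat.mem_primesLE, not_lt]
    tauto
  rw [log_totient_eq_sub_sum_eulerLog hn, ← sum_filter_add_sum_filter_not _ (y < ·), hfilter,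
    ← sum_filter, primeTail]
  ring

theorem sum_eulerLogDiff_of_totient_eq {ℓ p : ℕ} (hp : ℓ < p)
    (h : (p - ℓ).totient = (p + ℓ).totient) (y : ℕ) :
    ∑ q ∈ Nat.primesLE y, eulerLogDiff ℓ q p =
      Real.log (p - ℓ) - Real.log (p + ℓ) + primeTail y (p + ℓ) - primeTail y (p - ℓ) := by
  have hsub := log_totient_eq_sub_sum_primesLE_sub_primeTail (Nat.sub_ne_zero_of_lt hp) y
  have hadd := log_totient_eq_sub_sum_primesLE_sub_primeTail (by lia : p + ℓ ≠ 0) y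
  rw [Nat.cast_sub hp.le, h] at hsub
  rw [Nat.cast_add] at hadd
  simp only [eulerLogDiff_natCast hp.le, sum_sub_distrib]
  linarith

theorem tendsto_log_sub_sub_log_add (c : ℝ) :
    Tendsto (fun x ↦ Real.log (x - c) - Real.log (x + c)) atTop (𝓝 0) := by
  have h := (Real.tendsto_log_comp_add_sub_log (-c)).sub (Real.tendsto_log_comp_add_sub_log c)
  simpa only [sub_sub_sub_cancel_right, sub_zero, ← sub_eq_add_neg] using h

theorem eventually_abs_sum_eulerLogDiff_lt_or (ℓ : ℕ) {δ : ℝ} (hδ : 0 < δ) :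
    ∀ᶠ p : ℕ in atTop, (p - ℓ).totient = (p + ℓ).totient → ∀ y,
      |∑ q ∈ Nat.primesLE y, eulerLogDiff ℓ q p| < δ ∨
        δ / 3 ≤ primeTail y (p - ℓ) ∨ δ / 3 ≤ primeTail y (p + ℓ) := by
  have hlog := (tendsto_log_sub_sub_log_add ℓ).comp tendsto_natCast_atTop_atTop
  filter_upwards [Metric.tendsto_nhds.1 hlog (δ / 3) (by positivity), eventually_gt_atTop ℓ]
    with p hp hℓp h y
  rw [Real.dist_0_eq_abs, Function.comp_apply, abs_lt] at hp
  by_contra! ⟨hsum, hsub, hadd⟩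
  rw [sum_eulerLogDiff_of_totient_eq hℓp h] at hsum
  refine hsum.not_gt (abs_lt.2 ⟨?_, ?_⟩) <;>
    linarith [primeTail_nonneg y (p - ℓ), primeTail_nonneg y (p + ℓ)]

/-- The primes `p` with `ℓ < p ≤ x` and `φ(p - ℓ) = φ(p + ℓ)`, as a finset. -/
def equalTotientPrimes (ℓ x : ℕ) : Finset ℕ :=
  {p ∈ Nat.primesLE x | ℓ < p ∧ (p - ℓ).totient = (p + ℓ).totient}

theorem exists_modEq_of_dvd_add (ℓ q : ℕ) : ∃ a, ∀ p, q ∣ p + ℓ → p ≡ a [MOD q] := by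
  refine ⟨(q - 1) * ℓ, fun p hq ↦ Nat.ModEq.add_right_cancel' ℓ ?_⟩
  rcases q.eq_zero_or_pos with rfl | hq0
  · obtain ⟨rfl, rfl⟩ := Nat.add_eq_zero_iff.1 (zero_dvd_iff.1 hq)
    rfl
  · rw [← Nat.succ_mul, Nat.succ_eq_add_one, Nat.sub_add_cancel hq0]
    exact (Nat.modEq_zero_iff_dvd.2 hq).trans (Nat.modEq_zero_iff_dvd.2 (dvd_mul_right q ℓ)).symm

theorem card_le_add_card_filter_add_card_filter {P : Finset ℕ} {M : ℕ} {A B : ℕ → Prop}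
    [DecidablePred A] [DecidablePred B] (h : ∀ p ∈ P, M ≤ p → A p ∨ B p) :
    #P ≤ M + #{p ∈ P | M ≤ p ∧ A p} + #{p ∈ P | B p} := by
  have hcover : P ⊆ range M ∪ {p ∈ P | M ≤ p ∧ A p} ∪ {p ∈ P | B p} := fun p hp ↦ by
    simp only [mem_union, mem_range, mem_filter]
    grind
  calc #P ≤ _ := card_le_card hcover
    _ ≤ #(range M ∪ {p ∈ P | M ≤ p ∧ A p}) + _ := card_union_le _ _
    _ ≤ #(range M) + _ + _ := Nat.add_le_add_right (card_union_le _ _) _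
    _ = _ := by rw [card_range]

theorem eventually_card_equalTotientPrimes_primeTail_le (ℓ : ℕ) {t ε : ℝ} (ht : 0 < t)
    (hε : 0 < ε) :
    ∀ᶠ y : ℕ in atTop, ∀ᶠ x : ℕ in atTop,
      (#{p ∈ equalTotientPrimes ℓ x | t ≤ primeTail y (p - ℓ) ∨ t ≤ primeTail y (p + ℓ)} : ℝ) ≤
        ε * (x / Real.log x) := by
  have hsub (x q : ℕ) : ∃ a, ∀ p ∈ equalTotientPrimes ℓ x, q ∣ p - ℓ → p ≡ a [MOD q] :=
    ⟨ℓ, fun p hp hq ↦ ((Nat.modEq_iff_dvd' (mem_filter.1 hp).2.1.le).2 hq).symm⟩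
  filter_upwards [eventually_card_le_primeTail_le ht (half_pos hε)] with y hy
  filter_upwards [hy, eventually_ge_atTop 2] with x hx hx2
  have hle (p) (hp : p ∈ equalTotientPrimes ℓ x) : p + ℓ ≤ x ^ 2 := by
    obtain ⟨hpx, hℓp, -⟩ := mem_filter.1 hp
    nlinarith [(Nat.mem_primesLE.1 hpx).1]
  have hcardSub := hx _ (filter_subset _ _) (· - ℓ) (fun p hp ↦ by have := hle p hp; lia) (hsub x)
  have hcardAdd := hx _ (filter_subset _ _) (· + ℓ) hle
    fun q ↦ (exists_modEq_of_dvd_add ℓ q).imp fun _ h p _ ↦ h p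
  rw [filter_or]
  calc _ ≤ _ := Nat.cast_le.2 (card_union_le _ _)
    _ ≤ ε / 2 * (x / Real.log x) + ε / 2 * (x / Real.log x) := by
        rw [Nat.cast_add]
        exact add_le_add hcardSub hcardAdd
    _ = ε * (x / Real.log x) := by ring

theorem card_equalTotientPrimes_isLittleO {ℓ : ℕ} (hℓ : 0 < ℓ) :
    (fun x ↦ (#(equalTotientPrimes ℓ x) : ℝ)) =o[atTop] fun x ↦ (x / Real.log x : ℝ) := by
  refine IsLittleO.of_bound fun ε hε ↦ ?_
  have hε3 : 0 < ε / 3 := by positivity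
  obtain ⟨v, hsmall, hv⟩ :=
    ((eventually_card_abs_sum_eulerLogDiff_lt_le hℓ hε3).and (eventually_ge_atTop 1)).exists
  have hδ : (0 : ℝ) < (v : ℝ)⁻¹ := inv_pos.2 (by exact_mod_cast hv)
  obtain ⟨y, htail, hvy⟩ := ((eventually_card_equalTotientPrimes_primeTail_le ℓ
    (div_pos hδ three_pos) hε3).and (eventually_ge_atTop v)).exists
  obtain ⟨M, hM⟩ := eventually_atTop.1
    ((eventually_abs_sum_eulerLogDiff_lt_or ℓ hδ).and (eventually_gt_atTop y))
  filter_upwards [hsmall y hvy, htail,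
    (one_isLittleO_div_log.const_mul_left (M : ℝ)).bound hε3] with x hsmall htail hMx
  have hnonneg : 0 ≤ x / Real.log x := div_nonneg (Nat.cast_nonneg x) (Real.log_natCast_nonneg x)
  rw [mul_one, Real.norm_of_nonneg (Nat.cast_nonneg M), Real.norm_of_nonneg hnonneg] at hMx
  rw [Real.norm_of_nonneg (Nat.cast_nonneg _), Real.norm_of_nonneg hnonneg]
  have hcard := card_le_add_card_filter_add_card_filter (P := equalTotientPrimes ℓ x)
    fun p hp hpM ↦ (hM p hpM).1 (mem_filter.1 hp).2.2 y
  have hcard_small := hsmall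
    {p ∈ equalTotientPrimes ℓ x | M ≤ p ∧ |∑ q ∈ Nat.primesLE y, eulerLogDiff ℓ q p| < (v : ℝ)⁻¹}
    ((filter_subset _ _).trans (filter_subset _ _))
    (fun p hp ↦ (hM p (mem_filter.1 hp).2.1).2) fun p hp ↦ (mem_filter.1 hp).2.2
  calc (#(equalTotientPrimes ℓ x) : ℝ) ≤ _ := Nat.cast_le.2 hcard
    _ ≤ ε / 3 * (x / Real.log x) + ε / 3 * (x / Real.log x) + ε / 3 * (x / Real.log x) := by
        push_cast
        exact add_le_add (add_le_add hMx hcard_small) htail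
    _ = ε * (x / Real.log x) := by ring

end Density

end ShiftedTotient

theorem phi_diff_equal_density (ℓ : ℕ) (hℓ : 0 < ℓ) :
    Tendsto (fun x : ℕ =>
      ({p : ℕ | p.Prime ∧ p ≤ x ∧ ℓ < p ∧
          Nat.totient (p - ℓ) = Nat.totient (p + ℓ)}.ncard : ℝ) /
        (Nat.primeCounting x : ℝ)) atTop (𝓝 0) := by
  have hset (x : ℕ) : {p : ℕ | p.Prime ∧ p ≤ x ∧ ℓ < p ∧ (p - ℓ).totient = (p + ℓ).totient} =
      ShiftedTotient.equalTotientPrimes ℓ x := by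
    ext p
    simp only [ShiftedTotient.equalTotientPrimes, Finset.coe_filter, Nat.mem_primesLE,
      Set.mem_ofPred_eq]
    tauto
  simp only [hset, Set.ncard_coe_finset]
  exact ((ShiftedTotient.card_equalTotientPrimes_isLittleO hℓ).trans_isBigO
    ShiftedTotient.div_log_isBigO_primeCounting).tendsto_div_nhds_zero
end
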